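/- arXiv:2206.08314 — 4 statements merged into one kernel-verified Lean document; each statement's English description precedes it below -/
import Mathlib

section
/- Let α ∈ (0,1), let n ≥ 1 and m ≥ 1 be integers, let μ, ν ≥ 0 be integers with μ + ν = m, and let I = {(i,j) ∈ ℕ² : i + j ≤ m − 1}. Let a : ℂ × (I → ℂⁿ) → ℂⁿ be continuously differentiable (in the real sense) and such that on every bounded subset of ℂ × (I → ℂⁿ) its first-order partial derivatives have finite α-Hölder constant. Then for any choice of vectors c_{i,j} ∈ ℂⁿ for (i,j) ∈ I, there exist R > 0 and a map u : ℂ → ℂⁿ which is m times continuously differentiable on a neighborhood of the closed disk D = {z ∈ ℂ : |z| ≤ R}, whose m-th order Wirtinger derivatives ∂^i∂̄^j u (i + j = m) each have finite α-Hölder constant on D, such that ∂^μ∂̄^ν u(z) = a(z, (∂^i∂̄^j u(z))_{(i,j)∈I}) for all z ∈ D, and ∂^i∂̄^j u(0) = c_{i,j} for all (i,j) ∈ I. -/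
open Complex MeasureTheory Metric ENNReal NNReal

noncomputable section

/-- Wirtinger derivative `∂` for vector-valued maps (componentwise for `E = Fin n → ℂ`). -/
def wDv {E : Type*} [NormedAddCommGroup E] [NormedSpace ℂ E] (f : ℂ → E) : ℂ → E := fun z =>
  (2 : ℂ)⁻¹ • (fderiv ℝ f z 1 - Complex.I • fderiv ℝ f z Complex.I)

/-- Wirtinger derivative `∂̄` for vector-valued maps. -/
def wDbarv {E : Type*} [NormedAddCommGroup E] [NormedSpace ℂ E] (f : ℂ → E) : ℂ → E := fun z =>
  (2 : ℂ)⁻¹ • (fderiv ℝ f z 1 + Complex.I • fderiv ℝ f z Complex.I)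

/-- Iterated Wirtinger derivative `∂^i ∂̄^j`. -/
def wDijv {E : Type*} [NormedAddCommGroup E] [NormedSpace ℂ E] (i j : ℕ) (f : ℂ → E) :
    ℂ → E := wDv^[i] (wDbarv^[j] f)

/-- α-Hölder constant of `f` on `A`, valued in `ℝ≥0∞`. -/
def HolV {E : Type*} [NormedAddCommGroup E] (α : ℝ) (A : Set ℂ) (f : ℂ → E) : ℝ≥0∞ :=
  ⨆ z ∈ A, ⨆ z' ∈ A, ⨆ _ : z ≠ z', (‖f z - f z'‖₊ : ℝ≥0∞) / (‖z - z'‖₊ : ℝ≥0∞) ^ α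

/-- The index set `I = {(i,j) : i + j ≤ m − 1}` of derivatives of order `< m`. -/
abbrev Idx (m : ℕ) := {p : Fin m × Fin m // (p.1 : ℕ) + (p.2 : ℕ) < m}

end

noncomputable section

local notation "cj" => starRingEnd ℂ

lemma cr_intOn_rpow {β : ℝ} (hβ : β < 2) (s : ℝ) :
    IntegrableOn (fun w : ℂ => ‖w‖ ^ (-β)) (closedBall 0 s) volume := by
  have h : IntegrableOn (fun w : ℂ => ‖w‖ ^ (-β)) (ball 0 (s+1)) volume := by
    rw [integrableOn_fun_norm_addHaar volume (f := fun y : ℝ => y ^ (-β))]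
    simp only [Complex.finrank_real_complex]
    have : IntegrableOn (fun y : ℝ => y ^ (1 - β)) (Set.Ioo 0 (s+1)) volume := by
      have := (intervalIntegral.intervalIntegrable_rpow' (a := 0) (b := s + 1)
        (r := 1 - β) (by linarith)).def'
      apply this.mono_set
      intro x hx
      rw [Set.uIoc_of_le (by linarith [hx.1, hx.2])]
      exact ⟨hx.1, hx.2.le⟩
    refine this.congr_fun ?_ measurableSet_Ioo
    intro y hy
    simp only [Nat.add_one_sub_one, pow_one, smul_eq_mul]
    rw [sub_eq_add_neg, Real.rpow_add hy.1, Real.rpow_one]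
  exact h.mono_set (closedBall_subset_ball (by linarith))

lemma cr_intOn_inv (s : ℝ) :
    IntegrableOn (fun w : ℂ => ‖w‖⁻¹) (closedBall 0 s) volume := by
  have := cr_intOn_rpow (β := 1) (by norm_num) s
  simpa [Real.rpow_neg_one] using this

def crK (p : ℤ) (w : ℂ) : ℂ := (cj w) ^ p * w ^ (-p - 1)

lemma crK_norm (p : ℤ) (w : ℂ) : ‖crK p w‖ ≤ ‖w‖⁻¹ := by
  unfold crK
  by_cases h : w = 0
  · subst h
    by_cases hp : p = 0
    · subst hp; simp
    · simp [zero_zpow _ hp]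
  · have : ‖w‖ ≠ 0 := by simpa using h
    rw [norm_mul, norm_zpow, norm_zpow, RCLike.norm_conj, ← zpow_add₀ this, show p + (-p - 1) = -1 by ring, zpow_neg_one]

lemma crK_meas (p : ℤ) : Measurable (crK p) := by
  unfold crK
  have h1 : Measurable (fun w : ℂ => cj w) := Complex.continuous_conj.measurable
  have : ∀ (q : ℤ), Measurable (fun w : ℂ => w ^ q) := by
    intro q
    cases q with
    | ofNat k => simpa using (measurable_id (α := ℂ)).pow_const k
    | negSucc k =>
      simp only [zpow_negSucc]
      exact ((measurable_id (α := ℂ)).pow_const (k+1)).inv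
  exact ((this p).comp h1).mul (this _)

lemma crK_diff (p : ℤ) : ∃ C : ℝ, 0 ≤ C ∧ ∀ a b : ℂ, a ≠ 0 → b ≠ 0 →
    ‖crK p a - crK p b‖ ≤ C * (‖a - b‖ * (‖a‖⁻¹ * ‖b‖⁻¹)) := by
  have key : ∀ a b : ℂ, a ≠ 0 → b ≠ 0 → ‖cj a / a - cj b / b‖ ≤ 2 * (‖a - b‖ * ‖a‖⁻¹) := by
    intro a b ha hb
    have hb' : ‖b‖ ≠ 0 := by simpa using hb
    have ha' : ‖a‖ ≠ 0 := by simpa using ha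
    have : cj a / a - cj b / b = (cj (a - b) * b + cj b * (b - a)) / (a * b) := by
      field_simp
      simp; ring
    rw [this, norm_div, norm_mul]
    have h2 : ‖cj (a - b) * b + cj b * (b - a)‖ ≤ 2 * ‖a - b‖ * ‖b‖ := by
      refine (norm_add_le _ _).trans ?_
      rw [norm_mul, norm_mul, RCLike.norm_conj, RCLike.norm_conj, norm_sub_rev b a]
      linarith
    rw [div_le_iff₀ (by positivity)]
    refine h2.trans (le_of_eq ?_)
    field_simp
  have key2 : ∀ a b : ℂ, a ≠ 0 → b ≠ 0 → ‖a / cj a - b / cj b‖ ≤ 2 * (‖a - b‖ * ‖a‖⁻¹) := by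
    intro a b ha hb
    have := key (cj a) (cj b) (by simpa using ha) (by simpa using hb)
    simpa only [Complex.conj_conj, ← map_sub, RCLike.norm_conj] using this
  have gen : ∀ (x x' y y' : ℂ), ‖x * y - x' * y'‖ ≤ ‖x - x'‖ * ‖y‖ + ‖x'‖ * ‖y - y'‖ := by
    intro x x' y y'
    have : x * y - x' * y' = (x - x') * y + x' * (y - y') := by ring
    rw [this]
    refine (norm_add_le _ _).trans ?_
    rw [norm_mul, norm_mul]
  induction p using Int.induction_on with
  | zero =>
    refine ⟨1, by norm_num, fun a b ha hb => ?_⟩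
    have hb' : ‖b‖ ≠ 0 := by simpa using hb
    have ha' : ‖a‖ ≠ 0 := by simpa using ha
    have : crK 0 a - crK 0 b = (b - a) * (a⁻¹ * b⁻¹) := by
      simp [crK]; field_simp
    rw [this, norm_mul, norm_mul, norm_inv, norm_inv, norm_sub_rev, one_mul]
  | succ i ih =>
    obtain ⟨C, hC, h⟩ := ih
    refine ⟨C + 2, by positivity, fun a b ha hb => ?_⟩
    have hb' : cj b ≠ 0 := by simpa using hb
    have ha' : cj a ≠ 0 := by simpa using ha
    have e : ∀ w : ℂ, w ≠ 0 → crK (i+1) w = crK i w * (cj w / w) := by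
      intro w hw
      have hw' : cj w ≠ 0 := by simpa using hw
      unfold crK
      rw [zpow_add_one₀ hw', show (-((i:ℤ)+1) - 1 : ℤ) = (-i - 1) - 1 by ring, zpow_sub_one₀ hw]
      ring
    rw [e a ha, e b hb]
    refine (gen _ _ _ _).trans ?_
    have n1 : ‖cj a / a‖ = 1 := by rw [norm_div, RCLike.norm_conj, div_self (by simpa using ha)]
    rw [n1, mul_one]
    have h1 := h a b ha hb
    have h2 := mul_le_mul (crK_norm i b) (key a b ha hb) (norm_nonneg _) (by positivity)
    nlinarith [h1, h2]
  | pred i ih =>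
    obtain ⟨C, hC, h⟩ := ih
    refine ⟨C + 2, by positivity, fun a b ha hb => ?_⟩
    have e : ∀ w : ℂ, w ≠ 0 → crK (-i-1) w = crK (-i) w * (w / cj w) := by
      intro w hw
      have hw' : cj w ≠ 0 := by simpa using hw
      unfold crK
      rw [zpow_sub_one₀ hw', show (-(-(i:ℤ)-1) - 1 : ℤ) = (- -i - 1) + 1 by ring, zpow_add_one₀ hw]
      field_simp
    rw [e a ha, e b hb]
    refine (gen _ _ _ _).trans ?_
    have n1 : ‖a / cj a‖ = 1 := by rw [norm_div, RCLike.norm_conj, div_self (by simpa using ha)]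
    rw [n1, mul_one]
    have h1 := h a b ha hb
    have h2 := mul_le_mul (crK_norm (-i) b) (key2 a b ha hb) (norm_nonneg _) (by positivity)
    nlinarith [h1, h2]

/-- pointwise Hölder type bound for the kernel -/
lemma crK_holder {α : ℝ} (hα : α ∈ Set.Ioo (0:ℝ) 1) (p : ℤ) : ∃ C : ℝ, 0 ≤ C ∧
    ∀ a b : ℂ, a ≠ 0 → b ≠ 0 →
    ‖crK p a - crK p b‖ ≤ C * ‖a - b‖ ^ α * (‖a‖ ^ (-(1+α)) + ‖b‖ ^ (-(1+α))) := by
  obtain ⟨C, hC, h⟩ := crK_diff p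
  refine ⟨2 * C, by positivity, fun a b ha hb => (h a b ha hb).trans ?_⟩
  have hb' : 0 < ‖b‖ := by simpa using hb
  have ha' : 0 < ‖a‖ := by simpa using ha
  have main : ∀ x y d : ℝ, 0 < x → x ≤ y → 0 ≤ d → d ≤ x + y →
      d * (x⁻¹ * y⁻¹) ≤ 2 * d ^ α * x ^ (-(1+α)) := by
    intro x y d hx hxy hd hd'
    have hy : 0 < y := hx.trans_le hxy
    have h1 : d = d ^ α * d ^ (1 - α) := by
      rcases hd.eq_or_lt with rfl | hd0
      · rw [Real.zero_rpow hα.1.ne']; simp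
      · rw [← Real.rpow_add hd0]; simp
    have h2 : d ^ (1 - α) ≤ 2 * y ^ (1 - α) := by
      calc d ^ (1 - α) ≤ (2 * y) ^ (1 - α) :=
            Real.rpow_le_rpow hd (by linarith) (by linarith [hα.2])
        _ = 2 ^ (1 - α) * y ^ (1 - α) := Real.mul_rpow (by norm_num) hy.le
        _ ≤ 2 * y ^ (1 - α) := by
            gcongr
            calc (2:ℝ) ^ (1 - α) ≤ 2 ^ (1:ℝ) :=
                  Real.rpow_le_rpow_of_exponent_le (by norm_num) (by linarith [hα.1])
              _ = 2 := by simp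
    have h3 : y ^ (1 - α) * y⁻¹ = y ^ (-α) := by
      rw [← Real.rpow_neg_one y, ← Real.rpow_add hy]; congr 1; ring
    have h4 : y ^ (-α) ≤ x ^ (-α) :=
      Real.rpow_le_rpow_of_nonpos hx hxy (by linarith [hα.1])
    have h5 : x ^ (-α) * x⁻¹ = x ^ (-(1 + α)) := by
      rw [← Real.rpow_neg_one x, ← Real.rpow_add hx]; congr 1; ring
    calc d * (x⁻¹ * y⁻¹) = d ^ α * d ^ (1 - α) * (x⁻¹ * y⁻¹) := by rw [← h1]
      _ ≤ d ^ α * (2 * y ^ (1 - α)) * (x⁻¹ * y⁻¹) := by gcongr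
      _ = 2 * d ^ α * ((y ^ (1 - α) * y⁻¹) * x⁻¹) := by ring
      _ ≤ 2 * d ^ α * (x ^ (-α) * x⁻¹) := by rw [h3]; gcongr
      _ = _ := by rw [h5]
  have hd : ‖a - b‖ ≤ ‖a‖ + ‖b‖ := norm_sub_le _ _
  have pa : 0 ≤ ‖a‖ ^ (-(1+α)) := by positivity
  have pb : 0 ≤ ‖b‖ ^ (-(1+α)) := by positivity
  have pd : 0 ≤ ‖a - b‖ ^ α := by positivity
  have fin : ‖a - b‖ * (‖a‖⁻¹ * ‖b‖⁻¹) ≤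
      2 * ‖a - b‖ ^ α * (‖a‖ ^ (-(1+α)) + ‖b‖ ^ (-(1+α))) := by
    rcases le_total ‖a‖ ‖b‖ with hab | hab
    · refine (main _ _ _ ha' hab (norm_nonneg _) hd).trans ?_
      gcongr; linarith
    · rw [mul_comm ‖a‖⁻¹]
      refine (main _ _ _ hb' hab (norm_nonneg _) (by linarith)).trans ?_
      gcongr; linarith
  calc _ ≤ C * (2 * ‖a - b‖ ^ α * (‖a‖ ^ (-(1+α)) + ‖b‖ ^ (-(1+α)))) := by gcongr
    _ = _ := by ring

end

noncomputable section

local notation "cj" => starRingEnd ℂ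

def crKap (s : ℝ) : ℝ := ∫ w in closedBall (0:ℂ) s, ‖w‖⁻¹

lemma crKap_nonneg (s : ℝ) : 0 ≤ crKap s := by
  unfold crKap; positivity

lemma crKap_small (ε : ℝ) (hε : 0 < ε) : ∃ s : ℝ, 0 < s ∧ ∀ t, t ≤ s → crKap t < ε := by
  have h := tendsto_setIntegral_of_antitone (μ := (volume : Measure ℂ)) (f := fun w : ℂ => ‖w‖⁻¹)
    (s := fun k : ℕ => closedBall (0:ℂ) (1/((k:ℝ)+1))) (fun _ => isClosed_closedBall.measurableSet)
    (by
      intro i j hij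
      apply closedBall_subset_closedBall
      have : (i:ℝ) ≤ j := by exact_mod_cast hij
      gcongr) ⟨0, cr_intOn_inv _⟩
  have h0 : (⋂ k : ℕ, closedBall (0:ℂ) (1/((k:ℝ)+1))) = {0} := by
    ext x
    simp only [Set.mem_iInter, mem_closedBall, dist_zero_right, Set.mem_singleton_iff]
    constructor
    · intro hx
      have : ‖x‖ ≤ 0 := ge_of_tendsto' tendsto_one_div_add_atTop_nhds_zero_nat hx
      simpa using this
    · rintro rfl k; simp; positivity
  rw [h0] at h
  simp only [Measure.restrict_singleton, measure_singleton, zero_smul, integral_zero_measure] at h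
  obtain ⟨k, hk⟩ := (h.eventually (gt_mem_nhds hε)).exists
  refine ⟨1/((k:ℝ)+1), by positivity, fun t ht => lt_of_le_of_lt ?_ hk⟩
  unfold crKap
  apply setIntegral_mono_set (cr_intOn_inv _)
  · filter_upwards with x; positivity
  · exact (closedBall_subset_closedBall ht).eventuallyLE

section
variable {G : Type*} [NormedAddCommGroup G] [NormedSpace ℂ G]

lemma crInt_le (p : ℤ) {F : ℂ → G} {B s : ℝ} (hB : ∀ w, ‖F w‖ ≤ B)
    (h0 : ∀ w, s < ‖w‖ → F w = 0) (w : ℂ) : ‖crK p w • F w‖ ≤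
      (closedBall (0:ℂ) s).indicator (fun w => ‖w‖⁻¹ * B) w := by
  by_cases hw : w ∈ closedBall (0:ℂ) s
  · rw [Set.indicator_of_mem hw, norm_smul]
    exact mul_le_mul (crK_norm p w) (hB w) (norm_nonneg _) (by positivity)
  · rw [Set.indicator_of_notMem hw, h0 w (by simpa using hw)]
    simp

lemma crInt_bdd_int (s B : ℝ) :
    Integrable ((closedBall (0:ℂ) s).indicator (fun w => ‖w‖⁻¹ * B)) volume :=
  (IntegrableOn.integrable_indicator ((cr_intOn_inv s).mul_const B)
    isClosed_closedBall.measurableSet)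

lemma crInt_integrable (p : ℤ) {F : ℂ → G} {B s : ℝ} (hB : ∀ w, ‖F w‖ ≤ B)
    (h0 : ∀ w, s < ‖w‖ → F w = 0) (hm : AEStronglyMeasurable F volume) :
    Integrable (fun w => crK p w • F w) volume :=
  (crInt_bdd_int s B).mono' ((crK_meas p).aestronglyMeasurable.smul hm)
    (Filter.Eventually.of_forall (crInt_le p hB h0))

lemma crInt_bound (p : ℤ) {F : ℂ → G} {B s : ℝ} (hB : ∀ w, ‖F w‖ ≤ B)
    (h0 : ∀ w, s < ‖w‖ → F w = 0) : ‖∫ w, crK p w • F w‖ ≤ crKap s * B := by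
  refine (norm_integral_le_of_norm_le (crInt_bdd_int s B)
    (Filter.Eventually.of_forall (crInt_le p hB h0))).trans (le_of_eq ?_)
  rw [integral_indicator isClosed_closedBall.measurableSet, integral_mul_const, crKap]

end

variable {n : ℕ}

def crC (p : ℤ) (f : ℂ → Fin n → ℂ) (z : ℂ) : Fin n → ℂ := ∫ w, crK p w • f (z - w)

def crD (p : ℤ) (f : ℂ → Fin n → ℂ) (z : ℂ) : ℂ →L[ℝ] (Fin n → ℂ) :=
  ∫ w, crK p w • fderiv ℝ f (z - w)

lemma cr_fderiv_zero {f : ℂ → Fin n → ℂ} {ρ : ℝ} (h0 : ∀ z, ρ < ‖z‖ → f z = 0) (z : ℂ)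
    (hz : ρ < ‖z‖) : fderiv ℝ f z = 0 := by
  have : f =ᶠ[nhds z] fun _ => 0 := by
    filter_upwards [(isOpen_lt continuous_const continuous_norm).mem_nhds hz] with y hy
    exact h0 y hy
  rw [this.fderiv_eq]; simp

lemma cr_lip_bdd {f : ℂ → Fin n → ℂ} {ρ : ℝ} {L : ℝ≥0} (hf : LipschitzWith L f)
    (h0 : ∀ z, ρ < ‖z‖ → f z = 0) : ∃ B, ∀ z, ‖f z‖ ≤ B := by
  have : HasCompactSupport f := by
    refine HasCompactSupport.of_support_subset_isCompact (isCompact_closedBall (0:ℂ) ρ) ?_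
    intro z hz
    by_contra h
    exact hz (h0 z (by simpa using h))
  exact this.exists_bound_of_continuous hf.continuous

lemma cr_shift_zero {G : Type*} [Zero G] {f : ℂ → G} {ρ : ℝ} (h0 : ∀ z, ρ < ‖z‖ → f z = 0)
    {z : ℂ} {t : ℝ} (hz : ‖z‖ ≤ t)
    (w : ℂ) (hw : t + ρ < ‖w‖) : f (z - w) = 0 := by
  apply h0
  have := norm_sub_norm_le w z
  rw [norm_sub_rev] at this
  linarith

lemma cr_ae_shift {P : ℂ → Prop} (h : ∀ᵐ w, P w) (z : ℂ) : ∀ᵐ w, P (z - w) :=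
  (quasiMeasurePreserving_sub_left volume z).ae h

lemma crC_hasFDerivAt (p : ℤ) {f : ℂ → Fin n → ℂ} {ρ : ℝ} {L : ℝ≥0} (hf : LipschitzWith L f)
    (h0 : ∀ z, ρ < ‖z‖ → f z = 0) (z : ℂ) :
    Integrable (fun w => crK p w • fderiv ℝ f (z - w)) volume ∧
    HasFDerivAt (crC p f) (crD p f z) z := by
  obtain ⟨B, hB⟩ := cr_lip_bdd hf h0
  refine hasFDerivAt_integral_of_dominated_loc_of_lip' (s := ball z 1)
    (bound := (closedBall (0:ℂ) (‖z‖ + 1 + ρ)).indicator (fun w => ‖w‖⁻¹ * L))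
    (ball_mem_nhds z one_pos) ?_ ?_ ?_ ?_ (crInt_bdd_int _ _) ?_
  · intro x hx
    exact (crK_meas p).aestronglyMeasurable.smul
      (hf.continuous.comp (by fun_prop : Continuous fun w => x - w)).aestronglyMeasurable
  · exact crInt_integrable p (fun w => hB (z - w)) (cr_shift_zero h0 le_rfl)
      (hf.continuous.comp (by fun_prop : Continuous fun w => z - w)).aestronglyMeasurable
  · refine (crK_meas p).aestronglyMeasurable.smul ?_
    exact ((measurable_fderiv ℝ f).comp (by fun_prop : Measurable fun w => z - w)).aestronglyMeasurable
  · refine Filter.Eventually.of_forall fun w x hx => ?_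
    rw [← smul_sub]
    have hx1 : ‖x‖ ≤ ‖z‖ + 1 := by
      have := norm_sub_norm_le x z
      have h2 : ‖x - z‖ < 1 := by simpa [dist_eq_norm] using hx
      linarith
    have hl : ‖f (x - w) - f (z - w)‖ ≤ L * ‖x - z‖ := by
      have := hf.norm_sub_le (x - w) (z - w)
      simpa using this
    by_cases hw : w ∈ closedBall (0:ℂ) (‖z‖ + 1 + ρ)
    · rw [Set.indicator_of_mem hw, norm_smul, mul_assoc]
      exact mul_le_mul (crK_norm p w) hl (norm_nonneg _) (by positivity)
    · have hw' : ‖z‖ + 1 + ρ < ‖w‖ := by simpa using hw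
      rw [cr_shift_zero h0 hx1 w hw',
        cr_shift_zero h0 (by linarith : ‖z‖ ≤ ‖z‖ + 1) w hw', Set.indicator_of_notMem hw]
      simp
  · filter_upwards [cr_ae_shift hf.ae_differentiableAt z] with w hw
    have h1 : HasFDerivAt (fun x => f (x - w)) (fderiv ℝ f (z - w)) z := by
      have := hw.hasFDerivAt.comp z ((hasFDerivAt_id z).sub_const w)
      simpa using this
    exact h1.const_smul (crK p w)

lemma crD_apply (p : ℤ) {f : ℂ → Fin n → ℂ} {ρ : ℝ} {L : ℝ≥0} (hf : LipschitzWith L f)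
    (h0 : ∀ z, ρ < ‖z‖ → f z = 0) (z v : ℂ) :
    crD p f z v = ∫ w, crK p w • fderiv ℝ f (z - w) v := by
  unfold crD
  rw [ContinuousLinearMap.integral_apply (crC_hasFDerivAt p hf h0 z).1]
  rfl

lemma cr_clm_sub (k k' : ℂ) (T : ℂ →L[ℝ] (Fin n → ℂ)) : ‖k • T - k' • T‖ = ‖k - k'‖ * ‖T‖ := by
  have h : k • T - k' • T = (k - k') • T := (sub_smul k k' T).symm
  rw [h]
  exact norm_smul _ _

lemma crD_holder {α : ℝ} (hα : α ∈ Set.Ioo (0:ℝ) 1) (p : ℤ) {f : ℂ → Fin n → ℂ} {ρ : ℝ} {L : ℝ≥0}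
    (hf : LipschitzWith L f) (h0 : ∀ z, ρ < ‖z‖ → f z = 0) (r : ℝ) :
    ∃ M : ℝ, 0 ≤ M ∧ ∀ z ∈ closedBall (0:ℂ) r, ∀ z' ∈ closedBall (0:ℂ) r,
      ‖crD p f z - crD p f z'‖ ≤ M * ‖z - z'‖ ^ α := by
  obtain ⟨C, hC, hk⟩ := crK_holder hα p
  set I : ℝ := ∫ w in closedBall (0:ℂ) (r + ρ), ‖w‖ ^ (-(1+α)) with hI
  have hInn : 0 ≤ I := by
    rw [hI]; positivity
  have hint := cr_intOn_rpow (β := 1 + α) (by linarith [hα.2]) (r + ρ)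
  refine ⟨C * L * (I + I), by positivity, fun z hz z' hz' => ?_⟩
  have hz1 : ‖z‖ ≤ r := by simpa using hz
  have hz2 : ‖z'‖ ≤ r := by simpa using hz'
  have rep : ∀ x : ℂ, crD p f x = ∫ w, crK p (x - w) • fderiv ℝ f w := by
    intro x
    unfold crD
    rw [← integral_sub_left_eq_self _ volume x]
    simp
  have repi : ∀ x : ℂ, Integrable (fun w => crK p (x - w) • fderiv ℝ f w) volume := by
    intro x
    have := (crC_hasFDerivAt p hf h0 x).1.comp_sub_left x
    simpa using this
  set g : ℂ → ℝ := (closedBall (0:ℂ) (r + ρ)).indicator (fun w => ‖w‖ ^ (-(1+α))) with hg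
  have gint : Integrable g volume := hint.integrable_indicator isClosed_closedBall.measurableSet
  have gI : ∫ w, g w = I := by
    rw [hg, integral_indicator isClosed_closedBall.measurableSet]
  have gnn : ∀ w, 0 ≤ g w := fun w => Set.indicator_nonneg (fun w _ => by positivity) w
  rw [rep z, rep z', ← integral_sub (repi z) (repi z')]
  have hb : ∀ᵐ w, ‖crK p (z - w) • fderiv ℝ f w - crK p (z' - w) • fderiv ℝ f w‖ ≤
      C * ‖z - z'‖ ^ α * L * (g (z - w) + g (z' - w)) := by
    have e1 : ∀ᵐ w : ℂ, w ≠ z := by simp [ae_iff]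
    have e2 : ∀ᵐ w : ℂ, w ≠ z' := by simp [ae_iff]
    filter_upwards [e1, e2] with w h1 h2
    by_cases hw : ρ < ‖w‖
    · rw [cr_fderiv_zero h0 w hw]
      rw [cr_clm_sub, norm_zero, mul_zero]
      have := gnn (z - w)
      have := gnn (z' - w)
      positivity
    · push Not at hw
      have m1 : z - w ∈ closedBall (0:ℂ) (r + ρ) := by
        simpa using (norm_sub_le z w).trans (by linarith)
      have m2 : z' - w ∈ closedBall (0:ℂ) (r + ρ) := by
        simpa using (norm_sub_le z' w).trans (by linarith)
      rw [cr_clm_sub, hg, Set.indicator_of_mem m1, Set.indicator_of_mem m2]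
      have hk' := hk (z - w) (z' - w) (sub_ne_zero.2 h1.symm) (sub_ne_zero.2 h2.symm)
      rw [sub_sub_sub_cancel_right] at hk'
      have := mul_le_mul hk' (norm_fderiv_le_of_lipschitz ℝ hf (x₀ := w)) (norm_nonneg _)
        (by positivity)
      refine this.trans (le_of_eq (by ring))
  refine (norm_integral_le_of_norm_le ?_ hb).trans (le_of_eq ?_)
  · exact ((gint.comp_sub_left z).add (gint.comp_sub_left z')).const_mul _
  · rw [integral_const_mul, integral_add (gint.comp_sub_left z) (gint.comp_sub_left z'),
      integral_sub_left_eq_self g, integral_sub_left_eq_self g, gI]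
    ring

lemma crD_continuous (p : ℤ) {f : ℂ → Fin n → ℂ} {ρ : ℝ} {L : ℝ≥0}
    (hf : LipschitzWith L f) (h0 : ∀ z, ρ < ‖z‖ → f z = 0) : Continuous (crD p f) := by
  rw [continuous_iff_continuousAt]
  intro z
  obtain ⟨M, hM, h⟩ := crD_holder (α := 1/2) (by norm_num) p hf h0 (‖z‖ + 1)
  rw [ContinuousAt, tendsto_iff_norm_sub_tendsto_zero]
  have hlim : Filter.Tendsto (fun x : ℂ => M * ‖x - z‖ ^ (1/2 : ℝ)) (nhds z) (nhds 0) := by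
    have : Continuous (fun x : ℂ => M * ‖x - z‖ ^ (1/2 : ℝ)) := by
      refine continuous_const.mul (Continuous.rpow_const (by fun_prop) ?_)
      intro x; right; norm_num
    have h2 := this.tendsto z
    simpa using h2
  refine squeeze_zero' (Filter.Eventually.of_forall fun _ => norm_nonneg _) ?_ hlim
  filter_upwards [ball_mem_nhds z one_pos] with x hx
  apply h x _ z (by simp)
  have := norm_sub_norm_le x z
  have h2 : ‖x - z‖ < 1 := by simpa [dist_eq_norm] using hx
  simp; linarith

end

noncomputable section

local notation "cj" => starRingEnd ℂ

variable {n : ℕ}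

lemma cr_ftc0 {f : ℝ → Fin n → ℂ} {L : ℝ≥0} (hf : LipschitzWith L f) (a b : ℝ) :
    ∫ x in a..b, deriv f x = f b - f a := by
  have hint : IntervalIntegrable (deriv f) volume a b := by
    refine (intervalIntegrable_const (c := (L:ℝ))).mono_fun
      (measurable_deriv f).aestronglyMeasurable ?_
    filter_upwards with x
    simpa using norm_deriv_le_of_lipschitz hf
  have hac : AbsolutelyContinuousOnInterval f a b :=
    (hf.lipschitzOnWith (s := Set.uIcc a b)).absolutelyContinuousOnInterval
  have hintg : ∀ a b : ℝ, IntervalIntegrable (deriv f) volume a b := by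
    intro a b
    refine (intervalIntegrable_const (c := (L:ℝ))).mono_fun
      (measurable_deriv f).aestronglyMeasurable ?_
    filter_upwards with x
    simpa using norm_deriv_le_of_lipschitz hf
  have hlipI : LipschitzWith L (fun x : ℝ => ∫ (t : ℝ) in a..x, deriv f t) := by
    refine LipschitzWith.of_dist_le_mul fun x y => ?_
    rw [dist_eq_norm, dist_eq_norm, intervalIntegral.integral_interval_sub_left (hintg _ _) (hintg _ _)]
    exact intervalIntegral.norm_integral_le_of_norm_le_const
      (fun t _ => norm_deriv_le_of_lipschitz hf)
  have f_deriv_integral_ac : AbsolutelyContinuousOnInterval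
      (fun x : ℝ => ∫ (t : ℝ) in a..x, deriv f t) a b :=
    (hlipI.lipschitzOnWith (s := Set.uIcc a b)).absolutelyContinuousOnInterval
  let g (x : ℝ) := f x - ∫ (t : ℝ) in a..x, deriv f t
  have g_ac : AbsolutelyContinuousOnInterval g a b := hac.sub (f_deriv_integral_ac)
  have g_ae_deriv_zero : ∀ᵐ x, x ∈ Set.uIcc a b → HasDerivAt g 0 x := by
    filter_upwards [hf.ae_differentiableAt_real, hint.ae_hasDerivAt_integral]
      with x hx₁ hx₂ hx₃
    have := (hx₁).hasDerivAt.sub (hx₂ hx₃ a (by simp))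
    rw [sub_self] at this
    exact this
  obtain ⟨C, hC⟩ := g_ac.const_of_ae_hasDerivAt_zero g_ae_deriv_zero
  have h1 : f a = g a := by simp [g]
  have h2 := hC a (by simp)
  have h3 := hC b (by simp)
  have h4 : g b = f b - ∫ (t : ℝ) in a..b, deriv f t := rfl
  rw [h1, h2, ← h3, h4]; abel

lemma cr_polar_ae {P : ℂ → Prop} (h : ∀ᵐ w, P w) :
    ∀ᵐ q ∂((volume : Measure (ℝ × ℝ)).restrict (Set.Ioi (0:ℝ) ×ˢ Set.Ioo (-Real.pi) Real.pi)),
      P ((q.1 : ℂ) * exp (q.2 * I)) := by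
  have h' : volume {w | ¬ P w} = 0 := h
  obtain ⟨N, hN, hNm, hN0⟩ := exists_measurable_superset_of_null h'
  have key := Complex.lintegral_comp_polarCoord_symm (N.indicator (fun _ => 1))
  rw [lintegral_indicator hNm, setLIntegral_const, one_mul, hN0] at key
  have hmeas : Measurable (fun q : ℝ × ℝ => (q.1 : ℂ) * exp (q.2 * I)) := by fun_prop
  have e : ∀ q : ℝ × ℝ, Complex.polarCoord.symm q = (q.1 : ℂ) * exp (q.2 * I) := by
    intro q
    rw [Complex.polarCoord_symm_apply, exp_mul_I]
    simp
  simp only [e] at key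
  rw [lintegral_eq_zero_iff] at key
  swap
  · have m1 : Measurable (fun q : ℝ × ℝ => ENNReal.ofReal q.1) :=
      ENNReal.measurable_ofReal.comp measurable_fst
    have m2 : Measurable (fun q : ℝ × ℝ => N.indicator (fun _ => (1:ℝ≥0∞))
        ((q.1 : ℂ) * exp (q.2 * I))) := (measurable_const.indicator hNm).comp hmeas
    exact m1.smul m2
  have ht : polarCoord.target = Set.Ioi (0:ℝ) ×ˢ Set.Ioo (-Real.pi) Real.pi := rfl
  rw [ht] at key
  filter_upwards [key, ae_restrict_mem (measurableSet_Ioi.prod measurableSet_Ioo)] with q hq hm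
  by_contra hP
  have : (q.1 : ℂ) * exp (q.2 * I) ∈ N := hN hP
  rw [Set.indicator_of_mem this] at hq
  have h0 : 0 < q.1 := hm.1
  simp at hq
  linarith

lemma cr_polar_int (F : ℂ → Fin n → ℂ) : ∫ w, F w =
    ∫ q in (Set.Ioi (0:ℝ) ×ˢ Set.Ioo (-Real.pi) Real.pi),
      q.1 • F ((q.1 : ℂ) * exp (q.2 * I)) := by
  rw [← Complex.integral_comp_polarCoord_symm F]
  have ht : polarCoord.target = Set.Ioi (0:ℝ) ×ˢ Set.Ioo (-Real.pi) Real.pi := rfl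
  rw [ht]
  congr 1
  ext1 q
  rw [Complex.polarCoord_symm_apply, exp_mul_I]
  simp

lemma cr_strip_integrable {F : ℝ × ℝ → Fin n → ℂ} {B s : ℝ} (hB : ∀ q, ‖F q‖ ≤ B)
    (h0 : ∀ q : ℝ × ℝ, 0 < q.1 → s < q.1 → F q = 0) (hm : AEStronglyMeasurable F volume) :
    IntegrableOn F (Set.Ioi (0:ℝ) ×ˢ Set.Ioo (-Real.pi) Real.pi) volume := by
  have h1 : IntegrableOn F (Set.Ioc (0:ℝ) s ×ˢ Set.Ioo (-Real.pi) Real.pi) volume := by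
    refine Measure.integrableOn_of_bounded (M := B) ?_ hm ?_
    · rw [Measure.volume_eq_prod, Measure.prod_prod]
      exact (ENNReal.mul_lt_top measure_Ioc_lt_top measure_Ioo_lt_top).ne
    · filter_upwards with q; exact hB q
  refine h1.of_forall_sdiff_eq_zero (measurableSet_Ioi.prod measurableSet_Ioo) ?_
  rintro q ⟨hq, hq'⟩
  apply h0 q hq.1
  by_contra h
  exact hq' ⟨⟨hq.1, not_lt.1 h⟩, hq.2⟩

lemma cr_strip_meas (g : ℂ → Fin n → ℂ) (c : ℂ) :
    Measurable (fun q : ℝ × ℝ => fderiv ℝ g ((q.1 : ℂ) * exp (q.2 * I)) (c * exp (q.2 * I))) := by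
  have hmeas : Measurable (fun q : ℝ × ℝ => (q.1 : ℂ) * exp (q.2 * I)) := by fun_prop
  have h1 := (measurable_fderiv_apply_const ℝ g 1).comp hmeas
  have h2 := (measurable_fderiv_apply_const ℝ g I).comp hmeas
  have e : ∀ (T : ℂ →L[ℝ] (Fin n → ℂ)) (v : ℂ), T v = v.re • T 1 + v.im • T I := by
    intro T v
    rw [← map_smul, ← map_smul, ← map_add]
    congr 1
    apply Complex.ext <;> simp
  have h3 : Measurable (fun q : ℝ × ℝ => c * exp (q.2 * I)) := by fun_prop
  have := ((Complex.measurable_re.comp h3).smul h1).add ((Complex.measurable_im.comp h3).smul h2)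
  convert this using 1
  ext1 q
  exact e _ _

lemma cr_fderiv_bd {g : ℂ → Fin n → ℂ} {L : ℝ≥0} (hg : LipschitzWith L g) (w v : ℂ) (hv : ‖v‖ = 1) :
    ‖fderiv ℝ g w v‖ ≤ L := by
  have := (fderiv ℝ g w).le_opNorm v
  rw [hv, mul_one] at this
  exact this.trans (norm_fderiv_le_of_lipschitz ℝ hg)

lemma cr_norm_e (c : ℂ) (hc : ‖c‖ = 1) (t : ℝ) : ‖c * exp (t * I)‖ = 1 := by
  rw [norm_mul, hc, norm_exp_ofReal_mul_I, one_mul]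

lemma cr_A {g : ℂ → Fin n → ℂ} {ρ : ℝ} {L : ℝ≥0} (hg : LipschitzWith L g)
    (h0 : ∀ z, ρ < ‖z‖ → g z = 0) (p : ℤ) :
    ∫ w, ((cj w) ^ p * w ^ (-p - 2)) • fderiv ℝ g w w =
      if p = -1 then (-(2 * Real.pi) : ℝ) • g 0 else 0 := by
  rw [cr_polar_int]
  set F : ℝ × ℝ → Fin n → ℂ := fun q => exp (((-2 * p - 2 : ℤ) : ℂ) * (q.2 * I)) •
    fderiv ℝ g ((q.1 : ℂ) * exp (q.2 * I)) (1 * exp (q.2 * I)) with hF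
  have hms : MeasurableSet (Set.Ioi (0:ℝ) ×ˢ Set.Ioo (-Real.pi) Real.pi) :=
    measurableSet_Ioi.prod measurableSet_Ioo
  have e1 : ∀ q ∈ (Set.Ioi (0:ℝ) ×ˢ Set.Ioo (-Real.pi) Real.pi),
      q.1 • (((cj ((q.1 : ℂ) * exp (q.2 * I))) ^ p * ((q.1 : ℂ) * exp (q.2 * I)) ^ (-p - 2)) •
        fderiv ℝ g ((q.1 : ℂ) * exp (q.2 * I)) ((q.1 : ℂ) * exp (q.2 * I))) = F q := by
    intro q hq
    have hq0 : (0:ℝ) < q.1 := hq.1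
    have hq0' : (q.1 : ℂ) ≠ 0 := by exact_mod_cast hq0.ne'
    have : fderiv ℝ g ((q.1 : ℂ) * exp (q.2 * I)) ((q.1 : ℂ) * exp (q.2 * I))
        = (q.1 : ℂ) • fderiv ℝ g ((q.1 : ℂ) * exp (q.2 * I)) (1 * exp (q.2 * I)) := by
      rw [one_mul, Complex.coe_smul, ← map_smul]
      simp
    rw [this, ← Complex.coe_smul q.1, smul_smul, smul_smul, hF]
    congr 1
    have c1 : cj ((q.1 : ℂ) * exp (q.2 * I)) = (q.1 : ℂ) * exp (-(q.2 * I)) := by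
      rw [map_mul, Complex.conj_ofReal, ← Complex.exp_conj]; simp
    rw [c1, mul_zpow, mul_zpow, ← Complex.exp_int_mul, ← Complex.exp_int_mul]
    have c2 : (q.1 : ℂ) ^ p * (q.1 : ℂ) ^ (-p - 2) = ((q.1 : ℂ) * q.1)⁻¹ := by
      rw [← zpow_add₀ hq0', show p + (-p - 2) = -2 by ring, zpow_neg]
      congr 1; norm_cast; ring
    have c3 : exp (((-2 * p - 2 : ℤ) : ℂ) * (q.2 * I)) =
        exp ((p : ℂ) * -(q.2 * I)) * exp (((-p - 2 : ℤ) : ℂ) * (q.2 * I)) := by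
      rw [← Complex.exp_add]; congr 1; push_cast; ring
    rw [c3]
    calc _ = (q.1 : ℂ) * q.1 * ((q.1 : ℂ) ^ p * (q.1 : ℂ) ^ (-p - 2)) *
          (exp ((p : ℂ) * -(q.2 * I)) * exp (((-p - 2 : ℤ) : ℂ) * (q.2 * I))) := by ring
      _ = _ := by rw [c2]; field_simp
  rw [setIntegral_congr_fun hms e1]
  have hn1 : ∀ t : ℝ, ‖exp (((-2 * p - 2 : ℤ) : ℂ) * (t * I))‖ = 1 := by
    intro t
    rw [show (((-2 * p - 2 : ℤ) : ℂ) * (t * I)) = (((-2 * p - 2 : ℤ) * t : ℝ) : ℂ) * I by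
      push_cast; ring, norm_exp_ofReal_mul_I]
  have hint : IntegrableOn F (Set.Ioi (0:ℝ) ×ˢ Set.Ioo (-Real.pi) Real.pi) volume := by
    refine cr_strip_integrable (B := L) (s := ρ) ?_ ?_ ?_
    · intro q
      rw [hF, norm_smul, hn1, one_mul]
      exact cr_fderiv_bd hg _ _ (cr_norm_e 1 (by simp) _)
    · intro q h1 h2
      rw [hF]
      dsimp only
      rw [cr_fderiv_zero h0]
      · simp
      · rw [norm_mul, norm_exp_ofReal_mul_I, mul_one, Complex.norm_real, Real.norm_eq_abs,
          abs_of_pos h1]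
        exact h2
    · refine Measurable.aestronglyMeasurable ?_
      have m1 : Measurable (fun q : ℝ × ℝ => exp (((-2 * p - 2 : ℤ) : ℂ) * (q.2 * I))) := by fun_prop
      exact m1.smul (cr_strip_meas g 1)
  have hae := cr_polar_ae hg.ae_differentiableAt
  rw [Measure.volume_eq_prod, ← Measure.prod_restrict] at hae ⊢
  rw [IntegrableOn, Measure.volume_eq_prod, ← Measure.prod_restrict] at hint
  rw [integral_prod_symm _ hint]
  have hae2 := Measure.ae_ae_of_ae_prod (Measure.measurePreserving_swap.quasiMeasurePreserving.ae hae)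
  have inner : ∀ᵐ t ∂(volume.restrict (Set.Ioo (-Real.pi) Real.pi)),
      ∫ r in Set.Ioi (0:ℝ), F (r, t) = exp (((-2 * p - 2 : ℤ) : ℂ) * (t * I)) • (- g 0) := by
    filter_upwards [hae2] with t ht
    simp only [hF]
    rw [integral_smul]
    congr 1
    set s : ℝ := max ρ 0 + 1 with hs
    have hs0 : 0 < s := by positivity
    have hsρ : ρ < s := by have := le_max_left ρ 0; linarith
    have hl : LipschitzWith L (fun r : ℝ => g ((r : ℂ) * exp (t * I))) := by
      refine LipschitzWith.of_dist_le_mul fun x y => ?_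
      refine (hg.dist_le_mul _ _).trans (le_of_eq ?_)
      rw [dist_eq_norm, dist_eq_norm, ← sub_mul, norm_mul, norm_exp_ofReal_mul_I, mul_one,
        ← Complex.ofReal_sub, Complex.norm_real]
    have hftc := cr_ftc0 hl 0 s
    have hgs : g ((s : ℂ) * exp (t * I)) = 0 := by
      apply h0
      rw [norm_mul, norm_exp_ofReal_mul_I, mul_one, Complex.norm_real, Real.norm_eq_abs,
        abs_of_pos hs0]
      exact hsρ
    rw [hgs, Complex.ofReal_zero, zero_mul, zero_sub,
      intervalIntegral.integral_of_le hs0.le] at hftc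
    rw [← hftc]
    have hz : ∀ r ∈ Set.Ioi (0:ℝ) \ Set.Ioc 0 s,
        fderiv ℝ g ((r : ℂ) * exp (t * I)) (1 * exp (t * I)) = 0 := by
      rintro r ⟨hr, hr'⟩
      have hr0 : 0 < r := hr
      rw [cr_fderiv_zero h0]
      · simp
      · rw [norm_mul, norm_exp_ofReal_mul_I, mul_one, Complex.norm_real, Real.norm_eq_abs,
          abs_of_pos hr0]
        by_contra h
        exact hr' ⟨hr0, by linarith⟩
    rw [setIntegral_eq_of_subset_of_forall_sdiff_eq_zero measurableSet_Ioi
      (Set.Ioc_subset_Ioi_self) hz]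
    refine setIntegral_congr_ae measurableSet_Ioc ?_
    rw [ae_restrict_iff' measurableSet_Ioi] at ht
    filter_upwards [ht] with r hr hr'
    have hd := hr hr'.1
    have h1 : HasDerivAt (fun r : ℝ => (r : ℂ) * exp (t * I)) (1 * exp (t * I)) r :=
      (Complex.ofRealCLM.hasDerivAt).mul_const _
    exact (hd.hasFDerivAt.comp_hasDerivAt r h1).deriv.symm
  rw [integral_congr_ae inner, integral_smul_const, ← integral_Ioc_eq_integral_Ioo,
    ← intervalIntegral.integral_of_le (by linarith [Real.pi_pos])]
  split_ifs with hp
  · subst hp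
    simp only [show (-2 * (-1:ℤ) - 2) = 0 by norm_num]
    simp
    rw [← Complex.coe_smul]
    congr 1
    push_cast; ring
  · have hk : (((-2 * p - 2 : ℤ) : ℂ) * I) ≠ 0 := by
      refine mul_ne_zero ?_ I_ne_zero
      exact_mod_cast (by omega : (-2 * p - 2 : ℤ) ≠ 0)
    have : ∀ t : ℝ, exp (((-2 * p - 2 : ℤ) : ℂ) * (t * I)) =
        exp ((((-2 * p - 2 : ℤ) : ℂ) * I) * t) := by
      intro t; congr 1; ring
    simp only [this]
    rw [integral_exp_mul_complex hk]
    have h2 : exp ((((-2 * p - 2 : ℤ) : ℂ) * I) * (Real.pi : ℝ)) =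
        exp ((((-2 * p - 2 : ℤ) : ℂ) * I) * ((-Real.pi : ℝ) : ℂ)) := by
      rw [Complex.exp_eq_exp_iff_exists_int]
      refine ⟨-2 * p - 2, ?_⟩
      push_cast; ring
    rw [h2, sub_self, zero_div, zero_smul]

lemma cr_B {g : ℂ → Fin n → ℂ} {ρ : ℝ} {L : ℝ≥0} (hg : LipschitzWith L g)
    (h0 : ∀ z, ρ < ‖z‖ → g z = 0) :
    ∫ w, ((cj w)⁻¹ * w⁻¹) • fderiv ℝ g w (I * w) = 0 := by
  rw [cr_polar_int]
  set F : ℝ × ℝ → Fin n → ℂ := fun q =>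
    fderiv ℝ g ((q.1 : ℂ) * exp (q.2 * I)) (I * exp (q.2 * I)) with hF
  have hms : MeasurableSet (Set.Ioi (0:ℝ) ×ˢ Set.Ioo (-Real.pi) Real.pi) :=
    measurableSet_Ioi.prod measurableSet_Ioo
  have e1 : ∀ q ∈ (Set.Ioi (0:ℝ) ×ˢ Set.Ioo (-Real.pi) Real.pi),
      q.1 • (((cj ((q.1 : ℂ) * exp (q.2 * I)))⁻¹ * ((q.1 : ℂ) * exp (q.2 * I))⁻¹) •
        fderiv ℝ g ((q.1 : ℂ) * exp (q.2 * I)) (I * ((q.1 : ℂ) * exp (q.2 * I)))) = F q := by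
    intro q hq
    have hq0 : (0:ℝ) < q.1 := hq.1
    have hq0' : (q.1 : ℂ) ≠ 0 := by exact_mod_cast hq0.ne'
    have : fderiv ℝ g ((q.1 : ℂ) * exp (q.2 * I)) (I * ((q.1 : ℂ) * exp (q.2 * I)))
        = (q.1 : ℂ) • fderiv ℝ g ((q.1 : ℂ) * exp (q.2 * I)) (I * exp (q.2 * I)) := by
      rw [Complex.coe_smul, ← map_smul]
      congr 1
      simp only [Complex.real_smul]; ring
    rw [this, ← Complex.coe_smul q.1, smul_smul, smul_smul, hF]
    have c1 : cj ((q.1 : ℂ) * exp (q.2 * I)) = (q.1 : ℂ) * exp (-(q.2 * I)) := by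
      rw [map_mul, Complex.conj_ofReal, ← Complex.exp_conj]; simp
    rw [c1, Complex.exp_neg]
    have := Complex.exp_ne_zero (q.2 * I)
    have c2 : (q.1 : ℂ) * (((q.1 : ℂ) * (exp (q.2 * I))⁻¹)⁻¹ * ((q.1 : ℂ) * exp (q.2 * I))⁻¹) * q.1
      = 1 := by field_simp
    convert one_smul ℂ _ using 2
  rw [setIntegral_congr_fun hms e1]
  have hint : IntegrableOn F (Set.Ioi (0:ℝ) ×ˢ Set.Ioo (-Real.pi) Real.pi) volume := by
    refine cr_strip_integrable (B := L) (s := ρ) ?_ ?_ ?_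
    · intro q
      exact cr_fderiv_bd hg _ _ (cr_norm_e I (by simp) _)
    · intro q h1 h2
      rw [hF]
      dsimp only
      rw [cr_fderiv_zero h0]
      · simp
      · rw [norm_mul, norm_exp_ofReal_mul_I, mul_one, Complex.norm_real, Real.norm_eq_abs,
          abs_of_pos h1]
        exact h2
    · exact (cr_strip_meas g I).aestronglyMeasurable
  have hae := cr_polar_ae hg.ae_differentiableAt
  rw [Measure.volume_eq_prod, ← Measure.prod_restrict] at hae ⊢
  rw [IntegrableOn, Measure.volume_eq_prod, ← Measure.prod_restrict] at hint
  rw [integral_prod _ hint]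
  have hae2 := Measure.ae_ae_of_ae_prod hae
  have inner : ∀ᵐ r ∂(volume.restrict (Set.Ioi (0:ℝ))),
      ∫ t in Set.Ioo (-Real.pi) Real.pi, F (r, t) = 0 := by
    filter_upwards [hae2, ae_restrict_mem measurableSet_Ioi] with r ht hr
    have hr0 : 0 < r := hr
    have hd1 : ∀ t : ℝ, HasDerivAt (fun t : ℝ => (r : ℂ) * exp (t * I)) (r • (I * exp (t * I))) t := by
      intro t
      have h1 : HasDerivAt (fun t : ℝ => (t : ℂ) * I) (1 * I) t :=
        (Complex.ofRealCLM.hasDerivAt).mul_const _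
      have := (h1.cexp).const_mul (r : ℂ)
      have e : r • (I * exp (t * I)) = (r : ℂ) * (exp (t * I) * (1 * I)) := by
        rw [Complex.real_smul]; ring
      rw [e]
      exact this
    have hl : LipschitzWith (L * r.toNNReal) (fun t : ℝ => g ((r : ℂ) * exp (t * I))) := by
      refine hg.comp ?_
      refine lipschitzWith_of_nnnorm_deriv_le (fun t => (hd1 t).differentiableAt) ?_
      intro t
      rw [(hd1 t).deriv, ← NNReal.coe_le_coe, coe_nnnorm, norm_smul, cr_norm_e I (by simp)]
      simp [abs_of_pos hr0, hr0.le]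
    have hftc := cr_ftc0 hl (-Real.pi) Real.pi
    have hper : exp ((Real.pi : ℝ) * I) = exp ((-Real.pi : ℝ) * I) := by
      rw [Complex.exp_eq_exp_iff_exists_int]
      exact ⟨1, by push_cast; ring⟩
    rw [hper, sub_self, intervalIntegral.integral_of_le (by linarith [Real.pi_pos]),
      integral_Ioc_eq_integral_Ioo] at hftc
    have : ∫ t in Set.Ioo (-Real.pi) Real.pi, r • F (r, t) = 0 := by
      rw [← hftc]
      refine integral_congr_ae ?_
      filter_upwards [ht] with t hd
      have := (hd.hasFDerivAt.comp_hasDerivAt t (hd1 t)).deriv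
      simp only [hF]
      rw [← map_smul]
      exact this.symm
    rw [integral_smul] at this
    exact (smul_eq_zero.1 this).resolve_left hr0.ne'
  rw [integral_congr_ae inner]
  simp

end

noncomputable section

local notation "cj" => starRingEnd ℂ

variable {n : ℕ}

lemma cr_T_decomp (T : ℂ →L[ℝ] (Fin n → ℂ)) (w : ℂ) :
    T w = w • ((2 : ℂ)⁻¹ • (T 1 - I • T I)) + cj w • ((2 : ℂ)⁻¹ • (T 1 + I • T I)) := by
  have h : T w = w.re • T 1 + w.im • T I := by
    rw [← map_smul, ← map_smul, ← map_add]
    congr 1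
    apply Complex.ext <;> simp
  rw [h]
  ext k
  simp only [Pi.add_apply, Pi.smul_apply, Pi.sub_apply, smul_eq_mul, Complex.real_smul]
  have hw : w = w.re + w.im * I := (Complex.re_add_im w).symm
  have hc : cj w = w.re - w.im * I := by
    apply Complex.ext <;> simp
  rw [hc]
  nth_rw 3 [hw]
  linear_combination ((w.im : ℂ) * T I k) * I_sq

lemma crC_fderiv (p : ℤ) {f : ℂ → Fin n → ℂ} {ρ : ℝ} {L : ℝ≥0} (hf : LipschitzWith L f)
    (h0 : ∀ z, ρ < ‖z‖ → f z = 0) (z : ℂ) : fderiv ℝ (crC p f) z = crD p f z :=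
  (crC_hasFDerivAt p hf h0 z).2.fderiv

lemma crC_int_apply (p : ℤ) {f : ℂ → Fin n → ℂ} {ρ : ℝ} {L : ℝ≥0} (hf : LipschitzWith L f)
    (h0 : ∀ z, ρ < ‖z‖ → f z = 0) (z v : ℂ) :
    Integrable (fun w => crK p w • fderiv ℝ f (z - w) v) volume := by
  have := (crC_hasFDerivAt p hf h0 z).1.apply_continuousLinearMap v
  exact this

lemma crC_wD (p : ℤ) {f : ℂ → Fin n → ℂ} {ρ : ℝ} {L : ℝ≥0} (hf : LipschitzWith L f)
    (h0 : ∀ z, ρ < ‖z‖ → f z = 0) (z : ℂ) :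
    Integrable (fun w => crK p w • wDv f (z - w)) volume ∧
    Integrable (fun w => crK p w • wDbarv f (z - w)) volume ∧
    wDv (crC p f) z = ∫ w, crK p w • wDv f (z - w) ∧
    wDbarv (crC p f) z = ∫ w, crK p w • wDbarv f (z - w) := by
  have i1 := crC_int_apply p hf h0 z 1
  have i2 := crC_int_apply p hf h0 z I
  have i3 : Integrable (fun w => I • (crK p w • fderiv ℝ f (z - w) I)) volume := i2.smul I
  have e1 : ∀ w, crK p w • wDv f (z - w) = (2:ℂ)⁻¹ • (crK p w • fderiv ℝ f (z - w) 1 -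
      I • (crK p w • fderiv ℝ f (z - w) I)) := by
    intro w
    rw [smul_comm I, ← smul_sub, smul_comm]; rfl
  have e2 : ∀ w, crK p w • wDbarv f (z - w) = (2:ℂ)⁻¹ • (crK p w • fderiv ℝ f (z - w) 1 +
      I • (crK p w • fderiv ℝ f (z - w) I)) := by
    intro w
    rw [smul_comm I, ← smul_add, smul_comm]; rfl
  simp only [e1, e2]
  refine ⟨(i1.sub i3).smul (2:ℂ)⁻¹, ?_, ?_, ?_⟩
  · exact (i1.add i3).smul (2:ℂ)⁻¹
  · rw [integral_smul, integral_sub i1 i3, integral_smul, wDv, crC_fderiv p hf h0,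
      crD_apply p hf h0, crD_apply p hf h0]
  · rw [integral_smul, integral_add i1 i3, integral_smul, wDbarv, crC_fderiv p hf h0,
      crD_apply p hf h0, crD_apply p hf h0]

lemma cr_g_fderiv (f : ℂ → Fin n → ℂ) (z w : ℂ) :
    fderiv ℝ (fun w => f (z - w)) w = - fderiv ℝ f (z - w) := by
  have h1 : (fun w => f (z - w)) = (fun x => f (z + x)) ∘ (ContinuousLinearEquiv.neg ℝ : ℂ ≃L[ℝ] ℂ) := by
    ext1 x; simp [sub_eq_add_neg]
  rw [h1, ContinuousLinearEquiv.comp_right_fderiv, fderiv_comp_add_left]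
  ext v
  simp [sub_eq_add_neg]

lemma crC_rel_sum (p : ℤ) {f : ℂ → Fin n → ℂ} {ρ : ℝ} {L : ℝ≥0} (hf : LipschitzWith L f)
    (h0 : ∀ z, ρ < ‖z‖ → f z = 0) (z : ℂ) :
    wDv (crC p f) z + wDbarv (crC (p+1) f) z = if p = -1 then (2 * Real.pi : ℝ) • f z else 0 := by
  have hg : LipschitzWith L (fun w => f (z - w)) := by
    refine LipschitzWith.of_dist_le_mul fun x y => ?_
    refine (hf.dist_le_mul _ _).trans (le_of_eq ?_)
    rw [dist_sub_left]
  have hA := cr_A hg (ρ := ‖z‖ + ρ) (fun w hw => cr_shift_zero h0 le_rfl w hw) p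
  obtain ⟨i1, -, e1, -⟩ := crC_wD p hf h0 z
  obtain ⟨-, i2, -, e2⟩ := crC_wD (p+1) hf h0 z
  rw [e1, e2, ← integral_add i1 i2]
  have : ∫ w, (crK p w • wDv f (z - w) + crK (p+1) w • wDbarv f (z - w)) =
      ∫ w, -(((cj w) ^ p * w ^ (-p - 2)) • fderiv ℝ (fun w => f (z - w)) w w) := by
    refine integral_congr_ae ?_
    filter_upwards [compl_mem_ae_iff.2 (measure_singleton (0:ℂ))] with w hw
    have hw0 : w ≠ 0 := hw
    have hc0 : cj w ≠ 0 := by simpa using hw0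
    rw [cr_g_fderiv, neg_apply, smul_neg, neg_neg,
      cr_T_decomp (fderiv ℝ f (z - w)) w, smul_add, smul_smul, smul_smul (_ * _) (cj w)]
    congr 1
    · congr 1
      rw [crK, mul_assoc, ← zpow_add_one₀ hw0]; congr 2; ring
    · congr 1
      rw [crK, zpow_add_one₀ hc0]
      have : -(p+1) - 1 = -p - 2 := by ring
      rw [this]; ring
  rw [this, integral_neg, hA]
  split_ifs
  · simp
  · simp

lemma crC_rel_diff {f : ℂ → Fin n → ℂ} {ρ : ℝ} {L : ℝ≥0} (hf : LipschitzWith L f)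
    (h0 : ∀ z, ρ < ‖z‖ → f z = 0) (z : ℂ) :
    wDv (crC (-1) f) z - wDbarv (crC 0 f) z = 0 := by
  have hg : LipschitzWith L (fun w => f (z - w)) := by
    refine LipschitzWith.of_dist_le_mul fun x y => ?_
    refine (hf.dist_le_mul _ _).trans (le_of_eq ?_)
    rw [dist_sub_left]
  have hA := cr_B hg (ρ := ‖z‖ + ρ) (fun w hw => cr_shift_zero h0 le_rfl w hw)
  obtain ⟨i1, -, e1, -⟩ := crC_wD (-1) hf h0 z
  obtain ⟨-, i2, -, e2⟩ := crC_wD 0 hf h0 z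
  rw [e1, e2, ← integral_sub i1 i2]
  have : ∫ w, (crK (-1) w • wDv f (z - w) - crK 0 w • wDbarv f (z - w)) =
      ∫ w, I • (((cj w)⁻¹ * w⁻¹) • fderiv ℝ (fun w => f (z - w)) w (I * w)) := by
    refine integral_congr_ae ?_
    filter_upwards [compl_mem_ae_iff.2 (measure_singleton (0:ℂ))] with w hw
    have hw0 : w ≠ 0 := hw
    have hc0 : cj w ≠ 0 := by simpa using hw0
    have k1 : crK (-1) w = (cj w)⁻¹ := by simp [crK]
    have k2 : crK 0 w = w⁻¹ := by simp [crK]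
    rw [cr_g_fderiv, neg_apply, 
      cr_T_decomp (fderiv ℝ f (z - w)) (I * w), k1, k2]
    change _ • wDv f (z - w) - _ = I • (_ • -((I * w) • wDv f (z - w) + cj (I * w) • wDbarv f (z - w)))
    generalize wDv f (z - w) = A
    generalize wDbarv f (z - w) = B
    ext k
    simp only [Pi.add_apply, Pi.smul_apply, Pi.sub_apply, Pi.neg_apply, smul_eq_mul, map_mul, Complex.conj_I]
    field_simp
    linear_combination (A k * w - B k * cj w) * I_sq
  rw [this, integral_smul, hA, smul_zero]

/-- sign/normalisation constants -/
def crS (p : ℤ) : ℂ := ((if 0 ≤ p then (-1 : ℂ) ^ p else -(-1 : ℂ) ^ p) / (Real.pi : ℂ))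

lemma crS_norm (p : ℤ) : ‖crS p‖ ≤ 1 := by
  have : ‖crS p‖ = 1 / Real.pi := by
    unfold crS
    rw [norm_div, Complex.norm_real, Real.norm_eq_abs, abs_of_pos Real.pi_pos]
    congr 1
    split_ifs <;> simp
  rw [this, div_le_one Real.pi_pos]
  linarith [Real.pi_gt_three]

lemma wDv_smul (k : ℂ) (c : Fin n → ℂ) (f : ℂ → Fin n → ℂ) (z : ℂ) (hf : DifferentiableAt ℝ f z) :
    wDv (fun z => c + k • f z) z = k • wDv f z := by
  unfold wDv
  rw [fderiv_const_add, fderiv_fun_const_smul hf]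
  simp only [smul_apply]
  rw [smul_comm I k, ← smul_sub, smul_comm]

lemma wDbarv_smul (k : ℂ) (c : Fin n → ℂ) (f : ℂ → Fin n → ℂ) (z : ℂ) (hf : DifferentiableAt ℝ f z) :
    wDbarv (fun z => c + k • f z) z = k • wDbarv f z := by
  unfold wDbarv
  rw [fderiv_const_add, fderiv_fun_const_smul hf]
  simp only [smul_apply]
  rw [smul_comm I k, ← smul_add, smul_comm]

lemma crS_rel (p : ℤ) (hp : p ≠ -1) : crS (p+1) = - crS p := by
  unfold crS
  have : (0 ≤ p + 1) ↔ 0 ≤ p := by omega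
  simp only [this]
  rw [zpow_add_one₀ (by norm_num)]
  split_ifs <;> ring

lemma crS_rel0 : crS 0 = (Real.pi : ℂ)⁻¹ ∧ crS (-1) = (Real.pi : ℂ)⁻¹ := by
  unfold crS
  constructor <;> norm_num

lemma crC_main0 {f : ℂ → Fin n → ℂ} {ρ : ℝ} {L : ℝ≥0} (hf : LipschitzWith L f)
    (h0 : ∀ z, ρ < ‖z‖ → f z = 0) (z : ℂ) :
    crS (-1) • wDv (crC (-1) f) z = f z ∧ crS 0 • wDbarv (crC 0 f) z = f z := by
  have h1 := crC_rel_sum (-1) hf h0 z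
  have h2 := crC_rel_diff hf h0 z
  rw [if_pos rfl] at h1
  have h3 : wDv (crC (-1) f) z = wDbarv (crC 0 f) z := sub_eq_zero.1 h2
  norm_num at h1
  rw [h3] at h1
  have hpi : (Real.pi : ℂ) ≠ 0 := by exact_mod_cast Real.pi_ne_zero
  have h4 : wDbarv (crC 0 f) z = (Real.pi : ℂ) • f z := by
    ext k
    have := congrFun h1 k
    simp only [Pi.add_apply, Pi.smul_apply, Complex.real_smul] at this
    push_cast at this
    simp only [Pi.smul_apply, smul_eq_mul]
    linear_combination this / 2
  rw [h3, h4, crS_rel0.1, crS_rel0.2, smul_smul, inv_mul_cancel₀ hpi, one_smul]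
  exact ⟨rfl, rfl⟩

lemma crC_main (p : ℤ) {f : ℂ → Fin n → ℂ} {ρ : ℝ} {L : ℝ≥0} (hf : LipschitzWith L f)
    (h0 : ∀ z, ρ < ‖z‖ → f z = 0) (z : ℂ) :
    crS p • wDv (crC p f) z = crS (p+1) • wDbarv (crC (p+1) f) z := by
  by_cases hp : p = -1
  · subst hp
    rw [(crC_main0 hf h0 z).1]
    exact (crC_main0 hf h0 z).2.symm
  · have h1 := crC_rel_sum p hf h0 z
    rw [if_neg hp] at h1
    rw [crS_rel p hp, neg_smul, ← smul_neg, eq_neg_of_add_eq_zero_left h1]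

end

noncomputable section

local notation "cj" => starRingEnd ℂ

variable {n : ℕ}

def crLL : ((Fin n → ℂ) × (Fin n → ℂ)) →L[ℝ] (ℂ →L[ℝ] (Fin n → ℂ)) :=
  (ContinuousLinearMap.smulRightL ℝ ℂ (Fin n → ℂ) reCLM).comp
    (ContinuousLinearMap.fst ℝ _ _ + ContinuousLinearMap.snd ℝ _ _) +
  (ContinuousLinearMap.smulRightL ℝ ℂ (Fin n → ℂ) imCLM).comp
    (I • (ContinuousLinearMap.fst ℝ _ _ - ContinuousLinearMap.snd ℝ _ _))

lemma crLL_apply (a b : Fin n → ℂ) (v : ℂ) : crLL (a, b) v = v • a + cj v • b := by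
  have h1 : crLL (a, b) v = v.re • (a + b) + v.im • (I • (a - b)) := rfl
  rw [h1]
  ext k
  simp only [Pi.add_apply, Pi.smul_apply, Pi.sub_apply, smul_eq_mul, Complex.real_smul]
  have hw : v = v.re + v.im * I := (Complex.re_add_im v).symm
  have hc : cj v = v.re - v.im * I := by
    apply Complex.ext <;> simp
  rw [hc]
  nth_rw 3 [hw]
  ring

lemma crLL_norm (a b : Fin n → ℂ) (C : ℝ) (ha : ‖a‖ ≤ C) (hb : ‖b‖ ≤ C) :
    ‖crLL (a, b)‖ ≤ 2 * C := by
  have hC : 0 ≤ C := (norm_nonneg _).trans ha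
  refine ContinuousLinearMap.opNorm_le_bound _ (by positivity) fun v => ?_
  rw [crLL_apply]
  refine (norm_add_le _ _).trans ?_
  rw [norm_smul, norm_smul, RCLike.norm_conj]
  nlinarith [norm_nonneg v]

lemma wDv_of {F : ℂ → Fin n → ℂ} {a b : Fin n → ℂ} {z : ℂ} (h : HasFDerivAt F (crLL (a, b)) z) :
    wDv F z = a ∧ wDbarv F z = b := by
  unfold wDv wDbarv
  rw [h.fderiv, crLL_apply, crLL_apply]
  constructor
  · ext k
    simp only [Pi.add_apply, Pi.smul_apply, Pi.sub_apply, smul_eq_mul, map_one, Complex.conj_I]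
    linear_combination (-(a k) + b k) / 2 * I_sq
  · ext k
    simp only [Pi.add_apply, Pi.smul_apply, smul_eq_mul, map_one, Complex.conj_I]
    linear_combination ((a k) - b k) / 2 * I_sq

lemma fderiv_wD (F : ℂ → Fin n → ℂ) (z v : ℂ) :
    fderiv ℝ F z v = v • wDv F z + cj v • wDbarv F z := cr_T_decomp _ _

def crW (H : ℕ → ℂ → Fin n → ℂ) (cc : ℕ → ℕ → Fin n → ℂ) : ℕ → ℕ → ℂ → Fin n → ℂ
  | 0, i => H i
  | d + 1, i => fun z => cc (d+1) i + ∫ᶜ x in .segment (0:ℂ) z, crLL (crW H cc d (i+1) x, crW H cc d i x)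

lemma crW_all {H : ℕ → ℂ → Fin n → ℂ} {cc : ℕ → ℕ → Fin n → ℂ}
    (h1 : ∀ i, ContDiff ℝ 1 (H i)) (h2 : ∀ i z, wDv (H i) z = wDbarv (H (i+1)) z)
    (h3 : ∀ i, H i 0 = cc 0 i) (d : ℕ) :
    (∀ i, ContDiff ℝ (d+1) (crW H cc d i)) ∧
    (∀ i z, wDv (crW H cc d i) z = wDbarv (crW H cc d (i+1)) z) ∧
    (∀ i, crW H cc d i 0 = cc d i) ∧
    (∀ i z, HasFDerivAt (crW H cc (d+1) i) (crLL (crW H cc d (i+1) z, crW H cc d i z)) z) := by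
  have key : ∀ d : ℕ, (∀ i, ContDiff ℝ (d+1) (crW H cc d i)) →
      (∀ i z, wDv (crW H cc d i) z = wDbarv (crW H cc d (i+1)) z) →
      (∀ i z, HasFDerivAt (crW H cc (d+1) i) (crLL (crW H cc d (i+1) z, crW H cc d i z)) z) := by
    intro d e1 e2 i z
    have hd : ∀ i x, HasFDerivAt (crW H cc d i) (fderiv ℝ (crW H cc d i) x) x := fun i x =>
      ((e1 i).differentiable (by simp) x).hasFDerivAt
    have hω : ∀ x ∈ (Set.univ : Set ℂ), HasFDerivWithinAt
        (fun x => crLL (crW H cc d (i+1) x, crW H cc d i x))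
        (crLL.comp ((fderiv ℝ (crW H cc d (i+1)) x).prod (fderiv ℝ (crW H cc d i) x))) Set.univ x := by
      intro x _
      rw [hasFDerivWithinAt_univ]
      exact crLL.hasFDerivAt.comp x ((hd (i+1) x).prodMk (hd i x))
    have := convex_univ.hasFDerivWithinAt_curveIntegral_segment_of_hasFDerivWithinAt_symmetric hω
      (by
        intro a _ x _ y _
        change crLL (fderiv ℝ (crW H cc d (i+1)) a x, fderiv ℝ (crW H cc d i) a x) y =
          crLL (fderiv ℝ (crW H cc d (i+1)) a y, fderiv ℝ (crW H cc d i) a y) x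
        rw [crLL_apply, crLL_apply]
        simp only [fderiv_wD, e2 i]
        ext k
        simp only [Pi.add_apply, Pi.smul_apply, smul_eq_mul]
        ring) (Set.mem_univ 0) (Set.mem_univ z)
    rw [hasFDerivWithinAt_univ] at this
    exact this.const_add _
  have main : (∀ i, ContDiff ℝ (d+1) (crW H cc d i)) ∧
    (∀ i z, wDv (crW H cc d i) z = wDbarv (crW H cc d (i+1)) z) ∧
    (∀ i, crW H cc d i 0 = cc d i) := by
    induction d with
    | zero => 
      refine ⟨?_, h2, h3⟩
      intro i
      simpa [crW] using h1 i
    | succ d ih =>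
      obtain ⟨e1, e2, e3⟩ := ih
      have k := key d e1 e2
      refine ⟨?_, ?_, ?_⟩
      · intro i
        push_cast
        rw [contDiff_succ_iff_fderiv]
        refine ⟨fun z => (k i z).differentiableAt, ?_, ?_⟩
        · intro h; exact absurd h (by exact_mod_cast WithTop.coe_ne_top)
        · have : fderiv ℝ (crW H cc (d+1) i) = fun z => crLL (crW H cc d (i+1) z, crW H cc d i z) := by
            ext1 z; exact (k i z).fderiv
          rw [this]
          exact crLL.contDiff.comp ((e1 (i+1)).prodMk (e1 i))
      · intro i z
        rw [(wDv_of (k i z)).1, (wDv_of (k (i+1) z)).2]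
      · intro i
        simp [crW]
  exact ⟨main.1, main.2.1, main.2.2, key d main.1 main.2.1⟩

end

noncomputable section

variable {n : ℕ}

def crH (μ : ℕ) (c0 : ℕ → Fin n → ℂ) (f : ℂ → Fin n → ℂ) (i : ℕ) (z : ℂ) : Fin n → ℂ :=
  (c0 i - crS ((i:ℤ) - μ) • crC ((i:ℤ) - μ) f 0) + crS ((i:ℤ) - μ) • crC ((i:ℤ) - μ) f z

lemma crH_fderiv (μ : ℕ) (c0 : ℕ → Fin n → ℂ) {f : ℂ → Fin n → ℂ} {ρ : ℝ} {L : ℝ≥0}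
    (hf : LipschitzWith L f) (h0 : ∀ z, ρ < ‖z‖ → f z = 0) (i : ℕ) (z : ℂ) :
    HasFDerivAt (crH μ c0 f i) (crS ((i:ℤ) - μ) • crD ((i:ℤ) - μ) f z) z :=
  ((crC_hasFDerivAt ((i:ℤ) - μ) hf h0 z).2.const_smul (crS ((i:ℤ) - μ))).const_add
    (c0 i - crS ((i:ℤ) - μ) • crC ((i:ℤ) - μ) f 0)

lemma crH_wD (μ : ℕ) (c0 : ℕ → Fin n → ℂ) {f : ℂ → Fin n → ℂ} {ρ : ℝ} {L : ℝ≥0}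
    (hf : LipschitzWith L f) (h0 : ∀ z, ρ < ‖z‖ → f z = 0) (i : ℕ) (z : ℂ) :
    wDv (crH μ c0 f i) z = crS ((i:ℤ) - μ) • wDv (crC ((i:ℤ) - μ) f) z ∧
    wDbarv (crH μ c0 f i) z = crS ((i:ℤ) - μ) • wDbarv (crC ((i:ℤ) - μ) f) z :=
  ⟨wDv_smul _ _ _ _ (crC_hasFDerivAt _ hf h0 z).2.differentiableAt,
   wDbarv_smul _ _ _ _ (crC_hasFDerivAt _ hf h0 z).2.differentiableAt⟩

lemma crH_contDiff (μ : ℕ) (c0 : ℕ → Fin n → ℂ) {f : ℂ → Fin n → ℂ} {ρ : ℝ} {L : ℝ≥0}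
    (hf : LipschitzWith L f) (h0 : ∀ z, ρ < ‖z‖ → f z = 0) (i : ℕ) :
    ContDiff ℝ 1 (crH μ c0 f i) := by
  rw [contDiff_one_iff_fderiv]
  refine ⟨fun z => (crH_fderiv μ c0 hf h0 i z).differentiableAt, ?_⟩
  have : fderiv ℝ (crH μ c0 f i) = fun z => crS ((i:ℤ) - μ) • crD ((i:ℤ) - μ) f z := by
    ext1 z; exact (crH_fderiv μ c0 hf h0 i z).fderiv
  rw [this]
  exact (crD_continuous ((i:ℤ) - μ) hf h0).const_smul (crS ((i:ℤ) - μ))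

lemma crH_rel (μ : ℕ) (c0 : ℕ → Fin n → ℂ) {f : ℂ → Fin n → ℂ} {ρ : ℝ} {L : ℝ≥0}
    (hf : LipschitzWith L f) (h0 : ∀ z, ρ < ‖z‖ → f z = 0) (i : ℕ) (z : ℂ) :
    wDv (crH μ c0 f i) z = wDbarv (crH μ c0 f (i+1)) z := by
  rw [(crH_wD μ c0 hf h0 i z).1, (crH_wD μ c0 hf h0 (i+1) z).2, crC_main _ hf h0]
  have : ((i + 1 : ℕ) : ℤ) - μ = (i:ℤ) - μ + 1 := by push_cast; ring
  rw [this]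

lemma crH_zero (μ : ℕ) (c0 : ℕ → Fin n → ℂ) (f : ℂ → Fin n → ℂ) (i : ℕ) :
    crH μ c0 f i 0 = c0 i := by simp [crH]

lemma crC_integrable (p : ℤ) {f : ℂ → Fin n → ℂ} {ρ : ℝ} {L : ℝ≥0}
    (hf : LipschitzWith L f) (h0 : ∀ z, ρ < ‖z‖ → f z = 0) (z : ℂ) :
    Integrable (fun w => crK p w • f (z - w)) volume := by
  obtain ⟨B, hB⟩ := cr_lip_bdd hf h0
  refine crInt_integrable p (B := B) (s := ‖z‖ + ρ) (fun w => hB _)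
    (fun w hw => cr_shift_zero h0 le_rfl w hw) ?_
  have : Continuous (fun w => f (z - w)) := hf.continuous.comp (by fun_prop)
  exact this.aestronglyMeasurable

lemma crC_est_sub (p : ℤ) {f g : ℂ → Fin n → ℂ} {ρ δ : ℝ} {L L' : ℝ≥0}
    (hf : LipschitzWith L f) (h0 : ∀ z, ρ < ‖z‖ → f z = 0)
    (hg : LipschitzWith L' g) (h0' : ∀ z, ρ < ‖z‖ → g z = 0)
    (z z' : ℂ) (hz : ‖z‖ ≤ ρ) (hz' : ‖z'‖ ≤ ρ) (hd : ∀ w, ‖f (z - w) - g (z' - w)‖ ≤ δ) :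
    ‖crC p f z - crC p g z'‖ ≤ crKap (ρ + ρ) * δ := by
  unfold crC
  rw [← integral_sub (crC_integrable p hf h0 z) (crC_integrable p hg h0' z')]
  simp only [← smul_sub]
  refine crInt_bound p hd ?_
  intro w hw
  rw [cr_shift_zero h0 hz w hw, cr_shift_zero h0' hz' w hw, sub_zero]

lemma crC_est (p : ℤ) {f : ℂ → Fin n → ℂ} {ρ A : ℝ} (h0 : ∀ z, ρ < ‖z‖ → f z = 0)
    (hA : ∀ z, ‖f z‖ ≤ A) (z : ℂ) (hz : ‖z‖ ≤ ρ) : ‖crC p f z‖ ≤ crKap (ρ + ρ) * A :=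
  crInt_bound p (fun _ => hA _) (fun w hw => cr_shift_zero h0 hz w hw)

lemma crS_mul (p : ℤ) (v : Fin n → ℂ) : ‖crS p • v‖ ≤ ‖v‖ := by
  rw [norm_smul]
  exact mul_le_of_le_one_left (norm_nonneg _) (crS_norm p)

lemma crH_est_f (μ : ℕ) (c0 : ℕ → Fin n → ℂ) {f g : ℂ → Fin n → ℂ} {ρ δ : ℝ} {L L' : ℝ≥0} (hρ : 0 ≤ ρ)
    (hf : LipschitzWith L f) (h0 : ∀ z, ρ < ‖z‖ → f z = 0)
    (hg : LipschitzWith L' g) (h0' : ∀ z, ρ < ‖z‖ → g z = 0)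
    (hd : ∀ w, ‖f w - g w‖ ≤ δ) (i : ℕ)
    (z : ℂ) (hz : ‖z‖ ≤ ρ) : ‖crH μ c0 f i z - crH μ c0 g i z‖ ≤ 2 * (crKap (ρ + ρ) * δ) := by
  have e : crH μ c0 f i z - crH μ c0 g i z =
      crS ((i:ℤ) - μ) • ((crC ((i:ℤ) - μ) f z - crC ((i:ℤ) - μ) g z) -
      (crC ((i:ℤ) - μ) f 0 - crC ((i:ℤ) - μ) g 0)) := by
    unfold crH; simp only [smul_sub]; abel
  rw [e]
  refine (crS_mul _ _).trans ((norm_sub_le _ _).trans ?_)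
  have h1 := crC_est_sub ((i:ℤ) - μ) hf h0 hg h0' z z hz hz (fun w => hd _)
  have h2 := crC_est_sub ((i:ℤ) - μ) hf h0 hg h0' 0 0 (by simpa) (by simpa) (fun w => hd _)
  linarith

lemma crH_est_near (μ : ℕ) (c0 : ℕ → Fin n → ℂ) {f : ℂ → Fin n → ℂ} {ρ A : ℝ} (hρ : 0 ≤ ρ)
    (h0 : ∀ z, ρ < ‖z‖ → f z = 0) (hA : ∀ z, ‖f z‖ ≤ A) (i : ℕ)
    (z : ℂ) (hz : ‖z‖ ≤ ρ) : ‖crH μ c0 f i z - c0 i‖ ≤ 2 * (crKap (ρ + ρ) * A) := by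
  have e : crH μ c0 f i z - c0 i =
      crS ((i:ℤ) - μ) • (crC ((i:ℤ) - μ) f z - crC ((i:ℤ) - μ) f 0) := by
    unfold crH; simp only [smul_sub]; abel
  rw [e]
  refine (crS_mul _ _).trans ((norm_sub_le _ _).trans ?_)
  have h1 := crC_est ((i:ℤ) - μ) h0 hA z hz
  have h2 := crC_est ((i:ℤ) - μ) h0 hA 0 (by simpa)
  linarith

lemma crH_est_lip (μ : ℕ) (c0 : ℕ → Fin n → ℂ) {f : ℂ → Fin n → ℂ} {ρ : ℝ} {L : ℝ≥0}
    (hf : LipschitzWith L f) (h0 : ∀ z, ρ < ‖z‖ → f z = 0) (i : ℕ)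
    (z z' : ℂ) (hz : ‖z‖ ≤ ρ) (hz' : ‖z'‖ ≤ ρ) :
    ‖crH μ c0 f i z - crH μ c0 f i z'‖ ≤ crKap (ρ + ρ) * L * ‖z - z'‖ := by
  have e : crH μ c0 f i z - crH μ c0 f i z' =
      crS ((i:ℤ) - μ) • (crC ((i:ℤ) - μ) f z - crC ((i:ℤ) - μ) f z') := by
    unfold crH; simp only [smul_sub]; abel
  rw [e]
  refine (crS_mul _ _).trans ?_
  rw [mul_assoc]
  refine crC_est_sub ((i:ℤ) - μ) hf h0 hf h0 z z' hz hz' (fun w => ?_)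
  have := hf.dist_le_mul (z - w) (z' - w)
  rw [dist_sub_right] at this
  simpa [dist_eq_norm] using this

lemma crW_diff {H H' : ℕ → ℂ → Fin n → ℂ} {cc : ℕ → ℕ → Fin n → ℂ}
    (h1 : ∀ i, ContDiff ℝ 1 (H i)) (h2 : ∀ i z, wDv (H i) z = wDbarv (H (i+1)) z)
    (h3 : ∀ i, H i 0 = cc 0 i)
    (h1' : ∀ i, ContDiff ℝ 1 (H' i)) (h2' : ∀ i z, wDv (H' i) z = wDbarv (H' (i+1)) z)
    (h3' : ∀ i, H' i 0 = cc 0 i) {ρ D : ℝ} (hρ0 : 0 ≤ ρ) (hρ : ρ ≤ 1)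
    (hD : ∀ i z, ‖z‖ ≤ ρ → ‖H i z - H' i z‖ ≤ D) (d : ℕ) : ∀ i z, ‖z‖ ≤ ρ →
    ‖crW H cc d i z - crW H' cc d i z‖ ≤ 2 ^ d * D := by
  have hD0 : 0 ≤ D := (norm_nonneg _).trans (hD 0 0 (by simpa))
  induction d with
  | zero => intro i z hz; simpa [crW] using hD i z hz
  | succ d ih =>
    intro i z hz
    obtain ⟨-, -, -, k⟩ := crW_all h1 h2 h3 d
    obtain ⟨-, -, -, k'⟩ := crW_all h1' h2' h3' d
    have v := (crW_all h1 h2 h3 (d+1)).2.2.1 i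
    have v' := (crW_all h1' h2' h3' (d+1)).2.2.1 i
    have := (convex_closedBall (0:ℂ) ρ).norm_image_sub_le_of_norm_hasFDerivWithin_le
      (f := fun z => crW H cc (d+1) i z - crW H' cc (d+1) i z) (C := 2 * (2 ^ d * D))
      (fun x hx => ((k i x).sub (k' i x)).hasFDerivWithinAt)
      (by
        intro x hx
        have hx' : ‖x‖ ≤ ρ := by simpa using hx
        rw [← map_sub, Prod.mk_sub_mk]
        exact crLL_norm _ _ _ (ih (i+1) x hx') (ih i x hx'))
      (x := 0) (y := z) (by simpa) (by simpa using hz)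
    simp only [v, v', sub_self, sub_zero] at this
    refine this.trans ?_
    have h5 : 2 * (2 ^ d * D) = 2 ^ (d+1) * D := by ring
    rw [h5]
    exact mul_le_of_le_one_right (by positivity) (hz.trans hρ)

lemma crW_near {H : ℕ → ℂ → Fin n → ℂ} {cc : ℕ → ℕ → Fin n → ℂ}
    (h1 : ∀ i, ContDiff ℝ 1 (H i)) (h2 : ∀ i z, wDv (H i) z = wDbarv (H (i+1)) z)
    (h3 : ∀ i, H i 0 = cc 0 i) {ρ cm : ℝ} (hρ0 : 0 ≤ ρ)
    (hcm : ∀ d i, ‖cc d i‖ ≤ cm) (hρ : 2 * ρ * (cm + 1) ≤ 1)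
    (hD : ∀ i z, ‖z‖ ≤ ρ → ‖H i z - cc 0 i‖ ≤ 1) (d : ℕ) :
    (∀ i z, ‖z‖ ≤ ρ → ‖crW H cc d i z - cc d i‖ ≤ 1) ∧
    (∀ i z z', ‖z‖ ≤ ρ → ‖z'‖ ≤ ρ → ‖crW H cc (d+1) i z - crW H cc (d+1) i z'‖ ≤
      2 * (cm + 1) * ‖z - z'‖) := by
  have hcm0 : 0 ≤ cm := (norm_nonneg _).trans (hcm 0 0)
  have key : ∀ d, (∀ i z, ‖z‖ ≤ ρ → ‖crW H cc d i z - cc d i‖ ≤ 1) →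
    (∀ i z z', ‖z‖ ≤ ρ → ‖z'‖ ≤ ρ → ‖crW H cc (d+1) i z - crW H cc (d+1) i z'‖ ≤
      2 * (cm + 1) * ‖z - z'‖) := by
    intro d ih i z z' hz hz'
    obtain ⟨-, -, -, k⟩ := crW_all h1 h2 h3 d
    have hb : ∀ i x, ‖x‖ ≤ ρ → ‖crW H cc d i x‖ ≤ cm + 1 := by
      intro i x hx
      have e1 := ih i x hx
      have e2 := norm_le_norm_sub_add (crW H cc d i x) (cc d i)
      linarith [hcm d i]
    exact (convex_closedBall (0:ℂ) ρ).norm_image_sub_le_of_norm_hasFDerivWithin_le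
      (C := 2 * (cm + 1))
      (fun x hx => (k i x).hasFDerivWithinAt)
      (by
        intro x hx
        have hx' : ‖x‖ ≤ ρ := by simpa using hx
        exact crLL_norm _ _ _ (hb (i+1) x hx') (hb i x hx'))
      (x := z') (y := z) (by simpa using hz') (by simpa using hz)
  have main : ∀ i z, ‖z‖ ≤ ρ → ‖crW H cc d i z - cc d i‖ ≤ 1 := by
    induction d with
    | zero => intro i z hz; simpa [crW] using hD i z hz
    | succ d ih =>
      intro i z hz
      have v := (crW_all h1 h2 h3 (d+1)).2.2.1 i
      have := key d ih i z 0 hz (by simpa)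
      rw [v, sub_zero] at this
      nlinarith
  exact ⟨main, key d main⟩

end

noncomputable section

variable {n : ℕ}

lemma cr_cut {Z E : Type*} [NormedAddCommGroup Z] [NormedSpace ℝ Z] [FiniteDimensional ℝ Z]
    [NormedAddCommGroup E] [NormedSpace ℝ E]
    (a : Z → E) (ha : ContDiff ℝ 1 a) (x0 : Z) (r s : ℝ) (hr : 0 < r) (hrs : r < s) :
    ∃ (b : Z → E) (A Λ : ℝ≥0), (∀ x, ‖b x‖ ≤ A) ∧ LipschitzWith Λ b ∧
      (∀ x ∈ closedBall x0 r, b x = a x) ∧ (∀ x, s ≤ ‖x - x0‖ → b x = 0) ∧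
      (∀ x, ‖b x‖ ≤ ‖a x‖) := by
  let ψ : ContDiffBump x0 := ⟨r, s, hr, hrs⟩
  have hc : ContDiff ℝ 1 (fun x => ψ x • a x) := ψ.contDiff.smul ha
  have hs : HasCompactSupport (fun x => ψ x • a x) := ψ.hasCompactSupport.smul_right
  obtain ⟨Λ, hΛ⟩ := hc.lipschitzWith_of_hasCompactSupport hs (by simp)
  obtain ⟨A, hA⟩ := hs.exists_bound_of_continuous hc.continuous
  refine ⟨_, A.toNNReal, Λ, fun x => (hA x).trans (Real.le_coe_toNNReal A), hΛ, ?_, ?_, ?_⟩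
  · intro x hx
    simp only [ψ.one_of_mem_closedBall hx, one_smul]
  · intro x hx
    have : ψ x = 0 := ψ.zero_of_le_dist (by rwa [dist_eq_norm])
    simp only [this, zero_smul]
  · intro x
    rw [norm_smul, Real.norm_eq_abs, abs_of_nonneg ψ.nonneg]
    exact mul_le_of_le_one_left (norm_nonneg _) ψ.le_one

lemma cr_fix (A L : ℝ≥0) (ρ : ℝ) (G : (ℂ → Fin n → ℂ) → ℂ → Fin n → ℂ)
    (P : (ℂ → Fin n → ℂ) → Prop)
    (hP : ∀ f, P f ↔ (∀ z, ‖f z‖ ≤ A) ∧ LipschitzWith L f ∧ ∀ z, ρ < ‖z‖ → f z = 0)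
    (h1 : ∀ f, P f → P (G f))
    (h2 : ∀ f g, P f → P g → ∀ δ : ℝ, (∀ z, ‖f z - g z‖ ≤ δ) → ∀ z, ‖G f z - G g z‖ ≤ δ / 2) :
    ∃ f, P f ∧ G f = f := by
  let S : Set (BoundedContinuousFunction ℂ (Fin n → ℂ)) := {f | P f}
  have hS : IsClosed S := by
    have : S = (⋂ z, {f | ‖f z‖ ≤ A}) ∩ ((⋂ z, ⋂ z', {f | dist (f z) (f z') ≤ L * dist z z'}) ∩
        (⋂ z, {f | ρ < ‖z‖ → f z = 0})) := by
      ext f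
      simp only [S, Set.mem_ofPred_eq, hP, Set.mem_inter_iff, Set.mem_iInter,
        lipschitzWith_iff_dist_le_mul]
    rw [this]
    have hev : ∀ z : ℂ, Continuous (fun f : BoundedContinuousFunction ℂ (Fin n → ℂ) => f z) :=
      fun z => continuous_eval_const z
    refine (isClosed_iInter fun z => isClosed_le (hev z).norm continuous_const).inter
      ((isClosed_iInter fun z => isClosed_iInter fun z' =>
        isClosed_le ((hev z).dist (hev z')) continuous_const).inter
        (isClosed_iInter fun z => ?_))
    by_cases hz : ρ < ‖z‖
    · simp only [hz, forall_const]
      exact isClosed_eq (hev z) continuous_const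
    · simp [hz]
  have : CompleteSpace S := hS.completeSpace_coe
  have h00 : P (fun _ => 0) := by
    rw [hP]
    refine ⟨fun z => by simp, LipschitzWith.const' 0 |>.weaken zero_le, fun _ _ => rfl⟩
  have : Nonempty S := ⟨⟨0, h00⟩⟩
  let mk : ∀ f : ℂ → Fin n → ℂ, P f → S := fun f hf =>
    ⟨BoundedContinuousFunction.ofNormedAddCommGroup f ((hP f).1 hf).2.1.continuous A ((hP f).1 hf).1, hf⟩
  let Φ : S → S := fun f => mk (G f.1) (h1 _ f.2)
  have hΦ : ContractingWith (1/2) Φ := by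
    refine ⟨by norm_num, LipschitzWith.of_dist_le_mul fun f g => ?_⟩
    change dist (Φ f).1 (Φ g).1 ≤ _ * dist f.1 g.1
    rw [BoundedContinuousFunction.dist_le (by positivity)]
    intro z
    have := h2 f.1 g.1 f.2 g.2 (dist f.1 g.1) (fun z => by
      rw [← dist_eq_norm]; exact BoundedContinuousFunction.dist_coe_le_dist z) z
    rw [← dist_eq_norm] at this
    refine this.trans (le_of_eq ?_)
    push_cast; ring
  refine ⟨(hΦ.fixedPoint Φ).1, (hΦ.fixedPoint Φ).2, ?_⟩
  have h := hΦ.fixedPoint_isFixedPt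
  have h' : (Φ (hΦ.fixedPoint Φ)).1 = (hΦ.fixedPoint Φ).1 := congrArg Subtype.val h
  exact congrArg (fun f : BoundedContinuousFunction ℂ (Fin n → ℂ) => (f : ℂ → Fin n → ℂ)) h'

end

noncomputable section

variable {n : ℕ}

def crcc (m : ℕ) (c : Idx m → Fin n → ℂ) (d i : ℕ) : Fin n → ℂ :=
  if h : i + d < m then c ⟨(⟨i, by omega⟩, ⟨m - 1 - d - i, by omega⟩), by simp only; omega⟩ else 0

lemma crcc_norm (m : ℕ) (c : Idx m → Fin n → ℂ) (d i : ℕ) : ‖crcc m c d i‖ ≤ ‖c‖ := by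
  unfold crcc
  split_ifs
  · exact norm_le_pi_norm c _
  · simp

lemma crcc_eq (m : ℕ) (c : Idx m → Fin n → ℂ) (p : Idx m) :
    crcc m c (m - 1 - (p.1.1 : ℕ) - (p.1.2 : ℕ)) p.1.1 = c p := by
  obtain ⟨⟨⟨i, hi⟩, ⟨j, hj⟩⟩, hp⟩ := p
  simp only at hp
  unfold crcc
  simp only
  rw [dif_pos (by omega)]
  congr 4
  omega

abbrev crWf (m μ : ℕ) (c : Idx m → Fin n → ℂ) (f : ℂ → Fin n → ℂ) (d i : ℕ) : ℂ → Fin n → ℂ :=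
  crW (crH μ (crcc m c 0) f) (crcc m c) d i

def crJ (m μ : ℕ) (c : Idx m → Fin n → ℂ) (f : ℂ → Fin n → ℂ) (z : ℂ) : Idx m → Fin n → ℂ :=
  fun p => crWf m μ c f (m - 1 - (p.1.1 : ℕ) - (p.1.2 : ℕ)) p.1.1 z

lemma cr_solve (m μ : ℕ) (a : ℂ × (Idx m → Fin n → ℂ) → Fin n → ℂ)
    (ha1 : ContDiff ℝ 1 a) (c : Idx m → Fin n → ℂ) :
    ∃ (ρ : ℝ) (L : ℝ≥0) (f : ℂ → Fin n → ℂ), 0 < ρ ∧ LipschitzWith L f ∧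
      (∀ z, ρ < ‖z‖ → f z = 0) ∧ ∀ z, ‖z‖ ≤ ρ / 2 → f z = a (z, crJ m μ c f z) := by
  obtain ⟨b, A, Λ, hbA, hbΛ, hba, -, -⟩ := cr_cut a ha1 (0, c) 1 2 (by norm_num) (by norm_num)
  set cm := ‖c‖ with hcm
  have hcm0 : 0 ≤ cm := norm_nonneg _
  have hA0 : (0:ℝ) ≤ A := A.2
  have hΛ0 : (0:ℝ) ≤ Λ := Λ.2
  have hε : (0:ℝ) < 1 / (2 ^ (m+1) * ((Λ:ℝ) + 1) * (A + 1)) := by positivity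
  obtain ⟨s, hs0, hs⟩ := crKap_small _ hε
  obtain ⟨ρ, hρ0, hρ1, hρs, hρc⟩ : ∃ ρ : ℝ, 0 < ρ ∧ ρ ≤ 1 ∧ ρ + ρ ≤ s ∧ 2 * ρ * (cm + 1) ≤ 1 := by
    refine ⟨min (s/2) (min 1 (1/(2*(cm+1)))), by positivity, ?_, ?_, ?_⟩
    · exact (min_le_right _ _).trans (min_le_left _ _)
    · have := min_le_left (s/2) (min 1 (1/(2*(cm+1))))
      linarith
    · have : min (s/2) (min 1 (1/(2*(cm+1)))) ≤ 1/(2*(cm+1)) :=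
        (min_le_right _ _).trans (min_le_right _ _)
      rw [le_div_iff₀ (by positivity)] at this
      linarith
  set κ := crKap (ρ + ρ) with hκ
  have hκ0 : 0 ≤ κ := crKap_nonneg _
  have hκε := hs _ hρs
  rw [← hκ, lt_div_iff₀ (by positivity)] at hκε
  have h2m : (1:ℝ) ≤ 2 ^ m := one_le_pow₀ (by norm_num)
  have k1 : Λ * (2 ^ m * κ) ≤ 1 / 2 := by
    have : (Λ:ℝ) * (2 ^ m * κ) * 2 ≤ κ * (2 ^ (m+1) * ((Λ:ℝ) + 1) * (A + 1)) := by
      calc (Λ:ℝ) * (2 ^ m * κ) * 2 = κ * (2 ^ (m+1) * (Λ:ℝ) * 1) := by ring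
        _ ≤ _ := by gcongr <;> linarith
    linarith
  have k2 : 2 * (κ * A) ≤ 1 := by
    have : 2 * (κ * A) ≤ κ * (2 ^ (m+1) * ((Λ:ℝ) + 1) * (A + 1)) := by
      calc 2 * (κ * A) = κ * (2 * 1 * A) := by ring
        _ ≤ κ * ((2 * 2 ^ m) * ((Λ:ℝ) + 1) * (A + 1)) := by gcongr <;> linarith
        _ = _ := by ring
    linarith
  have k3 : Λ * κ ≤ 1 / 2 := by
    have : Λ * κ ≤ Λ * (2 ^ m * κ) := by
      gcongr
      exact le_mul_of_one_le_left hκ0 h2m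
    linarith
  obtain ⟨χ, -, X, -, hχX, hχ1, hχ0, hχle⟩ := cr_cut (fun _ : ℂ => (1:ℝ)) contDiff_const 0 (ρ/2) ρ
    (by positivity) (by linarith)
  simp only [norm_one, sub_zero] at hχle hχ0
  set L : ℝ≥0 := 2 * (X * A + Λ * (1 + 2 * (‖c‖₊ + 1))) with hL
  have hLr : (L : ℝ) = 2 * (X * A + Λ * (1 + 2 * (cm + 1))) := by
    rw [hL]; push_cast; rfl
  let P : (ℂ → Fin n → ℂ) → Prop := fun f =>
    (∀ z, ‖f z‖ ≤ A) ∧ LipschitzWith L f ∧ ∀ z, ρ < ‖z‖ → f z = 0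
  let G : (ℂ → Fin n → ℂ) → ℂ → Fin n → ℂ := fun f z => χ z • b (z, crJ m μ c f z)
  have hb0 : ∀ f, P f → (∀ i, ContDiff ℝ 1 (crH μ (crcc m c 0) f i)) ∧
      (∀ i z, wDv (crH μ (crcc m c 0) f i) z = wDbarv (crH μ (crcc m c 0) f (i+1)) z) ∧
      (∀ i, crH μ (crcc m c 0) f i 0 = crcc m c 0 i) := fun f hf =>
    ⟨crH_contDiff μ _ hf.2.1 hf.2.2, crH_rel μ _ hf.2.1 hf.2.2, crH_zero μ _ f⟩
  have near : ∀ f, P f → ∀ d, 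
    (∀ i z, ‖z‖ ≤ ρ → ‖crWf m μ c f d i z - crcc m c d i‖ ≤ 1) ∧
    (∀ i z z', ‖z‖ ≤ ρ → ‖z'‖ ≤ ρ → ‖crWf m μ c f (d+1) i z - crWf m μ c f (d+1) i z'‖ ≤
      2 * (cm + 1) * ‖z - z'‖) := by
    intro f hf d
    obtain ⟨e1, e2, e3⟩ := hb0 f hf
    exact crW_near e1 e2 e3 hρ0.le (crcc_norm m c) hρc
      (fun i z hz => (crH_est_near μ _ hρ0.le hf.2.2 hf.1 i z hz).trans k2) d
  have hJlip : ∀ f, P f → ∀ z z', ‖z‖ ≤ ρ → ‖z'‖ ≤ ρ →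
      ‖b (z, crJ m μ c f z) - b (z', crJ m μ c f z')‖ ≤
        Λ * ((1 + κ * L + 2 * (cm + 1)) * ‖z - z'‖) := by
    intro f hf z z' hz hz'
    rw [← dist_eq_norm]
    refine (hbΛ.dist_le_mul _ _).trans ?_
    gcongr
    rw [Prod.dist_eq, max_le_iff]
    have n0 := norm_nonneg (z - z')
    have n1 : 0 ≤ κ * L := by positivity
    constructor
    · simp only [dist_eq_norm]
      nlinarith
    · simp only
      rw [dist_pi_le_iff (by positivity)]
      intro p
      rw [dist_eq_norm]
      change ‖crWf m μ c f _ _ z - crWf m μ c f _ _ z'‖ ≤ _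
      generalize m - 1 - (p.1.1 : ℕ) - (p.1.2 : ℕ) = d
      rcases d with _ | d
      · refine (crH_est_lip μ (crcc m c 0) hf.2.1 hf.2.2 _ z z' hz hz').trans ?_
        rw [← hκ]
        gcongr; linarith
      · refine ((near f hf d).2 _ z z' hz hz').trans ?_
        gcongr; linarith
  have h1 : ∀ f, P f → P (G f) := by
    intro f hf
    refine ⟨?_, ?_, ?_⟩
    · intro z
      change ‖χ z • _‖ ≤ _
      rw [norm_smul]
      exact (mul_le_of_le_one_left (norm_nonneg _) (hχle z)).trans (hbA _)
    · have aux1 : ∀ z z', ρ ≤ ‖z'‖ → ‖G f z - G f z'‖ ≤ L * ‖z - z'‖ := by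
        intro z z' hz'
        have e : G f z - G f z' = (χ z - χ z') • b (z, crJ m μ c f z) := by
          simp only [G, hχ0 z' hz', zero_smul, sub_zero]
        rw [e, norm_smul]
        have h3 := hχX.dist_le_mul z z'
        rw [dist_eq_norm, dist_eq_norm] at h3
        calc _ ≤ X * ‖z - z'‖ * A := by gcongr; exact hbA _
          _ = (X * A) * ‖z - z'‖ := by ring
          _ ≤ _ := by
            gcongr
            rw [hLr]
            have : (0:ℝ) ≤ X * A := by positivity
            have : (0:ℝ) ≤ Λ * (1 + 2 * (cm + 1)) := by positivity
            linarith
      refine LipschitzWith.of_dist_le_mul fun z z' => ?_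
      rw [dist_eq_norm, dist_eq_norm]
      rcases le_total ρ ‖z'‖ with hz' | hz'
      · exact aux1 z z' hz'
      rcases le_total ρ ‖z‖ with hz | hz
      · rw [norm_sub_rev, norm_sub_rev z]
        exact aux1 z' z hz
      have e : G f z - G f z' = (χ z - χ z') • b (z, crJ m μ c f z) +
          χ z' • (b (z, crJ m μ c f z) - b (z', crJ m μ c f z')) := by
        simp only [G, sub_smul, smul_sub]; abel
      rw [e]
      refine (norm_add_le _ _).trans ?_
      rw [norm_smul, norm_smul]
      have h3 := hχX.dist_le_mul z z'
      rw [dist_eq_norm, dist_eq_norm] at h3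
      have h4 := hJlip f hf z z' hz hz'
      calc _ ≤ X * ‖z - z'‖ * A + 1 * (Λ * ((1 + κ * L + 2 * (cm + 1)) * ‖z - z'‖)) := by
            gcongr
            · exact hbA _
            · exact hχle _
        _ = (X * A + Λ * (1 + 2 * (cm + 1)) + (Λ * κ) * L) * ‖z - z'‖ := by ring
        _ ≤ L * ‖z - z'‖ := by
            gcongr
            have : (Λ * κ) * L ≤ 1 / 2 * L := by gcongr
            linarith
    · intro z hz
      simp only [G, hχ0 z hz.le, zero_smul]
  have h2 : ∀ f g, P f → P g → ∀ δ : ℝ, (∀ z, ‖f z - g z‖ ≤ δ) → ∀ z, ‖G f z - G g z‖ ≤ δ / 2 := by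
    intro f g hf hg δ hδ z
    have hδ0 : 0 ≤ δ := (norm_nonneg _).trans (hδ 0)
    rcases le_total ρ ‖z‖ with hz | hz
    · simp only [G, hχ0 z hz, zero_smul, sub_zero, norm_zero]
      positivity
    have e : G f z - G g z = χ z • (b (z, crJ m μ c f z) - b (z, crJ m μ c g z)) := by
      simp only [G, smul_sub]
    rw [e, norm_smul]
    refine (mul_le_of_le_one_left (norm_nonneg _) (hχle z)).trans ?_
    rw [← dist_eq_norm]
    refine (hbΛ.dist_le_mul _ _).trans ?_
    have : dist (z, crJ m μ c f z) (z, crJ m μ c g z) ≤ 2 ^ m * κ * δ := by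
      rw [Prod.dist_eq, max_le_iff]
      constructor
      · simp only [dist_self]; positivity
      · simp only
        rw [dist_pi_le_iff (by positivity)]
        intro p
        rw [dist_eq_norm]
        change ‖crWf m μ c f _ _ z - crWf m μ c g _ _ z‖ ≤ _
        obtain ⟨e1, e2, e3⟩ := hb0 f hf
        obtain ⟨e1', e2', e3'⟩ := hb0 g hg
        refine (crW_diff e1 e2 e3 e1' e2' e3' hρ0.le hρ1 (fun i z hz =>
          crH_est_f μ _ hρ0.le hf.2.1 hf.2.2 hg.2.1 hg.2.2 hδ i z hz) _ _ z hz).trans ?_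
        rw [← hκ]
        have hp := p.2
        have : m - 1 - (p.1.1 : ℕ) - (p.1.2 : ℕ) + 1 ≤ m := by omega
        calc (2:ℝ) ^ (m - 1 - (p.1.1 : ℕ) - (p.1.2 : ℕ)) * (2 * (κ * δ)) =
            2 ^ (m - 1 - (p.1.1 : ℕ) - (p.1.2 : ℕ) + 1) * κ * δ := by ring
          _ ≤ _ := by
            gcongr
            norm_num
    calc _ ≤ Λ * (2 ^ m * κ * δ) := by gcongr
      _ = Λ * (2 ^ m * κ) * δ := by ring
      _ ≤ 1 / 2 * δ := by gcongr
      _ = _ := by ring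
  obtain ⟨f, hf, hGf⟩ := cr_fix A L ρ G P (fun f => Iff.rfl) h1 h2
  refine ⟨ρ, L, f, hρ0, hf.2.1, hf.2.2, ?_⟩
  intro z hz
  have hzρ : ‖z‖ ≤ ρ := by linarith
  have e1 : f z = χ z • b (z, crJ m μ c f z) := (congrFun hGf z).symm
  rw [hχ1 z (by simpa using hz), one_smul, hba] at e1
  · exact e1
  · rw [mem_closedBall, Prod.dist_eq, max_le_iff]
    constructor
    · simp only [dist_zero_right]; linarith
    · simp only
      rw [dist_pi_le_iff (by norm_num)]
      intro p
      rw [dist_eq_norm, ← crcc_eq m c p]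
      exact (near f hf _).1 _ z hzρ

end

noncomputable section

variable {n : ℕ}

lemma HolV_lt_top {α M : ℝ} (hα : 0 < α) {A : Set ℂ} {F : ℂ → Fin n → ℂ}
    (h : ∀ z ∈ A, ∀ z' ∈ A, ‖F z - F z'‖ ≤ M * ‖z - z'‖ ^ α) : HolV α A F < ⊤ := by
  refine lt_of_le_of_lt (b := (Real.toNNReal M : ℝ≥0∞)) ?_ ENNReal.coe_lt_top
  unfold HolV
  refine iSup₂_le fun z hz => iSup₂_le fun z' hz' => iSup_le fun _ => ?_
  apply ENNReal.div_le_of_le_mul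
  rw [← ENNReal.coe_rpow_of_nonneg _ hα.le, ← ENNReal.coe_mul, ENNReal.coe_le_coe, ← NNReal.coe_le_coe]
  push_cast
  refine (h z hz z' hz').trans ?_
  gcongr
  exact Real.le_coe_toNNReal M

lemma wDv_lin_bound (T T' : ℂ →L[ℝ] (Fin n → ℂ)) :
    ‖(2:ℂ)⁻¹ • (T 1 - I • T I) - (2:ℂ)⁻¹ • (T' 1 - I • T' I)‖ ≤ ‖T - T'‖ ∧
    ‖(2:ℂ)⁻¹ • (T 1 + I • T I) - (2:ℂ)⁻¹ • (T' 1 + I • T' I)‖ ≤ ‖T - T'‖ := by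
  have b1 : ‖(T - T') 1‖ ≤ ‖T - T'‖ := by simpa using (T - T').le_opNorm 1
  have b2 : ‖I • (T - T') I‖ ≤ ‖T - T'‖ := by
    rw [norm_smul]; simpa using (T - T').le_opNorm I
  have e1 : (2:ℂ)⁻¹ • (T 1 - I • T I) - (2:ℂ)⁻¹ • (T' 1 - I • T' I) =
      (2:ℂ)⁻¹ • ((T - T') 1 - I • (T - T') I) := by
    simp only [sub_apply]; module
  have e2 : (2:ℂ)⁻¹ • (T 1 + I • T I) - (2:ℂ)⁻¹ • (T' 1 + I • T' I) =
      (2:ℂ)⁻¹ • ((T - T') 1 + I • (T - T') I) := by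
    simp only [sub_apply]; module
  rw [e1, e2, norm_smul, norm_smul]
  have h2 : ‖(2:ℂ)⁻¹‖ = 2⁻¹ := by simp
  rw [h2]
  have := norm_sub_le ((T - T') 1) (I • (T - T') I)
  have := norm_add_le ((T - T') 1) (I • (T - T') I)
  constructor <;> linarith

lemma crH_holV {α : ℝ} (hα : α ∈ Set.Ioo (0:ℝ) 1) (μ : ℕ) (c0 : ℕ → Fin n → ℂ)
    {f : ℂ → Fin n → ℂ} {ρ : ℝ} {L : ℝ≥0}
    (hf : LipschitzWith L f) (h0 : ∀ z, ρ < ‖z‖ → f z = 0) (i : ℕ) (r : ℝ) :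
    HolV α (closedBall (0:ℂ) r) (wDv (crH μ c0 f i)) < ⊤ ∧
    HolV α (closedBall (0:ℂ) r) (wDbarv (crH μ c0 f i)) < ⊤ := by
  obtain ⟨M, hM, hh⟩ := crD_holder hα ((i:ℤ) - μ) hf h0 r
  have key : ∀ z ∈ closedBall (0:ℂ) r, ∀ z' ∈ closedBall (0:ℂ) r,
      ‖fderiv ℝ (crH μ c0 f i) z - fderiv ℝ (crH μ c0 f i) z'‖ ≤ M * ‖z - z'‖ ^ α := by
    intro z hz z' hz'
    rw [(crH_fderiv μ c0 hf h0 i z).fderiv, (crH_fderiv μ c0 hf h0 i z').fderiv]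
    refine le_trans ?_ (hh z hz z' hz')
    refine ContinuousLinearMap.opNorm_le_bound _ (norm_nonneg _) fun v => ?_
    have e : (crS ((i:ℤ) - μ) • crD ((i:ℤ) - μ) f z - crS ((i:ℤ) - μ) • crD ((i:ℤ) - μ) f z') v =
        crS ((i:ℤ) - μ) • ((crD ((i:ℤ) - μ) f z - crD ((i:ℤ) - μ) f z') v) := by
      simp only [sub_apply, smul_sub]
      rfl
    rw [e, norm_smul]
    exact (mul_le_of_le_one_left (norm_nonneg _) (crS_norm _)).trans (ContinuousLinearMap.le_opNorm _ _)
  exact ⟨HolV_lt_top hα.1 fun z hz z' hz' => (wDv_lin_bound _ _).1.trans (key z hz z' hz'),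
    HolV_lt_top hα.1 fun z hz z' hz' => (wDv_lin_bound _ _).2.trans (key z hz z' hz')⟩

lemma crW_jet {H : ℕ → ℂ → Fin n → ℂ} {cc : ℕ → ℕ → Fin n → ℂ}
    (h1 : ∀ i, ContDiff ℝ 1 (H i)) (h2 : ∀ i z, wDv (H i) z = wDbarv (H (i+1)) z)
    (h3 : ∀ i, H i 0 = cc 0 i) (N : ℕ) (i j : ℕ) (hij : i + j ≤ N) :
    wDijv i j (crW H cc N 0) = crW H cc (N - i - j) i := by
  have hb : ∀ j ≤ N, wDbarv^[j] (crW H cc N 0) = crW H cc (N - j) 0 := by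
    intro j
    induction j with
    | zero => intro _; rfl
    | succ j ih =>
      intro hj
      rw [Function.iterate_succ_apply', ih (by omega)]
      obtain ⟨d, hd⟩ : ∃ d, N - j = d + 1 := ⟨N - j - 1, by omega⟩
      rw [hd, show N - (j+1) = d by omega]
      funext z
      exact (wDv_of ((crW_all h1 h2 h3 d).2.2.2 0 z)).2
  unfold wDijv
  rw [hb j (by omega)]
  induction i with
  | zero => rfl
  | succ i ih =>
    rw [Function.iterate_succ_apply', ih (by omega)]
    obtain ⟨d, hd⟩ : ∃ d, N - i - j = d + 1 := ⟨N - i - j - 1, by omega⟩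
    rw [hd, show N - (i+1) - j = d by omega]
    funext z
    exact (wDv_of ((crW_all h1 h2 h3 d).2.2.2 i z)).1

end

/-- local existence for nonlinear systems
`∂^μ∂̄^ν u = a(z, (∂^i∂̄^j u)_{i+j≤m−1})` of Cauchy–Riemann operators of order
`m = μ + ν`, with prescribed derivatives of order `≤ m − 1` at the origin, the
right-hand side `a` being `C^1` with first derivatives locally `α`-Hölder. -/
theorem local_existence_CR_system (α : ℝ) (hα : α ∈ Set.Ioo (0:ℝ) 1)
    (n m μ ν : ℕ) (hn : 1 ≤ n) (hm : 1 ≤ m) (hμν : μ + ν = m)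
    (a : ℂ × (Idx m → Fin n → ℂ) → Fin n → ℂ)
    (ha1 : ContDiff ℝ 1 a)
    (ha2 : ∀ s : Set (ℂ × (Idx m → Fin n → ℂ)), Bornology.IsBounded s →
      ∃ M : ℝ, ∀ p ∈ s, ∀ q ∈ s, ‖fderiv ℝ a p - fderiv ℝ a q‖ ≤ M * ‖p - q‖ ^ α)
    (c : Idx m → Fin n → ℂ) :
    ∃ R : ℝ, 0 < R ∧ ∃ u : ℂ → Fin n → ℂ,
      (∃ U : Set ℂ, IsOpen U ∧ closedBall (0:ℂ) R ⊆ U ∧ ContDiffOn ℝ m u U) ∧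
      (∀ i j : ℕ, i + j = m → HolV α (closedBall (0:ℂ) R) (wDijv i j u) < ⊤) ∧
      (∀ z ∈ closedBall (0:ℂ) R,
        wDijv μ ν u z = a (z, fun p => wDijv (p.1.1 : ℕ) (p.1.2 : ℕ) u z)) ∧
      (∀ p : Idx m, wDijv (p.1.1 : ℕ) (p.1.2 : ℕ) u 0 = c p) := by
  obtain ⟨ρ, L, f, hρ, hf, h0, hsol⟩ := cr_solve m μ a ha1 c
  have h1 := crH_contDiff μ (crcc m c 0) hf h0
  have h2 := crH_rel μ (crcc m c 0) hf h0
  have h3 := crH_zero μ (crcc m c 0) f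
  have hjet := crW_jet (cc := crcc m c) h1 h2 h3 (m - 1)
  have htop1 : ∀ i j, i + 1 + j = m →
      wDijv (i+1) j (crWf m μ c f (m-1) 0) = wDv (crH μ (crcc m c 0) f i) := by
    intro i j hij
    have := hjet i j (by omega)
    rw [show m - 1 - i - j = 0 by omega] at this
    change wDv^[i+1] _ = _
    rw [Function.iterate_succ_apply']
    exact congrArg wDv this
  have htop0 : wDijv 0 m (crWf m μ c f (m-1) 0) = wDbarv (crH μ (crcc m c 0) f 0) := by
    obtain ⟨k, rfl⟩ : ∃ k, m = k + 1 := ⟨m - 1, by omega⟩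
    have := hjet 0 k (by omega)
    rw [show k + 1 - 1 - 0 - k = 0 by omega] at this
    change wDbarv^[k+1] _ = _
    rw [Function.iterate_succ_apply']
    exact congrArg wDbarv this
  refine ⟨ρ / 2, by positivity, crWf m μ c f (m-1) 0, ⟨Set.univ, isOpen_univ, Set.subset_univ _, ?_⟩,
    ?_, ?_, ?_⟩
  · have := (crW_all (cc := crcc m c) h1 h2 h3 (m-1)).1 0
    have e : (((m - 1 : ℕ) : WithTop ℕ∞) + 1) = (m : WithTop ℕ∞) := by
      have : ((m - 1 + 1 : ℕ) : WithTop ℕ∞) = (m : WithTop ℕ∞) := by rw [Nat.sub_add_cancel hm]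
      rw [← this]; push_cast; rfl
    rw [e] at this
    exact this.contDiffOn
  · intro i j hij
    rcases i with _ | i
    · obtain rfl : j = m := by omega
      rw [htop0]
      exact (crH_holV hα _ _ hf h0 _ _).2
    · rw [htop1 i j hij]
      exact (crH_holV hα _ _ hf h0 _ _).1
  · intro z hz
    have hj : (fun p : Idx m => wDijv (p.1.1 : ℕ) (p.1.2 : ℕ) (crWf m μ c f (m-1) 0) z) =
        crJ m μ c f z := by
      funext p
      have := p.2
      exact congrFun (hjet p.1.1 p.1.2 (by omega)) z
    rw [hj, ← hsol z (by simpa using hz)]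
    rcases μ with _ | μ
    · obtain rfl : ν = m := by omega
      rw [htop0, (crH_wD 0 _ hf h0 0 z).2]
      simpa using (crC_main0 hf h0 z).2
    · rw [htop1 μ ν hμν, (crH_wD (μ+1) _ hf h0 μ z).1,
        show ((μ:ℤ) - ((μ + 1 : ℕ) : ℤ)) = -1 by push_cast; ring]
      exact (crC_main0 hf h0 z).1
  · intro p
    have := p.2
    rw [show wDijv (p.1.1 : ℕ) (p.1.2 : ℕ) (crWf m μ c f (m-1) 0) 0 = _ from
      congrFun (hjet p.1.1 p.1.2 (by omega)) 0]
    rw [(crW_all (cc := crcc m c) h1 h2 h3 _).2.2.1]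
    exact crcc_eq m c p
end

section
/- Let α ∈ (0,1), let n ≥ 1 be an integer, and let a : ℂ × ℂⁿ → ℂⁿ be continuously differentiable (in the real sense) and such that on every bounded subset of ℂ × ℂⁿ its first-order partial derivatives have finite α-Hölder constant. Then for every vector c ∈ ℂⁿ there exist R > 0 and a map u : ℂ → ℂⁿ which is continuously differentiable on a neighborhood of the closed disk D = {z ∈ ℂ : |z| ≤ R}, whose first-order Wirtinger derivatives ∂u and ∂̄u have finite α-Hölder constant on D, such that ∂̄u(z) = a(z, u(z)) for all z ∈ D and u(0) = c. -/
open Complex MeasureTheory Metric ENNReal NNReal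

/-- The Cauchy kernel. -/
noncomputable def cK (w : ℂ) : ℂ := ((Real.pi : ℂ) * w)⁻¹

/-- The Cauchy transform. -/
noncomputable def cT {F : Type*} [NormedAddCommGroup F] [NormedSpace ℂ F] (f : ℂ → F) (z : ℂ) : F :=
  ∫ w, cK w • f (z - w)

theorem cK_norm (w : ℂ) : ‖cK w‖ = Real.pi⁻¹ * ‖w‖⁻¹ := by
  simp [cK, abs_of_pos Real.pi_pos, mul_comm]

theorem cK_meas : Measurable cK := by unfold cK; fun_prop

theorem cK_loc : LocallyIntegrable cK volume := by
  refine locallyIntegrable_of_norm_le_rpow (C := Real.pi⁻¹) (α := 1) (by simp) (by simp) ?_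
    cK_meas.aestronglyMeasurable
  filter_upwards with w
  rw [cK_norm, Real.rpow_neg_one]

theorem cK_int0 {ρ : ℝ} (hρ : 0 < ρ) : ∫ w in closedBall (0:ℂ) ρ, ‖cK w‖ = 2 * ρ := by
  have h := integral_fun_norm_addHaar (volume : Measure ℂ)
    (fun y : ℝ => (Set.Iic ρ).indicator (fun y => Real.pi⁻¹ * y⁻¹) y)
  have h1 : ∫ w in closedBall (0:ℂ) ρ, ‖cK w‖ =
      ∫ w : ℂ, (Set.Iic ρ).indicator (fun y => Real.pi⁻¹ * y⁻¹) ‖w‖ := by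
    rw [← integral_indicator measurableSet_closedBall]
    congr 1; ext w
    simp [Set.indicator, cK_norm]
  rw [h1, h]
  have h2 : ∫ y in Set.Ioi (0:ℝ), y ^ (Module.finrank ℝ ℂ - 1) •
      (Set.Iic ρ).indicator (fun y => Real.pi⁻¹ * y⁻¹) y =
      ∫ y in Set.Ioi (0:ℝ), (Set.Iic ρ).indicator (fun _ => Real.pi⁻¹) y := by
    refine setIntegral_congr_fun measurableSet_Ioi fun y hy => ?_
    have : (0:ℝ) < y := hy
    by_cases h : y ≤ ρ
    · simp [h, Complex.finrank_real_complex]; field_simp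
    · simp [h]
  rw [h2, setIntegral_indicator measurableSet_Iic, Set.Ioi_inter_Iic]
  simp [Measure.real, Complex.volume_ball, hρ.le]
  field_simp

theorem cK_intOn (z : ℂ) (ρ : ℝ) : IntegrableOn cK (closedBall z ρ) :=
  cK_loc.integrableOn_isCompact (isCompact_closedBall _ _)

theorem cK_int {ρ : ℝ} (hρ : 0 < ρ) (z : ℂ) : ∫ w in closedBall z ρ, ‖cK w‖ ≤ 3 * ρ := by
  rw [← integral_indicator measurableSet_closedBall]
  have hc : IntegrableOn (fun _ : ℂ => Real.pi⁻¹ * ρ⁻¹) (closedBall z ρ) := by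
    refine integrableOn_const (by simp [Complex.volume_closedBall, ENNReal.mul_eq_top]) 
  have key : ∫ w, (closedBall z ρ).indicator (fun w => ‖cK w‖) w ≤
      ∫ w, ((closedBall (0:ℂ) ρ).indicator (fun w => ‖cK w‖) w +
        (closedBall z ρ).indicator (fun _ => Real.pi⁻¹ * ρ⁻¹) w) := by
    refine integral_mono (IntegrableOn.integrable_indicator (cK_intOn z ρ).norm measurableSet_closedBall)
      ((IntegrableOn.integrable_indicator (cK_intOn 0 ρ).norm measurableSet_closedBall).add
      (hc.integrable_indicator measurableSet_closedBall)) ?_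
    intro w
    have hp := Real.pi_pos
    by_cases h1 : w ∈ closedBall z ρ <;> by_cases h2 : w ∈ closedBall (0:ℂ) ρ
    · simp only [Set.indicator_of_mem h1, Set.indicator_of_mem h2]
      have : 0 ≤ Real.pi⁻¹ * ρ⁻¹ := by positivity
      linarith
    · simp only [Set.indicator_of_mem h1, Set.indicator_of_notMem h2, zero_add, cK_norm]
      have : ρ ≤ ‖w‖ := by simp at h2; exact h2.le
      gcongr
    · simp only [Set.indicator_of_notMem h1, Set.indicator_of_mem h2]; positivity
    · simp only [Set.indicator_of_notMem h1, Set.indicator_of_notMem h2]; simp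
  refine key.trans ?_
  rw [integral_add (IntegrableOn.integrable_indicator (cK_intOn 0 ρ).norm measurableSet_closedBall)
      (hc.integrable_indicator measurableSet_closedBall),
    integral_indicator measurableSet_closedBall, integral_indicator measurableSet_closedBall,
    cK_int0 hρ]
  simp [Measure.real, Complex.volume_closedBall, hρ.le]
  have := Real.pi_pos
  apply le_of_eq
  field_simp
  ring

section
variable {F : Type*} [NormedAddCommGroup F] [NormedSpace ℂ F]

theorem cs_of {f : ℂ → F} {ρ : ℝ} (hs : ∀ z, ρ < ‖z‖ → f z = 0) : HasCompactSupport f :=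
  HasCompactSupport.intro (isCompact_closedBall (0:ℂ) ρ) (fun z hz => hs z (by simpa using hz))

theorem cT_eq_conv (f : ℂ → F) :
    cT f = convolution cK f (ContinuousLinearMap.lsmul ℝ ℂ) volume := by
  ext z; simp [cT, convolution]

theorem cT_integrable {f : ℂ → F} {ρ : ℝ} (hf : Continuous f) (hs : ∀ z, ρ < ‖z‖ → f z = 0) (z : ℂ) :
    Integrable (fun w => cK w • f (z - w)) := by
  have := (cs_of hs).convolutionExists_right (ContinuousLinearMap.lsmul ℝ ℂ) cK_loc hf z
  simpa [ConvolutionExistsAt] using this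

theorem cT_bound {f : ℂ → F} {ρ M : ℝ} (hρ : 0 < ρ)
    (hs : ∀ z, ρ < ‖z‖ → f z = 0) (hM : ∀ z, ‖f z‖ ≤ M) (z : ℂ) : ‖cT f z‖ ≤ 3 * ρ * M := by
  have hM0 : 0 ≤ M := (norm_nonneg _).trans (hM 0)
  calc ‖cT f z‖ ≤ ∫ w, (closedBall z ρ).indicator (fun w => ‖cK w‖ * M) w := by
        refine norm_integral_le_of_norm_le
          (IntegrableOn.integrable_indicator ((cK_intOn z ρ).norm.mul_const M)
            measurableSet_closedBall) ?_
        filter_upwards with w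
        by_cases h : w ∈ closedBall z ρ
        · rw [Set.indicator_of_mem h, norm_smul]
          gcongr; exact hM _
        · rw [Set.indicator_of_notMem h, hs, smul_zero, norm_zero]
          rw [mem_closedBall, dist_comm, dist_eq_norm] at h
          exact not_le.mp h
    _ = (∫ w in closedBall z ρ, ‖cK w‖) * M := by
        rw [integral_indicator measurableSet_closedBall, integral_mul_const]
    _ ≤ 3 * ρ * M := by gcongr; exact cK_int hρ z

theorem cT_sub {f g : ℂ → F} {ρ : ℝ} (hf : Continuous f) (hs : ∀ z, ρ < ‖z‖ → f z = 0)
    (hg : Continuous g) (hs' : ∀ z, ρ < ‖z‖ → g z = 0) (z : ℂ) :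
    cT f z - cT g z = cT (fun z => f z - g z) z := by
  unfold cT
  rw [← integral_sub (cT_integrable hf hs z) (cT_integrable hg hs' z)]
  simp [smul_sub]

theorem cT_cont {f : ℂ → F} {ρ : ℝ} (hf : Continuous f) (hs : ∀ z, ρ < ‖z‖ → f z = 0) :
    Continuous (cT f) := by
  rw [cT_eq_conv]
  exact (cs_of hs).continuous_convolution_right _ cK_loc hf

theorem fderiv_supp {f : ℂ → F} {ρ : ℝ} (hs : ∀ z, ρ < ‖z‖ → f z = 0) :
    ∀ z, ρ < ‖z‖ → fderiv ℝ f z = 0 := by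
  intro z hz
  have : f =ᶠ[nhds z] fun _ => 0 := by
    filter_upwards [(isOpen_lt continuous_const continuous_norm).mem_nhds hz] with w hw
    exact hs w hw
  rw [this.fderiv_eq]; simp

theorem cT_hasFDerivAt {f : ℂ → F} {ρ : ℝ} (hf : ContDiff ℝ 1 f) (hs : ∀ z, ρ < ‖z‖ → f z = 0)
    (z : ℂ) : HasFDerivAt (cT f) (cT (fderiv ℝ f) z) z := by
  have := (cs_of hs).hasFDerivAt_convolution_right (ContinuousLinearMap.lsmul ℝ ℂ) cK_loc hf z
  rw [cT_eq_conv]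
  have e : convolution cK (fderiv ℝ f)
      (ContinuousLinearMap.precompR ℂ (ContinuousLinearMap.lsmul ℝ ℂ)) volume z =
      cT (fderiv ℝ f) z :=
    integral_congr_ae (Filter.Eventually.of_forall fun w => by ext v; rfl)
  rw [← e]
  exact this

theorem cT_fderiv_apply {f : ℂ → F} {ρ : ℝ} (hf : ContDiff ℝ 1 f) (hs : ∀ z, ρ < ‖z‖ → f z = 0)
    (z v : ℂ) : cT (fderiv ℝ f) z v = cT (fun w => fderiv ℝ f w v) z := by
  unfold cT
  rw [ContinuousLinearMap.integral_apply
    (cT_integrable (hf.continuous_fderiv one_ne_zero) (fderiv_supp hs) z)]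
  rfl

end


theorem cK_diff_aux {α : ℝ} (hα : α ∈ Set.Ioo (0:ℝ) 1) {a b : ℂ} (ha : a ≠ 0) (hb : b ≠ 0)
    (hab : ‖a‖ ≤ ‖b‖) : ‖a⁻¹ - b⁻¹‖ ≤ 2 * ‖a - b‖ ^ α * ‖a‖ ^ (-(1 + α)) := by
  obtain ⟨h0, h1⟩ := hα
  have pa : 0 < ‖a‖ := norm_pos_iff.2 ha
  have pb : 0 < ‖b‖ := norm_pos_iff.2 hb
  have e : ‖a⁻¹ - b⁻¹‖ = ‖a - b‖ * ‖a‖⁻¹ * ‖b‖⁻¹ := by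
    rw [inv_sub_inv ha hb, norm_div, norm_mul, norm_sub_rev]; field_simp
  by_cases h : a = b
  · subst h; simp; positivity
  have pd : 0 < ‖a - b‖ := norm_pos_iff.2 (sub_ne_zero.2 h)
  have d2 : ‖a - b‖ ≤ 2 * ‖b‖ := (norm_sub_le _ _).trans (by linarith)
  have s1 : ‖a - b‖ ^ (1 - α) ≤ 2 * ‖b‖ ^ (1 - α) := by
    calc _ ≤ (2 * ‖b‖) ^ (1 - α) := by gcongr
      _ = 2 ^ (1 - α) * ‖b‖ ^ (1 - α) := Real.mul_rpow (by norm_num) pb.le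
      _ ≤ _ := by
        gcongr
        calc (2:ℝ) ^ (1 - α) ≤ 2 ^ (1:ℝ) := Real.rpow_le_rpow_of_exponent_le (by norm_num) (by linarith)
          _ = 2 := by simp
  have s2 : ‖a - b‖ = ‖a - b‖ ^ α * ‖a - b‖ ^ (1 - α) := by
    rw [← Real.rpow_add pd]; simp
  have s3 : ‖b‖ ^ (1 - α) * ‖b‖⁻¹ = ‖b‖ ^ (-α) := by
    rw [← Real.rpow_neg_one, ← Real.rpow_add pb]; congr 1; ring
  have s4 : ‖b‖ ^ (-α) ≤ ‖a‖ ^ (-α) := Real.rpow_le_rpow_of_nonpos pa hab (by linarith)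
  have s5 : ‖a‖ ^ (-(1 + α)) = ‖a‖⁻¹ * ‖a‖ ^ (-α) := by
    rw [← Real.rpow_neg_one, ← Real.rpow_add pa]; congr 1; ring
  calc ‖a⁻¹ - b⁻¹‖ = ‖a - b‖ ^ α * ‖a - b‖ ^ (1 - α) * ‖a‖⁻¹ * ‖b‖⁻¹ := by rw [← s2, e]
    _ ≤ ‖a - b‖ ^ α * (2 * ‖b‖ ^ (1 - α)) * ‖a‖⁻¹ * ‖b‖⁻¹ := by gcongr
    _ = 2 * ‖a - b‖ ^ α * (‖a‖⁻¹ * (‖b‖ ^ (1 - α) * ‖b‖⁻¹)) := by ring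
    _ ≤ 2 * ‖a - b‖ ^ α * (‖a‖⁻¹ * ‖a‖ ^ (-α)) := by rw [s3]; gcongr
    _ = _ := by rw [s5]

theorem inv_diff {α : ℝ} (hα : α ∈ Set.Ioo (0:ℝ) 1) (a b : ℂ) :
    ‖a⁻¹ - b⁻¹‖ ≤ 2 * ‖a - b‖ ^ α * (‖a‖ ^ (-(1 + α)) + ‖b‖ ^ (-(1 + α))) := by
  have key : ∀ b : ℂ, ‖b‖⁻¹ ≤ 2 * ‖b‖ ^ α * ‖b‖ ^ (-(1 + α)) := by
    intro b
    by_cases hb : b = 0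
    · subst hb; simp; positivity
    have pb : 0 < ‖b‖ := norm_pos_iff.2 hb
    rw [mul_assoc, ← Real.rpow_add pb]
    have : α + -(1 + α) = -1 := by ring
    rw [this, Real.rpow_neg_one]
    have : 0 < ‖b‖⁻¹ := by positivity
    linarith
  have z0 : (0:ℝ) ^ (-(1 + α)) = 0 := Real.zero_rpow (by linarith [hα.1])
  by_cases ha : a = 0
  · subst ha
    simpa only [_root_.inv_zero, zero_sub, norm_neg, norm_inv, norm_zero, z0, zero_add] using key b
  by_cases hb : b = 0
  · subst hb
    simpa only [_root_.inv_zero, sub_zero, norm_inv, norm_zero, z0, add_zero] using key a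
  rcases le_total ‖a‖ ‖b‖ with h | h
  · refine (cK_diff_aux hα ha hb h).trans ?_
    gcongr
    simp; positivity
  · rw [norm_sub_rev, norm_sub_rev a b]
    refine (cK_diff_aux hα hb ha h).trans ?_
    gcongr
    simp; positivity

theorem cK_diff {α : ℝ} (hα : α ∈ Set.Ioo (0:ℝ) 1) (a b : ℂ) :
    ‖cK a - cK b‖ ≤ 2 * ‖a - b‖ ^ α * (‖a‖ ^ (-(1 + α)) + ‖b‖ ^ (-(1 + α))) := by
  have e : cK a - cK b = (Real.pi : ℂ)⁻¹ * (a⁻¹ - b⁻¹) := by simp [cK]; ring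
  rw [e, norm_mul]
  have : ‖(Real.pi : ℂ)⁻¹‖ ≤ 1 := by
    simp [abs_of_pos Real.pi_pos]
    exact inv_le_one_of_one_le₀ (by linarith [Real.pi_gt_three])
  calc _ ≤ 1 * ‖a⁻¹ - b⁻¹‖ := by gcongr
    _ ≤ _ := by rw [one_mul]; exact inv_diff hα a b

theorem pw_loc {β : ℝ} (hβ : β < 2) : LocallyIntegrable (fun w : ℂ => ‖w‖ ^ (-β)) volume := by
  refine locallyIntegrable_of_norm_le_rpow (C := 1) (α := β) (by simp)
    (by simpa using hβ) ?_ (by apply Measurable.aestronglyMeasurable; fun_prop)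
  filter_upwards with w
  rw [Real.norm_of_nonneg (by positivity), one_mul]

theorem pw_shift {β : ℝ} (hβ : β < 2) (z : ℂ) (ρ : ℝ) :
    IntegrableOn (fun w : ℂ => ‖z - w‖ ^ (-β)) (closedBall 0 ρ) := by
  have h := ((pw_loc hβ).integrableOn_isCompact
    (isCompact_closedBall z ρ)).integrable_indicator measurableSet_closedBall
  rw [← integrable_indicator_iff measurableSet_closedBall]
  refine (h.comp_sub_left z).congr (Filter.Eventually.of_forall fun w => ?_)
  simp [Set.indicator]

theorem pw_bound {β : ℝ} (hβ : β < 2) {z : ℂ} {R ρ : ℝ} (hz : ‖z‖ ≤ R) :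
    ∫ w in closedBall 0 ρ, ‖z - w‖ ^ (-β) ≤ ∫ w in closedBall (0:ℂ) (R + ρ), ‖w‖ ^ (-β) := by
  have e : ∫ w in closedBall 0 ρ, ‖z - w‖ ^ (-β) = ∫ w in closedBall z ρ, ‖w‖ ^ (-β) := by
    rw [← integral_indicator measurableSet_closedBall, ← integral_indicator measurableSet_closedBall,
      ← integral_sub_left_eq_self ((closedBall z ρ).indicator fun w => ‖w‖ ^ (-β)) volume z]
    congr 1; ext w
    simp [Set.indicator]
  rw [e]
  refine setIntegral_mono_set ((pw_loc hβ).integrableOn_isCompact (isCompact_closedBall _ _)) ?_ ?_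
  · filter_upwards with w; simp; positivity
  · refine Filter.Eventually.of_forall (closedBall_subset_closedBall' ?_)
    simp; linarith

theorem cT_holder {F : Type*} [NormedAddCommGroup F] [NormedSpace ℂ F] {α : ℝ}
    (hα : α ∈ Set.Ioo (0:ℝ) 1) {f : ℂ → F} {ρ M R : ℝ}
    (hf : Continuous f) (hs : ∀ z, ρ < ‖z‖ → f z = 0) (hM : ∀ z, ‖f z‖ ≤ M) :
    ∃ C : ℝ, ∀ z ∈ closedBall (0:ℂ) R, ∀ z' ∈ closedBall (0:ℂ) R,
      ‖cT f z - cT f z'‖ ≤ C * ‖z - z'‖ ^ α := by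
  set J := ∫ w in closedBall (0:ℂ) (R + ρ), ‖w‖ ^ (-(1 + α)) with hJ
  have hM0 : 0 ≤ M := (norm_nonneg _).trans (hM 0)
  have hβ : 1 + α < 2 := by linarith [hα.2]
  have e : ∀ z, cT f z = ∫ w, cK (z - w) • f w := by
    intro z
    unfold cT
    rw [← integral_sub_left_eq_self (fun w => cK w • f (z - w)) volume z]
    simp
  have i : ∀ z, Integrable (fun w => cK (z - w) • f w) := by
    intro z
    simpa using (cT_integrable hf hs z).comp_sub_left z
  refine ⟨2 * M * (J + J), fun z hz z' hz' => ?_⟩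
  rw [e, e, ← integral_sub (i z) (i z')]
  have I1 := pw_shift hβ z ρ
  have I2 := pw_shift hβ z' ρ
  have hint : IntegrableOn (fun w => 2 * M * ‖z - z'‖ ^ α *
      (‖z - w‖ ^ (-(1 + α)) + ‖z' - w‖ ^ (-(1 + α)))) (closedBall 0 ρ) :=
    (I1.add I2).const_mul _
  calc _ ≤ ∫ w, (closedBall (0:ℂ) ρ).indicator (fun w => 2 * M * ‖z - z'‖ ^ α *
          (‖z - w‖ ^ (-(1 + α)) + ‖z' - w‖ ^ (-(1 + α)))) w := by
        refine norm_integral_le_of_norm_le (hint.integrable_indicator measurableSet_closedBall) ?_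
        filter_upwards with w
        by_cases h : w ∈ closedBall (0:ℂ) ρ
        · rw [Set.indicator_of_mem h, ← sub_smul, norm_smul]
          have := cK_diff hα (z - w) (z' - w)
          rw [sub_sub_sub_cancel_right] at this
          calc _ ≤ (2 * ‖z - z'‖ ^ α * (‖z - w‖ ^ (-(1 + α)) + ‖z' - w‖ ^ (-(1 + α)))) * M := by
                gcongr; exact hM w
            _ = _ := by ring
        · rw [Set.indicator_of_notMem h, hs w (by simpa using h)]; simp
    _ = 2 * M * ‖z - z'‖ ^ α * ((∫ w in closedBall 0 ρ, ‖z - w‖ ^ (-(1 + α))) +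
          ∫ w in closedBall 0 ρ, ‖z' - w‖ ^ (-(1 + α))) := by
        rw [integral_indicator measurableSet_closedBall, integral_const_mul, integral_add I1 I2]
    _ ≤ 2 * M * ‖z - z'‖ ^ α * (J + J) := by
        gcongr
        · exact pw_bound hβ (by simpa using hz)
        · exact pw_bound hβ (by simpa using hz')
    _ = _ := by ring


section
variable {F : Type*} [NormedAddCommGroup F] [NormedSpace ℂ F] [CompleteSpace F]

/-- unit circle point -/
noncomputable def ee (θ : ℝ) : ℂ := Complex.exp (θ * Complex.I)

theorem ee_cont : Continuous ee := by unfold ee; fun_prop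

theorem ee_norm (θ : ℝ) : ‖ee θ‖ = 1 := Complex.norm_exp_ofReal_mul_I θ

theorem ee_deriv (θ : ℝ) : HasDerivAt ee (Complex.I * ee θ) θ := by
  have h := ((Complex.ofRealCLM.hasDerivAt (x := θ)).mul_const Complex.I).cexp
  simp only [Complex.ofRealCLM_apply, Complex.ofReal_one, one_mul] at h
  rw [mul_comm]
  exact h

theorem pol_int {h : ℝ × ℝ → F} {P : ℝ} (hc : Continuous h) (h0 : ∀ p : ℝ × ℝ, P < p.1 → h p = 0) :
    IntegrableOn h (Set.Ioi (0:ℝ) ×ˢ Set.Ioo (-Real.pi) Real.pi) (volume.prod volume) := by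
  refine IntegrableOn.of_forall_sdiff_eq_zero (s := Set.Icc 0 P ×ˢ Set.Icc (-Real.pi) Real.pi) ?_
    (measurableSet_Ioi.prod measurableSet_Ioo) ?_
  · exact hc.continuousOn.integrableOn_compact (isCompact_Icc.prod isCompact_Icc)
  · rintro ⟨r, θ⟩ ⟨⟨h1, h2⟩, h3⟩
    apply h0
    by_contra h4
    simp only [not_lt] at h4
    exact h3 ⟨⟨le_of_lt h1, h4⟩, Set.Ioo_subset_Icc_self h2⟩

theorem pompeiu {f : ℂ → F} {ρ : ℝ} (hf : ContDiff ℝ 1 f) (hs : ∀ z, ρ < ‖z‖ → f z = 0)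
    (z : ℂ) : cT (wDbarv f) z = f z := by
  have hD : Continuous (fderiv ℝ f) := hf.continuous_fderiv one_ne_zero
  have hee := ee_cont
  set h1 : ℝ × ℝ → F := fun p => fderiv ℝ f (z - p.1 * ee p.2) (ee p.2) with hh1
  set h2 : ℝ × ℝ → F := fun p => fderiv ℝ f (z - p.1 * ee p.2) (Complex.I * ee p.2) with hh2
  have c1 : Continuous h1 := by
    refine Continuous.clm_apply (hD.comp (by fun_prop)) (by fun_prop)
  have c2 : Continuous h2 := by
    refine Continuous.clm_apply (hD.comp (by fun_prop)) (by fun_prop)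
  set P := max 0 (ρ + ‖z‖) with hP
  have far : ∀ r θ : ℝ, P < r → ρ < ‖z - r * ee θ‖ := by
    intro r θ hr
    have a1 : 0 < r := lt_of_le_of_lt (le_max_left _ _) hr
    have a2 : ρ + ‖z‖ < r := lt_of_le_of_lt (le_max_right _ _) hr
    have a3 : ‖(r : ℂ) * ee θ‖ = r := by rw [norm_mul, ee_norm]; simp [abs_of_pos a1]
    have := norm_sub_norm_le ((r:ℂ) * ee θ) z
    rw [norm_sub_rev] at this
    linarith
  have z1 : ∀ p : ℝ × ℝ, P < p.1 → h1 p = 0 := fun p hp => by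
    simp only [hh1]; rw [fderiv_supp hs _ (far _ _ hp)]; simp
  have z2 : ∀ p : ℝ × ℝ, P < p.1 → h2 p = 0 := fun p hp => by
    simp only [hh2]; rw [fderiv_supp hs _ (far _ _ hp)]; simp
  have i1 := pol_int c1 z1
  have i2 := pol_int c2 z2
  have e1 : ∫ p in Set.Ioi (0:ℝ) ×ˢ Set.Ioo (-Real.pi) Real.pi, h1 p = (2 * Real.pi) • f z := by
    rw [Measure.volume_eq_prod, ← Measure.prod_restrict, integral_prod_symm _ (by
      rw [Measure.prod_restrict]; exact i1)]
    have : ∀ θ : ℝ, ∫ r in Set.Ioi (0:ℝ), h1 (r, θ) = f z := by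
      intro θ
      have hd : ∀ r : ℝ, HasDerivAt (fun r : ℝ => f (z - r * ee θ)) (-h1 (r, θ)) r := by
        intro r
        have hr : HasDerivAt (fun r : ℝ => z - (r:ℂ) * ee θ) (-ee θ) r := by
          have := ((Complex.ofRealCLM.hasDerivAt (x := r)).mul_const (ee θ)).const_sub z
          simpa using this
        have := ((hf.differentiable one_ne_zero) (z - r * ee θ)).hasFDerivAt.comp_hasDerivAt r hr
        simpa [hh1, Function.comp_def] using this
      have ic : Continuous fun r : ℝ => h1 (r, θ) := by fun_prop
      have ii : IntegrableOn (fun r : ℝ => -h1 (r, θ)) (Set.Ioi 0) := by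
        refine IntegrableOn.of_forall_sdiff_eq_zero (s := Set.Icc 0 P) ?_ measurableSet_Ioi ?_
        · exact ic.neg.continuousOn.integrableOn_compact isCompact_Icc
        · rintro r ⟨hr, hr'⟩
          rw [z1, neg_zero]
          by_contra h4
          exact hr' ⟨le_of_lt hr, not_lt.1 h4⟩
      have lim : Filter.Tendsto (fun r : ℝ => f (z - r * ee θ)) Filter.atTop (nhds 0) := by
        refine tendsto_const_nhds.congr' ?_
        filter_upwards [Filter.eventually_gt_atTop P] with r hr
        rw [hs _ (far r θ hr)]
      have := integral_Ioi_of_hasDerivAt_of_tendsto' (fun r _ => hd r) ii lim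
      rw [integral_neg] at this
      simpa using this
    simp_rw [this]
    rw [setIntegral_const]
    congr 1
    simp [Measure.real, Real.pi_pos.le]
    ring
  have e2 : ∫ p in Set.Ioi (0:ℝ) ×ˢ Set.Ioo (-Real.pi) Real.pi, h2 p = 0 := by
    rw [Measure.volume_eq_prod, setIntegral_prod _ i2]
    refine setIntegral_eq_zero_of_forall_eq_zero fun r hr => ?_
    have hr : (0:ℝ) < r := hr
    rw [← integral_Ioc_eq_integral_Ioo, ← intervalIntegral.integral_of_le (by linarith [Real.pi_pos])]
    have hd : ∀ θ : ℝ, HasDerivAt (fun θ : ℝ => f (z - r * ee θ)) (-(r • h2 (r, θ))) θ := by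
      intro θ
      have hr : HasDerivAt (fun θ : ℝ => z - (r:ℂ) * ee θ) (-(r * (Complex.I * ee θ))) θ :=
        ((ee_deriv θ).const_mul (r:ℂ)).const_sub z
      have := ((hf.differentiable one_ne_zero) (z - r * ee θ)).hasFDerivAt.comp_hasDerivAt θ hr
      have e : fderiv ℝ f (z - r * ee θ) (-(r * (Complex.I * ee θ))) = -(r • h2 (r, θ)) := by
        simp only [hh2]
        rw [← map_smul, ← map_neg]; simp
      rw [← e]; exact this
    have ic : Continuous fun θ : ℝ => -(r • h2 (r, θ)) := by fun_prop
    have := intervalIntegral.integral_eq_sub_of_hasDerivAt (a := -Real.pi) (b := Real.pi)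
      (fun θ _ => hd θ) (ic.intervalIntegrable _ _)
    have ep : ee (-Real.pi) = ee Real.pi := by
      simp [ee, Complex.exp_neg]
    rw [ep, sub_self, intervalIntegral.integral_neg, intervalIntegral.integral_smul, neg_eq_zero,
      smul_eq_zero] at this
    exact this.resolve_left hr.ne'
  unfold cT
  rw [← Complex.integral_comp_polarCoord_symm]
  have e3 : ∀ p ∈ polarCoord.target, p.1 • (cK (Complex.polarCoord.symm p) •
      wDbarv f (z - Complex.polarCoord.symm p)) =
      ((2 * Real.pi : ℝ) : ℂ)⁻¹ • (h1 p + Complex.I • h2 p) := by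
    rintro ⟨r, θ⟩ hp
    have hr : (0:ℝ) < r := hp.1
    have hrc : (r:ℂ) ≠ 0 := by exact_mod_cast hr.ne'
    have hpi : (Real.pi : ℂ) ≠ 0 := by exact_mod_cast Real.pi_ne_zero
    have es : Complex.polarCoord.symm (r, θ) = r * ee θ := by
      simp [ee, Complex.exp_mul_I]
    have hne : ee θ ≠ 0 := Complex.exp_ne_zero _
    rw [es]
    simp only [hh1, hh2, wDbarv]
    set D := fderiv ℝ f (z - r * ee θ)
    have lin : ∀ v : ℂ, D v = (v.re : ℂ) • D 1 + (v.im : ℂ) • D Complex.I := by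
      intro v
      have : v = v.re • (1:ℂ) + v.im • Complex.I := by simp [Complex.re_add_im]
      conv_lhs => rw [this]
      rw [map_add, map_smul, map_smul]
      simp
    have er : (ee θ).re = Real.cos θ := by simp [ee, Complex.exp_mul_I, ← Complex.ofReal_cos, ← Complex.ofReal_sin]
    have ei : (ee θ).im = Real.sin θ := by simp [ee, Complex.exp_mul_I, ← Complex.ofReal_cos, ← Complex.ofReal_sin]
    have einv : (ee θ)⁻¹ = Real.cos θ - Real.sin θ * Complex.I := by
      simp only [ee]
      rw [← Complex.exp_neg, ← neg_mul, Complex.exp_mul_I]; simp; ring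
    rw [lin (ee θ), lin (Complex.I * ee θ)]
    simp only [Complex.mul_re, Complex.mul_im, Complex.I_re, Complex.I_im, er, ei]
    have ck : (r:ℂ) * cK (r * ee θ) = (Real.pi : ℂ)⁻¹ * (ee θ)⁻¹ := by
      unfold cK; field_simp
    rw [← Complex.coe_smul r, smul_smul, ck, einv]
    push_cast
    match_scalars
    · field_simp
      ring_nf
    · field_simp
      ring_nf
      simp
      try ring
  have e4 : ∫ p in polarCoord.target, p.1 • (cK (Complex.polarCoord.symm p) •
      wDbarv f (z - Complex.polarCoord.symm p)) =
      ∫ p in polarCoord.target, ((2 * Real.pi : ℝ) : ℂ)⁻¹ • (h1 p + Complex.I • h2 p) :=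
    setIntegral_congr_fun polarCoord.open_target.measurableSet e3
  rw [e4, integral_smul]
  change ((2 * Real.pi : ℝ) : ℂ)⁻¹ •
    ∫ p in Set.Ioi (0:ℝ) ×ˢ Set.Ioo (-Real.pi) Real.pi, (h1 p + Complex.I • h2 p) = f z
  have e5 : ∫ p in Set.Ioi (0:ℝ) ×ˢ Set.Ioo (-Real.pi) Real.pi, (h1 p + Complex.I • h2 p) =
      (∫ p in Set.Ioi (0:ℝ) ×ˢ Set.Ioo (-Real.pi) Real.pi, h1 p) +
      ∫ p in Set.Ioi (0:ℝ) ×ˢ Set.Ioo (-Real.pi) Real.pi, Complex.I • h2 p :=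
    integral_add i1 (Integrable.smul Complex.I i2)
  rw [e5, integral_smul, e1, e2, smul_zero, add_zero,
    ← Complex.coe_smul, smul_smul, inv_mul_cancel₀, one_smul]
  exact_mod_cast (by positivity : (2 * Real.pi : ℝ) ≠ 0)

end


section
variable {E : Type*} [NormedAddCommGroup E] [NormedSpace ℂ E]

/-- Picard map -/
noncomputable def Phi (b : ℂ × E → E) (c : E) (u : ℂ → E) (z : ℂ) : E :=
  c + (cT (fun w => b (w, u w)) z - cT (fun w => b (w, u w)) 0)

theorem Phi_zero (b : ℂ × E → E) (c : E) (u : ℂ → E) : Phi b c u 0 = c := by simp [Phi]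

theorem Phi_ball {b : ℂ × E → E} {c : E} {ρ A : ℝ} (hρ : 0 < ρ)
    (hs : ∀ z u, ρ < ‖z‖ → b (z, u) = 0)
    (hA : ∀ z u, ‖u - c‖ ≤ 1 → ‖b (z, u)‖ ≤ A) (h1 : 6 * ρ * A ≤ 1)
    {u : ℂ → E} (hu : ∀ z, ‖u z - c‖ ≤ 1) (z : ℂ) : ‖Phi b c u z - c‖ ≤ 1 := by
  have k := cT_bound (f := fun w => b (w, u w)) hρ (fun z hz => hs z _ hz) (fun z => hA z _ (hu z))
  have e : Phi b c u z - c = cT (fun w => b (w, u w)) z - cT (fun w => b (w, u w)) 0 := by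
    simp [Phi]
  rw [e]
  refine (norm_sub_le _ _).trans ?_
  linarith [k z, k 0]

theorem Phi_lip {b : ℂ × E → E} {c : E} {ρ B : ℝ} (hρ : 0 < ρ) (hb : Continuous b)
    (hs : ∀ z u, ρ < ‖z‖ → b (z, u) = 0) (hB0 : 0 ≤ B)
    (hB : ∀ z u u', ‖u - c‖ ≤ 1 → ‖u' - c‖ ≤ 1 → ‖b (z, u) - b (z, u')‖ ≤ B * ‖u - u'‖)
    (h2 : 6 * ρ * B ≤ 1 / 2)
    {u u' : ℂ → E} (hcu : Continuous u) (hcu' : Continuous u') (hu : ∀ z, ‖u z - c‖ ≤ 1)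
    (hu' : ∀ z, ‖u' z - c‖ ≤ 1) {d : ℝ} (hd : ∀ z, ‖u z - u' z‖ ≤ d) (z : ℂ) :
    ‖Phi b c u z - Phi b c u' z‖ ≤ d / 2 := by
  have hd0 : 0 ≤ d := (norm_nonneg _).trans (hd 0)
  have k := cT_bound (f := fun w => b (w, u w) - b (w, u' w)) (M := B * d) hρ
    (fun z hz => by simp [hs z _ hz])
    (fun z => (hB z _ _ (hu z) (hu' z)).trans (by gcongr; exact hd z))
  have s := cT_sub (f := fun w => b (w, u w)) (g := fun w => b (w, u' w)) (ρ := ρ)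
    (by fun_prop) (fun z hz => hs z _ hz) (by fun_prop) (fun z hz => hs z _ hz)
  have e : Phi b c u z - Phi b c u' z = cT (fun w => b (w, u w) - b (w, u' w)) z -
      cT (fun w => b (w, u w) - b (w, u' w)) 0 := by
    rw [← s, ← s]; simp only [Phi]; abel
  rw [e]
  refine (norm_sub_le _ _).trans ?_
  have : 6 * ρ * B * d ≤ 1 / 2 * d := by gcongr
  linarith [k z, k 0]

theorem comp_contDiff {b : ℂ × E → E} (hb : ContDiff ℝ 1 b) {u : ℂ → E} (hu : ContDiff ℝ 1 u) :
    ContDiff ℝ 1 (fun w => b (w, u w)) := hb.comp (contDiff_id.prodMk hu)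

theorem comp_fderiv {b : ℂ × E → E} (hb : ContDiff ℝ 1 b) {u : ℂ → E} (hu : ContDiff ℝ 1 u)
    (w v : ℂ) : fderiv ℝ (fun w => b (w, u w)) w v = fderiv ℝ b (w, u w) (v, fderiv ℝ u w v) := by
  have h1 := ((hb.differentiable one_ne_zero) (w, u w)).hasFDerivAt
  have h2 := (hasFDerivAt_id (𝕜 := ℝ) w).prodMk ((hu.differentiable one_ne_zero) w).hasFDerivAt
  have h3 : HasFDerivAt (fun w => b (w, u w)) _ w := h1.comp w h2
  rw [h3.fderiv]
  rfl

theorem Phi_hasFDerivAt {b : ℂ × E → E} {c : E} {ρ : ℝ} (hb : ContDiff ℝ 1 b)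
    (hs : ∀ z u, ρ < ‖z‖ → b (z, u) = 0) {u : ℂ → E} (hu : ContDiff ℝ 1 u) (z : ℂ) :
    HasFDerivAt (Phi b c u) (cT (fderiv ℝ (fun w => b (w, u w))) z) z :=
  ((cT_hasFDerivAt (comp_contDiff hb hu) (fun z hz => hs z _ hz) z).sub_const _).const_add c

theorem Phi_contDiff {b : ℂ × E → E} {c : E} {ρ : ℝ} (hb : ContDiff ℝ 1 b)
    (hs : ∀ z u, ρ < ‖z‖ → b (z, u) = 0) {u : ℂ → E} (hu : ContDiff ℝ 1 u) :
    ContDiff ℝ 1 (Phi b c u) := by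
  rw [contDiff_one_iff_fderiv]
  refine ⟨fun z => (Phi_hasFDerivAt hb hs hu z).differentiableAt, ?_⟩
  have : fderiv ℝ (Phi b c u) = cT (fderiv ℝ (fun w => b (w, u w))) := by
    ext1 z; exact (Phi_hasFDerivAt hb hs hu z).fderiv
  rw [this]
  exact cT_cont ((comp_contDiff hb hu).continuous_fderiv one_ne_zero)
    (fderiv_supp (fun z hz => hs z _ hz))

theorem Phi_fderiv_bound {b : ℂ × E → E} {c : E} {ρ B C : ℝ} (hρ : 0 < ρ) (hb : ContDiff ℝ 1 b)
    (hs : ∀ z u, ρ < ‖z‖ → b (z, u) = 0) (hB0 : 0 ≤ B)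
    (hC : ∀ z u, ‖u - c‖ ≤ 1 → ‖fderiv ℝ b (z, u)‖ ≤ C)
    (hB : ∀ z u v, ‖u - c‖ ≤ 1 → ‖fderiv ℝ b (z, u) (0, v)‖ ≤ B * ‖v‖)
    (h2 : 6 * ρ * B ≤ 1 / 2)
    {u : ℂ → E} (hcu : ContDiff ℝ 1 u) (hu : ∀ z, ‖u z - c‖ ≤ 1)
    (hV : ∀ z, ‖fderiv ℝ u z‖ ≤ 4 * ρ * C) (z : ℂ) :
    ‖fderiv ℝ (Phi b c u) z‖ ≤ 4 * ρ * C := by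
  have hC0 : 0 ≤ C := (norm_nonneg _).trans (hC 0 c (by simp))
  rw [(Phi_hasFDerivAt hb hs hcu z).fderiv]
  have k := cT_bound (f := fderiv ℝ (fun w => b (w, u w))) (M := C + B * (4 * ρ * C)) hρ
    (fderiv_supp (fun z hz => hs z _ hz)) (fun w => by
      refine ContinuousLinearMap.opNorm_le_bound _ (by positivity) fun v => ?_
      rw [comp_fderiv hb hcu]
      have e : ((v, fderiv ℝ u w v) : ℂ × E) = (v, 0) + (0, fderiv ℝ u w v) := by simp
      rw [e, map_add]
      have a1 : ‖fderiv ℝ b (w, u w) (v, 0)‖ ≤ C * ‖v‖ :=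
        (ContinuousLinearMap.le_opNorm _ _).trans (by
          gcongr
          · exact hC _ _ (hu w)
          · simp [Prod.norm_def])
      have a2 : ‖fderiv ℝ b (w, u w) (0, fderiv ℝ u w v)‖ ≤ B * (4 * ρ * C * ‖v‖) :=
        (hB _ _ _ (hu w)).trans (by
          gcongr
          exact (ContinuousLinearMap.le_opNorm _ _).trans (by gcongr; exact hV w))
      calc _ ≤ _ := norm_add_le _ _
        _ ≤ _ := add_le_add a1 a2
        _ = _ := by ring) z
  refine k.trans ?_
  have : 6 * ρ * B * (2 * ρ * C) ≤ 1 / 2 * (2 * ρ * C) := by gcongr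
  linarith

theorem Phi_fderiv_lip {α : ℝ} (hα : 0 < α) {b : ℂ × E → E} {c : E} {ρ B L V : ℝ} (hρ : 0 < ρ)
    (hb : ContDiff ℝ 1 b)
    (hs : ∀ z u, ρ < ‖z‖ → b (z, u) = 0) (hB0 : 0 ≤ B) (hL0 : 0 ≤ L)
    (hB : ∀ z u v, ‖u - c‖ ≤ 1 → ‖fderiv ℝ b (z, u) (0, v)‖ ≤ B * ‖v‖)
    (hL : ∀ z u u', ‖u - c‖ ≤ 1 → ‖u' - c‖ ≤ 1 →
      ‖fderiv ℝ b (z, u) - fderiv ℝ b (z, u')‖ ≤ L * ‖u - u'‖ ^ α)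
    (h2 : 6 * ρ * B ≤ 1 / 2)
    {u u' : ℂ → E} (hcu : ContDiff ℝ 1 u) (hcu' : ContDiff ℝ 1 u') (hu : ∀ z, ‖u z - c‖ ≤ 1)
    (hu' : ∀ z, ‖u' z - c‖ ≤ 1) (hV : ∀ z, ‖fderiv ℝ u z‖ ≤ V)
    {d e : ℝ} (hd : ∀ z, ‖u z - u' z‖ ≤ d) (he : ∀ z, ‖fderiv ℝ u z - fderiv ℝ u' z‖ ≤ e) (z : ℂ) :
    ‖fderiv ℝ (Phi b c u) z - fderiv ℝ (Phi b c u') z‖ ≤ e / 4 + 3 * ρ * L * (1 + V) * d ^ α := by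
  have hd0 : 0 ≤ d := (norm_nonneg _).trans (hd 0)
  have he0 : 0 ≤ e := (norm_nonneg _).trans (he 0)
  have hV0 : 0 ≤ V := (norm_nonneg _).trans (hV 0)
  rw [(Phi_hasFDerivAt hb hs hcu z).fderiv, (Phi_hasFDerivAt hb hs hcu' z).fderiv]
  have s1 := fderiv_supp (f := fun w => b (w, u w)) (ρ := ρ) (fun z hz => hs z _ hz)
  have s2 := fderiv_supp (f := fun w => b (w, u' w)) (ρ := ρ) (fun z hz => hs z _ hz)
  rw [cT_sub ((comp_contDiff hb hcu).continuous_fderiv one_ne_zero) s1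
    ((comp_contDiff hb hcu').continuous_fderiv one_ne_zero) s2]
  have k := cT_bound (f := fun w => fderiv ℝ (fun w => b (w, u w)) w -
    fderiv ℝ (fun w => b (w, u' w)) w) (M := L * d ^ α * (1 + V) + B * e) hρ
    (fun w hw => by rw [s1 w hw, s2 w hw, sub_zero]) (fun w => by
      refine ContinuousLinearMap.opNorm_le_bound _ (by positivity) fun v => ?_
      rw [ContinuousLinearMap.sub_apply, comp_fderiv hb hcu, comp_fderiv hb hcu']
      have e1 : fderiv ℝ b (w, u w) (v, fderiv ℝ u w v) - fderiv ℝ b (w, u' w) (v, fderiv ℝ u' w v)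
        = (fderiv ℝ b (w, u w) - fderiv ℝ b (w, u' w)) (v, fderiv ℝ u w v) +
          fderiv ℝ b (w, u' w) (0, (fderiv ℝ u w - fderiv ℝ u' w) v) := by
        have : ((0, (fderiv ℝ u w - fderiv ℝ u' w) v) : ℂ × E) =
          (v, fderiv ℝ u w v) - (v, fderiv ℝ u' w v) := by simp
        rw [this, map_sub, ContinuousLinearMap.sub_apply]; abel
      rw [e1]
      have a0 : ‖((v, fderiv ℝ u w v) : ℂ × E)‖ ≤ (1 + V) * ‖v‖ := by
        have := (ContinuousLinearMap.le_opNorm (fderiv ℝ u w) v).trans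
          (mul_le_mul_of_nonneg_right (hV w) (norm_nonneg v))
        rw [Prod.norm_def]
        have h0 := norm_nonneg v
        have h0' : 0 ≤ V * ‖v‖ := by positivity
        refine max_le ?_ ?_ <;> simp only <;> linarith
      have a1 : ‖(fderiv ℝ b (w, u w) - fderiv ℝ b (w, u' w)) (v, fderiv ℝ u w v)‖ ≤
          L * d ^ α * ((1 + V) * ‖v‖) :=
        (ContinuousLinearMap.le_opNorm _ _).trans (by
          gcongr
          refine (hL _ _ _ (hu w) (hu' w)).trans ?_
          gcongr
          exact hd w)
      have a2 : ‖fderiv ℝ b (w, u' w) (0, (fderiv ℝ u w - fderiv ℝ u' w) v)‖ ≤ B * (e * ‖v‖) :=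
        (hB _ _ _ (hu' w)).trans (by
          gcongr
          exact (ContinuousLinearMap.le_opNorm _ _).trans (by gcongr; exact he w))
      calc _ ≤ _ := norm_add_le _ _
        _ ≤ _ := add_le_add a1 a2
        _ = _ := by ring) z
  refine k.trans ?_
  have : 6 * ρ * B * (e / 2) ≤ 1 / 2 * (e / 2) := by gcongr
  linarith

theorem picard [CompleteSpace E] {α : ℝ} (hα : α ∈ Set.Ioo (0:ℝ) 1) {b : ℂ × E → E} {c : E}
    {ρ A B C L : ℝ} (hρ : 0 < ρ) (hb : ContDiff ℝ 1 b)
    (hs : ∀ z u, ρ < ‖z‖ → b (z, u) = 0) (hB0 : 0 ≤ B) (hL0 : 0 ≤ L)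
    (hA : ∀ z u, ‖u - c‖ ≤ 1 → ‖b (z, u)‖ ≤ A)
    (hB' : ∀ z u u', ‖u - c‖ ≤ 1 → ‖u' - c‖ ≤ 1 → ‖b (z, u) - b (z, u')‖ ≤ B * ‖u - u'‖)
    (hC : ∀ z u, ‖u - c‖ ≤ 1 → ‖fderiv ℝ b (z, u)‖ ≤ C)
    (hB : ∀ z u v, ‖u - c‖ ≤ 1 → ‖fderiv ℝ b (z, u) (0, v)‖ ≤ B * ‖v‖)
    (hL : ∀ z u u', ‖u - c‖ ≤ 1 → ‖u' - c‖ ≤ 1 →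
      ‖fderiv ℝ b (z, u) - fderiv ℝ b (z, u')‖ ≤ L * ‖u - u'‖ ^ α)
    (h1 : 6 * ρ * A ≤ 1) (h2 : 6 * ρ * B ≤ 1 / 2) :
    ∃ U : ℂ → E, ContDiff ℝ 1 U ∧ ∀ z, U z = Phi b c U z := by
  have hC0 : 0 ≤ C := (norm_nonneg _).trans (hC 0 c (by simp))
  set V := 4 * ρ * C with hVdef
  have hV0 : 0 ≤ V := by positivity
  set u : ℕ → ℂ → E := fun k => (Phi b c)^[k] (fun _ => c) with hudef
  have usucc : ∀ k, u (k + 1) = Phi b c (u k) := fun k => Function.iterate_succ_apply' _ _ _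
  have good : ∀ k, ContDiff ℝ 1 (u k) ∧ (∀ z, ‖u k z - c‖ ≤ 1) ∧ ∀ z, ‖fderiv ℝ (u k) z‖ ≤ V := by
    intro k
    induction k with
    | zero =>
      refine ⟨contDiff_const, ?_, ?_⟩
      · simp [hudef]
      · intro z; simp [hudef, hV0]
    | succ k ih =>
      obtain ⟨i1, i2, i3⟩ := ih
      rw [usucc]
      exact ⟨Phi_contDiff hb hs i1, Phi_ball hρ hs hA h1 i2,
        Phi_fderiv_bound hρ hb hs hB0 hC hB h2 i1 i2 i3⟩
  have hd : ∀ k z, ‖u (k + 1) z - u k z‖ ≤ (1 / 2 : ℝ) ^ k := by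
    intro k
    induction k with
    | zero => intro z; simpa [hudef] using (good 1).2.1 z
    | succ k ih =>
      intro z
      have := Phi_lip hρ hb.continuous hs hB0 hB' h2 (good (k+1)).1.continuous
        (good k).1.continuous (good (k+1)).2.1 (good k).2.1 ih z
      rw [usucc (k + 1)]
      nth_rewrite 2 [usucc k]
      refine this.trans (le_of_eq ?_)
      rw [pow_succ]; ring
  set r : ℝ := (1 / 2 : ℝ) ^ α with hr
  have hr0 : 0 < r := by positivity
  have hr1 : r < 1 := Real.rpow_lt_one (by norm_num) (by norm_num) hα.1
  have hr2 : 1 / 2 ≤ r := by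
    have := Real.rpow_le_rpow_of_exponent_ge (x := (1/2 : ℝ)) (by norm_num) (by norm_num) hα.2.le
    rw [Real.rpow_one] at this
    exact this
  have hrk : ∀ k : ℕ, ((1 / 2 : ℝ) ^ k) ^ α = r ^ k := by
    intro k
    rw [hr, ← Real.rpow_natCast, ← Real.rpow_natCast, ← Real.rpow_mul (by norm_num),
      ← Real.rpow_mul (by norm_num), mul_comm]
  set N := 3 * ρ * L * (1 + V) with hN
  have hN0 : 0 ≤ N := by positivity
  set Q := 4 * N + 2 * V with hQ
  have he : ∀ k z, ‖fderiv ℝ (u (k + 1)) z - fderiv ℝ (u k) z‖ ≤ Q * r ^ k := by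
    intro k
    induction k with
    | zero =>
      intro z
      refine (norm_sub_le _ _).trans ?_
      have := (good 1).2.2 z
      have := (good 0).2.2 z
      simp only [pow_zero, mul_one, zero_add]
      linarith
    | succ k ih =>
      intro z
      have := Phi_fderiv_lip hα.1 hρ hb hs hB0 hL0 hB hL h2 (good (k+1)).1
        (good k).1 (good (k+1)).2.1 (good k).2.1 (good (k+1)).2.2 (hd k) ih z
      rw [usucc (k + 1)]
      nth_rewrite 2 [usucc k]
      refine this.trans ?_
      rw [hrk, pow_succ]
      have h5 : 0 < r ^ k := by positivity
      have h6 : Q * r ^ k * (1 / 2) ≤ Q * r ^ k * r := by gcongr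
      have h7 : 4 * N * r ^ k ≤ Q * r ^ k := by gcongr; linarith
      linarith
  set g : ℕ → ℂ → E := fun k z => u (k + 1) z - u k z with hg
  have hsum : Summable fun k => Q * r ^ k :=
    (summable_geometric_of_lt_one hr0.le hr1).mul_left Q
  have hgd : ∀ k z, HasFDerivAt (g k) (fderiv ℝ (u (k + 1)) z - fderiv ℝ (u k) z) z := fun k z =>
    (((good (k+1)).1.differentiable one_ne_zero) z).hasFDerivAt.sub
      (((good k).1.differentiable one_ne_zero) z).hasFDerivAt
  have hs0 : ∀ z, Summable fun k => g k z := fun z =>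
    Summable.of_norm_bounded (summable_geometric_of_lt_one (by norm_num) (by norm_num)) (fun k => hd k z)
  set U : ℂ → E := fun z => c + ∑' k, g k z with hU
  have hUd : ∀ z, HasFDerivAt U (∑' k, (fderiv ℝ (u (k + 1)) z - fderiv ℝ (u k) z)) z := fun z =>
    (hasFDerivAt_tsum hsum hgd he (hs0 0) z).const_add c
  have hUc : ContDiff ℝ 1 U := by
    rw [contDiff_one_iff_fderiv]
    refine ⟨fun z => (hUd z).differentiableAt, ?_⟩
    have : fderiv ℝ U = fun z => ∑' k, (fderiv ℝ (u (k + 1)) z - fderiv ℝ (u k) z) := by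
      ext1 z; exact (hUd z).fderiv
    rw [this]
    exact continuous_tsum (fun k => ((good (k+1)).1.continuous_fderiv one_ne_zero).sub
      ((good k).1.continuous_fderiv one_ne_zero)) hsum he
  have lim : ∀ z, Filter.Tendsto (fun k => u k z) Filter.atTop (nhds (U z)) := by
    intro z
    have := ((hs0 z).hasSum.tendsto_sum_nat).const_add c
    refine this.congr fun k => ?_
    rw [Finset.sum_range_sub (fun k => u k z)]
    simp [hudef]
  have hUb : ∀ z, ‖U z - c‖ ≤ 1 := fun z =>
    le_of_tendsto ((lim z).sub_const c).norm (Filter.Eventually.of_forall fun k => (good k).2.1 z)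
  have rate : ∀ k z, ‖u k z - U z‖ ≤ 1 * (1 / 2 : ℝ) ^ k / (1 - 1 / 2) := fun k z => by
    rw [← dist_eq_norm]
    refine dist_le_of_le_geometric_of_tendsto (1/2 : ℝ) 1 (by norm_num) (fun k => ?_) (lim z) k
    rw [dist_comm, dist_eq_norm, one_mul]
    exact hd k z
  refine ⟨U, hUc, fun z => ?_⟩
  refine tendsto_nhds_unique ((Filter.tendsto_add_atTop_iff_nat 1).2 (lim z)) ?_
  rw [tendsto_iff_norm_sub_tendsto_zero]
  refine squeeze_zero (fun _ => norm_nonneg _) (fun k => ?_)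
    (g := fun k : ℕ => (1 * (1 / 2 : ℝ) ^ k / (1 - 1 / 2)) / 2) ?_
  · rw [usucc]
    exact Phi_lip hρ hb.continuous hs hB0 hB' h2 (good k).1.continuous hUc.continuous
      (good k).2.1 hUb (rate k) z
  · have := tendsto_pow_atTop_nhds_zero_of_lt_one (r := (1/2:ℝ)) (by norm_num) (by norm_num)
    have := ((this.const_mul 1).div_const (1 - 1/2)).div_const 2
    simpa using this

end


theorem HolV_lt_top_s1 {E : Type*} [NormedAddCommGroup E] {α : ℝ} {A : Set ℂ} {f : ℂ → E} {C : ℝ}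
    (h : ∀ z ∈ A, ∀ z' ∈ A, ‖f z - f z'‖ ≤ C * ‖z - z'‖ ^ α) : HolV α A f < ⊤ := by
  refine lt_of_le_of_lt (b := ENNReal.ofReal C) ?_ ENNReal.ofReal_lt_top
  unfold HolV
  refine iSup₂_le fun z hz => iSup₂_le fun z' hz' => iSup_le fun hne => ?_
  have hp : 0 < ‖z - z'‖ := norm_pos_iff.2 (sub_ne_zero.2 hne)
  have e : ((‖z - z'‖₊ : ℝ≥0∞)) ^ α = ENNReal.ofReal (‖z - z'‖ ^ α) := by
    rw [← ENNReal.ofReal_rpow_of_pos hp, ofReal_norm_eq_enorm]; rfl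
  have e' : (‖f z - f z'‖₊ : ℝ≥0∞) = ENNReal.ofReal ‖f z - f z'‖ := by
    rw [ofReal_norm_eq_enorm]; rfl
  rw [e, e']
  have hq : 0 < ‖z - z'‖ ^ α := by positivity
  rw [← ENNReal.ofReal_div_of_pos hq]
  apply ENNReal.ofReal_le_ofReal
  rw [div_le_iff₀ hq]
  exact h z hz z' hz'

theorem w_bound {E : Type*} [NormedAddCommGroup E] [NormedSpace ℂ E] (D : ℂ →L[ℝ] E) :
    ‖(2 : ℂ)⁻¹ • (D 1 - Complex.I • D Complex.I)‖ ≤ ‖D‖ ∧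
    ‖(2 : ℂ)⁻¹ • (D 1 + Complex.I • D Complex.I)‖ ≤ ‖D‖ := by
  have a1 : ‖D 1‖ ≤ ‖D‖ := by simpa using D.le_opNorm 1
  have a2 : ‖Complex.I • D Complex.I‖ ≤ ‖D‖ := by
    rw [norm_smul]; simpa using D.le_opNorm Complex.I
  constructor
  · rw [norm_smul]
    have := norm_sub_le (D 1) (Complex.I • D Complex.I)
    simp only [norm_inv, Complex.norm_ofNat]
    linarith
  · rw [norm_smul]
    have := norm_add_le (D 1) (Complex.I • D Complex.I)
    simp only [norm_inv, Complex.norm_ofNat]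
    linarith

theorem conclude {E : Type*} [NormedAddCommGroup E] [NormedSpace ℂ E] [CompleteSpace E] {α : ℝ}
    (hα : α ∈ Set.Ioo (0:ℝ) 1) {b : ℂ × E → E} {c : E} {ρ : ℝ} (hb : ContDiff ℝ 1 b)
    (hs : ∀ z u, ρ < ‖z‖ → b (z, u) = 0) {U : ℂ → E} (hU : ContDiff ℝ 1 U)
    (hP : ∀ z, U z = Phi b c U z) (R : ℝ) :
    HolV α (closedBall (0:ℂ) R) (wDv U) < ⊤ ∧ HolV α (closedBall (0:ℂ) R) (wDbarv U) < ⊤ ∧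
    (∀ z, wDbarv U z = b (z, U z)) := by
  set f : ℂ → E := fun w => b (w, U w) with hf
  have hfc : ContDiff ℝ 1 f := comp_contDiff hb hU
  have hfs : ∀ z, ρ < ‖z‖ → f z = 0 := fun z hz => hs z _ hz
  have hfd : Continuous (fderiv ℝ f) := hfc.continuous_fderiv one_ne_zero
  have hD : ∀ z, fderiv ℝ U z = cT (fderiv ℝ f) z := by
    intro z
    have e : U = Phi b c U := funext hP
    calc fderiv ℝ U z = fderiv ℝ (Phi b c U) z := by rw [← e]
      _ = _ := (Phi_hasFDerivAt hb hs hU z).fderiv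
  obtain ⟨M, hM⟩ := (cs_of (fderiv_supp hfs)).exists_bound_of_continuous hfd
  obtain ⟨C, hC⟩ := cT_holder (R := R) hα hfd (fderiv_supp hfs) hM
  refine ⟨HolV_lt_top_s1 (C := C) ?_, HolV_lt_top_s1 (C := C) ?_, ?_⟩
  · intro z hz z' hz'
    refine le_trans ?_ (hC z hz z' hz')
    rw [← hD, ← hD]
    have e : wDv U z - wDv U z' = (2:ℂ)⁻¹ • ((fderiv ℝ U z - fderiv ℝ U z') 1 -
        Complex.I • (fderiv ℝ U z - fderiv ℝ U z') Complex.I) := by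
      simp only [wDv, _root_.sub_apply]
      rw [← smul_sub]
      congr 1
      rw [smul_sub]; abel
    rw [e]
    exact (w_bound (fderiv ℝ U z - fderiv ℝ U z')).1
  · intro z hz z' hz'
    refine le_trans ?_ (hC z hz z' hz')
    rw [← hD, ← hD]
    have e : wDbarv U z - wDbarv U z' = (2:ℂ)⁻¹ • ((fderiv ℝ U z - fderiv ℝ U z') 1 +
        Complex.I • (fderiv ℝ U z - fderiv ℝ U z') Complex.I) := by
      simp only [wDbarv, _root_.sub_apply]
      rw [← smul_sub]
      congr 1
      rw [smul_sub]; abel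
    rw [e]
    exact (w_bound (fderiv ℝ U z - fderiv ℝ U z')).2
  · intro z
    rw [← show f z = b (z, U z) from rfl, ← pompeiu hfc hfs z]
    simp only [wDbarv]
    rw [hD, cT_fderiv_apply hfc hfs, cT_fderiv_apply hfc hfs]
    have s : ∀ v : ℂ, ∀ z, ρ < ‖z‖ → fderiv ℝ f z v = 0 := fun v z hz => by
      rw [fderiv_supp hfs z hz]; simp
    have i1 := cT_integrable (f := fun w => fderiv ℝ f w 1) (by fun_prop) (s 1) z
    have i2 := cT_integrable (f := fun w => fderiv ℝ f w Complex.I) (by fun_prop) (s Complex.I) z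
    unfold cT
    have e5 : ∫ w, (cK w • fderiv ℝ f (z - w) 1 + Complex.I • cK w • fderiv ℝ f (z - w) Complex.I)
        = (∫ w, cK w • fderiv ℝ f (z - w) 1) +
          ∫ w, Complex.I • cK w • fderiv ℝ f (z - w) Complex.I :=
      integral_add i1 (i2.smul Complex.I)
    rw [← integral_smul Complex.I]
    change (2:ℂ)⁻¹ • ((∫ w, cK w • fderiv ℝ f (z - w) 1) +
          ∫ w, Complex.I • cK w • fderiv ℝ f (z - w) Complex.I) = _
    rw [← e5, ← integral_smul]
    congr 1
    ext w
    simp only [wDbarv, smul_add, smul_smul]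
    congr 2 <;> ring

theorem mainlem (α : ℝ) (hα : α ∈ Set.Ioo (0:ℝ) 1)
    (n : ℕ)
    (a : ℂ × (Fin n → ℂ) → Fin n → ℂ)
    (ha1 : ContDiff ℝ 1 a)
    (ha2 : ∀ s : Set (ℂ × (Fin n → ℂ)), Bornology.IsBounded s →
      ∃ M : ℝ, ∀ p ∈ s, ∀ q ∈ s, ‖fderiv ℝ a p - fderiv ℝ a q‖ ≤ M * ‖p - q‖ ^ α)
    (c : Fin n → ℂ) :
    ∃ R : ℝ, 0 < R ∧ ∃ u : ℂ → Fin n → ℂ,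
      (∃ U : Set ℂ, IsOpen U ∧ closedBall (0:ℂ) R ⊆ U ∧ ContDiffOn ℝ 1 u U) ∧
      HolV α (closedBall (0:ℂ) R) (wDv u) < ⊤ ∧
      HolV α (closedBall (0:ℂ) R) (wDbarv u) < ⊤ ∧
      (∀ z ∈ closedBall (0:ℂ) R, wDbarv u z = a (z, u z)) ∧
      u 0 = c := by
  set S : Set (ℂ × (Fin n → ℂ)) := closedBall (0:ℂ) 1 ×ˢ closedBall c 1 with hS
  have Sc : IsCompact S := (isCompact_closedBall _ _).prod (isCompact_closedBall _ _)
  have memS : ∀ z u, ‖z‖ ≤ 1 → ‖u - c‖ ≤ 1 → (z, u) ∈ S := fun z u hz hu =>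
    ⟨by simpa using hz, by simpa [dist_eq_norm] using hu⟩
  have had := ha1.differentiable one_ne_zero
  obtain ⟨A0, hA0⟩ := Sc.exists_bound_of_continuousOn ha1.continuous.continuousOn
  obtain ⟨B0, hB0⟩ := Sc.exists_bound_of_continuousOn
    (ha1.continuous_fderiv one_ne_zero).continuousOn
  obtain ⟨M0, hM0⟩ := ha2 S Sc.isBounded
  set A := |A0| with hAdef
  set B := |B0| with hBdef
  set M := |M0| with hMdef
  have hA : ∀ p ∈ S, ‖a p‖ ≤ A := fun p hp => (hA0 p hp).trans (le_abs_self _)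
  have hB : ∀ p ∈ S, ‖fderiv ℝ a p‖ ≤ B := fun p hp => (hB0 p hp).trans (le_abs_self _)
  have hM : ∀ p ∈ S, ∀ q ∈ S, ‖fderiv ℝ a p - fderiv ℝ a q‖ ≤ M * ‖p - q‖ ^ α := fun p hp q hq =>
    (hM0 p hp q hq).trans (by gcongr; exact le_abs_self _)
  have pA : 0 ≤ A := abs_nonneg _
  have pB : 0 ≤ B := abs_nonneg _
  have pM : 0 ≤ M := abs_nonneg _
  have hLip : ∀ p ∈ S, ∀ q ∈ S, ‖a p - a q‖ ≤ B * ‖p - q‖ := fun p hp q hq =>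
    ((convex_closedBall (0:ℂ) 1).prod (convex_closedBall c 1)).norm_image_sub_le_of_norm_fderiv_le
      (𝕜 := ℝ) (fun x _ => had x) hB hq hp
  set R : ℝ := (24 * (1 + A + B))⁻¹ with hR
  have Rpos : 0 < R := by positivity
  have RE : R * (24 * (1 + A + B)) = 1 := inv_mul_cancel₀ (by positivity)
  have RA : 0 ≤ R * A := by positivity
  have RB : 0 ≤ R * B := by positivity
  have R1 : 2 * R ≤ 1 := by linarith
  let χ : ContDiffBump (0:ℂ) := ⟨R, 2 * R, Rpos, by linarith⟩
  have χs : ContDiff ℝ 1 (χ : ℂ → ℝ) := χ.contDiff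
  have χd := χs.differentiable one_ne_zero
  have χ0 : ∀ z : ℂ, 2 * R < ‖z‖ → χ z = 0 := fun z hz =>
    χ.zero_of_le_dist (by simpa using hz.le)
  obtain ⟨K, hK⟩ := (χ.hasCompactSupport.fderiv ℝ).exists_bound_of_continuous
    (χs.continuous_fderiv one_ne_zero)
  have pK : 0 ≤ K := (norm_nonneg _).trans (hK 0)
  set b : ℂ × (Fin n → ℂ) → Fin n → ℂ := fun p => χ p.1 • a p with hbdef
  have hb : ContDiff ℝ 1 b := (χs.comp contDiff_fst).smul ha1
  have hs : ∀ z u, 2 * R < ‖z‖ → b (z, u) = 0 := fun z u hz => by simp [hbdef, χ0 z hz]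
  have hbd : ∀ p v, fderiv ℝ b p v = χ p.1 • fderiv ℝ a p v + (fderiv ℝ χ p.1 v.1) • a p := by
    intro p v
    have h1 : HasFDerivAt (fun p : ℂ × (Fin n → ℂ) => χ p.1) _ p :=
      (χd p.1).hasFDerivAt.comp p hasFDerivAt_fst
    have h2 : HasFDerivAt b _ p := h1.smul (had p).hasFDerivAt
    rw [h2.fderiv]
    simp
  have hbs : ∀ z u, 1 < ‖z‖ → fderiv ℝ b (z, u) = 0 := by
    intro z u hz
    have : b =ᶠ[nhds (z, u)] fun _ => 0 := by
      filter_upwards [(isOpen_lt continuous_const (continuous_norm.comp continuous_fst)).mem_nhds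
        (show (z, u) ∈ {p : ℂ × (Fin n → ℂ) | 2 * R < ‖p.1‖} from lt_of_le_of_lt R1 hz)] with w hw
      exact hs w.1 w.2 hw
    rw [this.fderiv_eq]; simp
  have χn : ∀ z, ‖χ z‖ ≤ 1 := fun z => by
    rw [Real.norm_of_nonneg χ.nonneg]; exact χ.le_one
  have hpic : ∃ U, ContDiff ℝ 1 U ∧ ∀ z, U z = Phi b c U z := by
    refine picard hα (b := b) (c := c) (ρ := 2 * R) (A := A) (B := B)
      (C := B + K * A) (L := M + 2 * K * B)
      (by positivity) hb hs pB (by positivity) ?_ ?_ ?_ ?_ ?_ (by linarith) (by linarith)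
    · intro z u hu
      rcases le_or_gt ‖z‖ 1 with hz | hz
      · simp only [hbdef, norm_smul]
        calc _ ≤ 1 * A := mul_le_mul (χn z) (hA _ (memS z u hz hu)) (norm_nonneg _) zero_le_one
          _ = A := one_mul _
      · rw [hs z u (lt_of_le_of_lt R1 hz), norm_zero]; exact pA
    · intro z u u' hu hu'
      rcases le_or_gt ‖z‖ 1 with hz | hz
      · simp only [hbdef, ← smul_sub, norm_smul]
        have := hLip _ (memS z u hz hu) _ (memS z u' hz hu')
        have e : ‖((z, u) : ℂ × (Fin n → ℂ)) - (z, u')‖ = ‖u - u'‖ := by simp [Prod.norm_def]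
        rw [e] at this
        calc _ ≤ 1 * (B * ‖u - u'‖) := mul_le_mul (χn z) this (norm_nonneg _) zero_le_one
          _ = _ := one_mul _
      · rw [hs z u (lt_of_le_of_lt R1 hz), hs z u' (lt_of_le_of_lt R1 hz), sub_zero, norm_zero]
        positivity
    · intro z u hu
      rcases le_or_gt ‖z‖ 1 with hz | hz
      · refine ContinuousLinearMap.opNorm_le_bound _ (by positivity) fun v => ?_
        rw [hbd]
        have a1 : ‖χ z • fderiv ℝ a (z, u) v‖ ≤ 1 * (B * ‖v‖) := by
          rw [norm_smul]
          gcongr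
          · exact χn z
          · exact (ContinuousLinearMap.le_opNorm _ _).trans (by gcongr; exact hB _ (memS z u hz hu))
        have a2 : ‖fderiv ℝ χ z v.1 • a (z, u)‖ ≤ (K * ‖v‖) * A := by
          rw [norm_smul]
          gcongr
          · exact (ContinuousLinearMap.le_opNorm _ _).trans (by
              gcongr
              · exact hK z
              · exact norm_fst_le v)
          · exact hA _ (memS z u hz hu)
        calc _ ≤ _ := norm_add_le _ _
          _ ≤ _ := add_le_add a1 a2
          _ = _ := by ring
      · rw [hbs z u hz, norm_zero]; positivity
    · intro z u v hu
      rcases le_or_gt ‖z‖ 1 with hz | hz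
      · rw [hbd]
        simp only [map_zero, zero_smul, add_zero, norm_smul]
        have e : ‖((0, v) : ℂ × (Fin n → ℂ))‖ = ‖v‖ := by simp [Prod.norm_def]
        have a1 := (ContinuousLinearMap.le_opNorm (fderiv ℝ a (z, u)) (0, v)).trans
          (mul_le_mul_of_nonneg_right (hB _ (memS z u hz hu)) (norm_nonneg _))
        rw [e] at a1
        calc _ ≤ 1 * (B * ‖v‖) := mul_le_mul (χn z) a1 (norm_nonneg _) zero_le_one
          _ = _ := one_mul _
      · rw [hbs z u hz]; simp; positivity
    · intro z u u' hu hu'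
      rcases le_or_gt ‖z‖ 1 with hz | hz
      · have e : ‖((z, u) : ℂ × (Fin n → ℂ)) - (z, u')‖ = ‖u - u'‖ := by simp [Prod.norm_def]
        have m1 := hM _ (memS z u hz hu) _ (memS z u' hz hu')
        have m2 := hLip _ (memS z u hz hu) _ (memS z u' hz hu')
        rw [e] at m1 m2
        have t2 : ‖u - u'‖ ≤ 2 := by
          have := norm_sub_le (u - c) (u' - c)
          rw [sub_sub_sub_cancel_right] at this
          linarith
        have m3 : ‖u - u'‖ ≤ 2 * ‖u - u'‖ ^ α := by
          rcases eq_or_lt_of_le (norm_nonneg (u - u')) with h | h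
          · rw [← h]; positivity
          · have s2 : ‖u - u'‖ = ‖u - u'‖ ^ (1 - α) * ‖u - u'‖ ^ α := by
              rw [← Real.rpow_add h]; simp
            have s3 : ‖u - u'‖ ^ (1 - α) ≤ 2 := by
              calc _ ≤ (2:ℝ) ^ (1 - α) :=
                    Real.rpow_le_rpow h.le t2 (by linarith [hα.2])
                _ ≤ 2 ^ (1:ℝ) :=
                    Real.rpow_le_rpow_of_exponent_le (by norm_num) (by linarith [hα.1])
                _ = 2 := by simp
            calc ‖u - u'‖ = ‖u - u'‖ ^ (1 - α) * ‖u - u'‖ ^ α := s2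
              _ ≤ _ := by gcongr
        refine ContinuousLinearMap.opNorm_le_bound _ (by positivity) fun v => ?_
        have ev : (fderiv ℝ b (z, u) - fderiv ℝ b (z, u')) v =
            χ z • ((fderiv ℝ a (z, u) - fderiv ℝ a (z, u')) v) +
              fderiv ℝ χ z v.1 • (a (z, u) - a (z, u')) := by
          rw [sub_apply, sub_apply, hbd, hbd, smul_sub, smul_sub]; abel
        rw [ev]
        have a1 : ‖χ z • ((fderiv ℝ a (z, u) - fderiv ℝ a (z, u')) v)‖ ≤
            1 * (M * ‖u - u'‖ ^ α * ‖v‖) := by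
          rw [norm_smul]
          gcongr
          · exact χn z
          · exact (ContinuousLinearMap.le_opNorm _ _).trans (by gcongr)
        have a2 : ‖fderiv ℝ χ z v.1 • (a (z, u) - a (z, u'))‖ ≤
            (K * ‖v‖) * (B * (2 * ‖u - u'‖ ^ α)) := by
          rw [norm_smul]
          gcongr
          · exact (ContinuousLinearMap.le_opNorm _ _).trans (by
              gcongr
              · exact hK z
              · exact norm_fst_le v)
          · exact m2.trans (by gcongr)
        calc _ ≤ _ := norm_add_le _ _
          _ ≤ _ := add_le_add a1 a2
          _ = _ := by ring
      · rw [hbs z u hz, hbs z u' hz, sub_zero, norm_zero]; positivity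
  obtain ⟨U, hU, hP⟩ := hpic
  obtain ⟨r1, r2, r3⟩ := conclude hα hb hs hU hP R
  refine ⟨R, Rpos, U, ⟨Set.univ, isOpen_univ, Set.subset_univ _, hU.contDiffOn⟩, r1, r2, ?_, ?_⟩
  · intro z hz
    rw [r3]
    simp only [hbdef]
    rw [χ.one_of_mem_closedBall hz, one_smul]
  · rw [hP, Phi_zero]


/-- local existence for the first-order system `∂̄u(z) = a(z, u(z))`,
`u(0) = c`, the right-hand side `a` being `C^1` with first derivatives locally
`α`-Hölder. -/
theorem local_existence_CR_first_order (α : ℝ) (hα : α ∈ Set.Ioo (0:ℝ) 1)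
    (n : ℕ) (hn : 1 ≤ n)
    (a : ℂ × (Fin n → ℂ) → Fin n → ℂ)
    (ha1 : ContDiff ℝ 1 a)
    (ha2 : ∀ s : Set (ℂ × (Fin n → ℂ)), Bornology.IsBounded s →
      ∃ M : ℝ, ∀ p ∈ s, ∀ q ∈ s, ‖fderiv ℝ a p - fderiv ℝ a q‖ ≤ M * ‖p - q‖ ^ α)
    (c : Fin n → ℂ) :
    ∃ R : ℝ, 0 < R ∧ ∃ u : ℂ → Fin n → ℂ,
      (∃ U : Set ℂ, IsOpen U ∧ closedBall (0:ℂ) R ⊆ U ∧ ContDiffOn ℝ 1 u U) ∧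
      HolV α (closedBall (0:ℂ) R) (wDv u) < ⊤ ∧
      HolV α (closedBall (0:ℂ) R) (wDbarv u) < ⊤ ∧
      (∀ z ∈ closedBall (0:ℂ) R, wDbarv u z = a (z, u z)) ∧
      u 0 = c := by
  exact mainlem α hα n a ha1 ha2 c
end

section
/- Let z₀ ∈ ℂ, r > 0, Δ = {ζ ∈ ℂ : |ζ − z₀| ≤ r}, and let φ : ℂ → ℂ be an entire function. Then the function g(w) = ∫_Δ conj(φ(ζ))/(ζ − w) dA(ζ) is anti-holomorphic on the open disk {w : |w − z₀| < r}; that is, w ↦ conj(g(w)) is holomorphic there. -/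
open Complex MeasureTheory Metric

lemma aux_circle (φ : ℂ → ℂ) (w : ℂ) (ρ : ℝ) (hρ : 0 < ρ) :
    ∫ θ in Set.Ioo (-Real.pi) Real.pi,
      φ (circleMap 0 ρ θ) / (starRingEnd ℂ) (circleMap 0 ρ θ - w)
    = -I * ∮ z in C(0, ρ), φ z / ((ρ : ℂ) ^ 2 - (starRingEnd ℂ) w * z) := by
  rw [← integral_Ioc_eq_integral_Ioo,
    ← intervalIntegral.integral_of_le (by linarith [Real.pi_pos])]
  have hper : Function.Periodic (fun θ : ℝ =>
      φ (circleMap 0 ρ θ) / (starRingEnd ℂ) (circleMap 0 ρ θ - w)) (2 * Real.pi) := by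
    intro θ
    simp only [periodic_circleMap 0 ρ θ]
  have h := hper.intervalIntegral_add_eq (-Real.pi) 0
  rw [show -Real.pi + 2 * Real.pi = Real.pi by ring, zero_add] at h
  rw [h, circleIntegral, ← intervalIntegral.integral_const_mul]
  congr 1
  ext θ
  have h1 : (ρ : ℂ) ^ 2 = circleMap 0 ρ θ * (starRingEnd ℂ) (circleMap 0 ρ θ) := by
    rw [Complex.mul_conj, Complex.normSq_eq_norm_sq]
    simp
  have h0 : circleMap 0 ρ θ ≠ 0 := circleMap_ne_center hρ.ne'
  rw [h1, deriv_circleMap, smul_eq_mul]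
  generalize circleMap 0 ρ θ = ζ at *
  rw [show ζ * (starRingEnd ℂ) ζ - (starRingEnd ℂ) w * ζ = ζ * (starRingEnd ℂ) (ζ - w) by
    simp; ring]
  rw [show -I * (ζ * I * (φ ζ / (ζ * (starRingEnd ℂ) (ζ - w)))) =
    -(I*I) * (ζ * (φ ζ / (ζ * (starRingEnd ℂ) (ζ - w)))) by ring, I_mul_I, neg_neg, one_mul,
    ← mul_div_assoc, mul_div_mul_left _ _ h0]

lemma aux_out (φ : ℂ → ℂ) (hφ : Differentiable ℂ φ) (w : ℂ) (ρ : ℝ) (hρ : 0 < ρ) (h : ‖w‖ < ρ) :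
    ∮ z in C(0, ρ), φ z / ((ρ : ℂ) ^ 2 - (starRingEnd ℂ) w * z) = 0 := by
  have hne : ∀ z ∈ closedBall (0 : ℂ) ρ, (ρ : ℂ) ^ 2 - (starRingEnd ℂ) w * z ≠ 0 := by
    intro z hz h0
    have : ‖(ρ : ℂ) ^ 2‖ = ‖(starRingEnd ℂ) w * z‖ := by rw [sub_eq_zero.mp h0]
    simp [abs_of_pos hρ] at this hz
    nlinarith [norm_nonneg w, norm_nonneg z]
  have hd : DifferentiableOn ℂ (fun z => φ z / ((ρ : ℂ) ^ 2 - (starRingEnd ℂ) w * z))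
      (closedBall 0 ρ) :=
    hφ.differentiableOn.div (by fun_prop) hne
  exact (hd.mono closure_ball_subset_closedBall).diffContOnCl.circleIntegral_eq_zero hρ.le

lemma aux_in (φ : ℂ → ℂ) (hφ : Differentiable ℂ φ) (w : ℂ) (ρ : ℝ) (hρ : 0 < ρ) (h : ρ < ‖w‖) :
    ∮ z in C(0, ρ), φ z / ((ρ : ℂ) ^ 2 - (starRingEnd ℂ) w * z)
      = -(2 * Real.pi * I) / (starRingEnd ℂ) w * φ ((ρ : ℂ) ^ 2 / (starRingEnd ℂ) w) := by
  have hw0 : w ≠ 0 := by rintro rfl; simp at h; linarith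
  have hc : (starRingEnd ℂ) w ≠ 0 := by simpa using hw0
  have hmem : (ρ : ℂ) ^ 2 / (starRingEnd ℂ) w ∈ ball (0 : ℂ) ρ := by
    simp only [mem_ball, dist_zero_right, norm_div, norm_pow, Complex.norm_real, RCLike.norm_conj,
      Real.norm_eq_abs, abs_of_pos hρ]
    rw [div_lt_iff₀ (by linarith)]
    nlinarith
  have := (hφ.differentiableOn (s := closedBall 0 ρ)).circleIntegral_sub_inv_smul hmem
  have e : ∀ z, φ z / ((ρ : ℂ) ^ 2 - (starRingEnd ℂ) w * z) =
      (-1 / (starRingEnd ℂ) w) * ((z - (ρ : ℂ) ^ 2 / (starRingEnd ℂ) w)⁻¹ • φ z) := by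
    intro z
    rw [show (ρ : ℂ) ^ 2 - (starRingEnd ℂ) w * z =
      (-(starRingEnd ℂ) w) * (z - (ρ : ℂ) ^ 2 / (starRingEnd ℂ) w) by field_simp; ring]
    rw [smul_eq_mul, div_eq_mul_inv, mul_inv, inv_neg]
    ring
  simp_rw [e]
  rw [circleIntegral.integral_const_mul, this, smul_eq_mul]
  ring

lemma aux_integrable (φ : ℂ → ℂ) (hφ : Differentiable ℂ φ) (w : ℂ) (r : ℝ) :
    IntegrableOn (fun ζ => φ ζ / (starRingEnd ℂ) (ζ - w)) (closedBall 0 r) := by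
  have h1 : IntegrableOn (fun ζ : ℂ => ‖ζ‖⁻¹) (ball 0 (r + ‖w‖ + 1)) := by
    rw [integrableOn_fun_norm_addHaar volume (f := fun x => x⁻¹)]
    have : IntegrableOn (fun _ : ℝ => (1 : ℝ)) (Set.Ioo 0 (r + ‖w‖ + 1)) := by simp
    refine this.congr_fun ?_ measurableSet_Ioo
    intro x hx
    have : x ≠ 0 := hx.1.ne'
    simp [this]
  have h2 : IntegrableOn (fun ζ : ℂ => ‖ζ - w‖⁻¹) (closedBall 0 r) := by
    have h3 := (integrable_indicator_iff measurableSet_ball).2 h1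
    have h4 := (h3.comp_sub_right w).integrableOn (s := closedBall 0 r)
    refine h4.congr_fun ?_ measurableSet_closedBall
    intro x hx
    have : x - w ∈ ball (0 : ℂ) (r + ‖w‖ + 1) := by
      simp at hx ⊢
      linarith [norm_sub_le x w]
    simp only [Set.indicator_of_mem this]
  obtain ⟨C, hC⟩ := (isCompact_closedBall (0 : ℂ) r).exists_bound_of_continuousOn
    hφ.continuous.continuousOn
  refine Integrable.mono' (h2.const_mul C) ?_ ?_
  · have := hφ.continuous.measurable
    exact Measurable.aestronglyMeasurable (by
      refine this.div ?_
      exact Complex.continuous_conj.measurable.comp (by fun_prop))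
  · filter_upwards [ae_restrict_mem measurableSet_closedBall] with x hx
    rw [norm_div, RCLike.norm_conj, div_eq_mul_inv]
    exact mul_le_mul_of_nonneg_right (hC x hx) (by positivity)

lemma aux_polar (F : ℂ → ℂ) (hm : Measurable F) (hF : Integrable F) :
    ∫ z, F z = ∫ ρ in Set.Ioi (0 : ℝ), ∫ θ in Set.Ioo (-Real.pi) Real.pi,
      ρ • F (circleMap 0 ρ θ) := by
  have e : ∀ p : ℝ × ℝ, Complex.polarCoord.symm p = circleMap 0 p.1 p.2 := by
    intro p
    simp [circleMap, Complex.exp_mul_I]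
  have hmm : Measurable (fun p : ℝ × ℝ => circleMap 0 p.1 p.2) := by
    unfold circleMap; fun_prop
  rw [← Complex.integral_comp_polarCoord_symm]
  simp_rw [e]
  rw [polarCoord_target, Measure.volume_eq_prod]
  refine setIntegral_prod (fun p : ℝ × ℝ => p.1 • F (circleMap 0 p.1 p.2)) ?_
  refine ⟨(measurable_fst.smul (hm.comp hmm)).aestronglyMeasurable, ?_⟩
  have h := Complex.lintegral_comp_polarCoord_symm (fun z => ‖F z‖ₑ)
  have hf := hF.2
  rw [HasFiniteIntegral, ← h] at hf
  rw [HasFiniteIntegral, ← Measure.volume_eq_prod]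
  refine lt_of_le_of_lt (le_of_eq ?_) hf
  rw [polarCoord_target]
  refine setLIntegral_congr_fun (measurableSet_Ioi.prod measurableSet_Ioo) ?_
  intro p hp
  have : 0 < p.1 := hp.1
  simp only [e, enorm_smul, smul_eq_mul, Real.enorm_eq_ofReal this.le]

lemma aux_main (φ Φ : ℂ → ℂ) (hφ : Differentiable ℂ φ) (hΦ : ∀ z, HasDerivAt Φ (φ z) z)
    (w : ℂ) (r : ℝ) (hw : ‖w‖ < r) :
    ∫ ζ in closedBall 0 r, φ ζ / (starRingEnd ℂ) (ζ - w) = -Real.pi * (Φ w - Φ 0) := by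
  have hm : Measurable (fun ζ => φ ζ / (starRingEnd ℂ) (ζ - w)) := by
    refine hφ.continuous.measurable.div ?_
    exact Complex.continuous_conj.measurable.comp (by fun_prop)
  rw [← integral_indicator measurableSet_closedBall, aux_polar _
    (hm.indicator measurableSet_closedBall)
    ((integrable_indicator_iff measurableSet_closedBall).2 (aux_integrable φ hφ w r))]
  set H : ℝ → ℂ := fun ρ => -Real.pi * (φ ((ρ : ℂ) ^ 2 / (starRingEnd ℂ) w) *
    (2 * ρ / (starRingEnd ℂ) w)) with hH
  have key : ∀ᵐ ρ : ℝ, ρ ∈ Set.Ioi (0 : ℝ) → (∫ θ in Set.Ioo (-Real.pi) Real.pi,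
      ρ • (closedBall (0 : ℂ) r).indicator (fun ζ => φ ζ / (starRingEnd ℂ) (ζ - w))
        (circleMap 0 ρ θ)) = (Set.Ioc 0 ‖w‖).indicator H ρ := by
    filter_upwards [Measure.ae_ne volume ‖w‖] with ρ hne hρ
    have hρ : 0 < ρ := hρ
    rw [integral_smul]
    by_cases hr : ρ ≤ r
    · have : ∀ θ, circleMap 0 ρ θ ∈ closedBall (0 : ℂ) r := by
        intro θ; simp [abs_of_pos hρ, hr]
      simp only [Set.indicator_of_mem (this _)]
      rw [aux_circle φ w ρ hρ]
      rcases lt_or_gt_of_ne hne with h | h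
      · rw [aux_in φ hφ w ρ hρ h, Set.indicator_of_mem (show ρ ∈ Set.Ioc 0 ‖w‖ from ⟨hρ, h.le⟩), hH, Complex.real_smul]
        simp only [div_eq_mul_inv]
        linear_combination (2 * ρ * Real.pi * ((starRingEnd ℂ) w)⁻¹ *
          φ (ρ ^ 2 * ((starRingEnd ℂ) w)⁻¹)) * I_mul_I
      · rw [aux_out φ hφ w ρ hρ h, Set.indicator_of_notMem (fun h' => absurd h'.2 (not_le.2 h))]
        simp
    · have : ∀ θ, circleMap 0 ρ θ ∉ closedBall (0 : ℂ) r := by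
        intro θ; simpa [abs_of_pos hρ] using hr
      simp only [Set.indicator_of_notMem (this _)]
      rw [Set.indicator_of_notMem (fun h' => by linarith [h'.2])]
      simp
  rw [setIntegral_congr_ae measurableSet_Ioi key, setIntegral_indicator measurableSet_Ioc,
    Set.inter_eq_right.2 (fun x hx => hx.1),
    ← intervalIntegral.integral_of_le (norm_nonneg w)]
  have hφc := hφ.continuous
  have hd : ∀ x ∈ Set.uIcc 0 ‖w‖, HasDerivAt
      (fun ρ : ℝ => -Real.pi * Φ ((ρ : ℂ) ^ 2 / (starRingEnd ℂ) w)) (H x) x := by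
    intro x _
    have h1 : HasDerivAt (fun z : ℂ => z ^ 2 / (starRingEnd ℂ) w)
        (2 * (x : ℂ) / (starRingEnd ℂ) w) (x : ℂ) := by
      simpa using ((hasDerivAt_pow 2 (x : ℂ)).div_const ((starRingEnd ℂ) w))
    have h2 := ((hΦ _).comp (x : ℂ) h1).const_mul (-Real.pi : ℂ)
    exact h2.comp_ofReal
  have hHc : Continuous H := by
    rw [hH]
    simp only [div_eq_mul_inv]
    fun_prop
  rw [intervalIntegral.integral_eq_sub_of_hasDerivAt hd (hHc.intervalIntegrable _ _)]
  have hww : (‖w‖ : ℂ) ^ 2 / (starRingEnd ℂ) w = w := by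
    by_cases h0 : w = 0
    · simp [h0]
    · rw [div_eq_iff (by simpa using h0), Complex.mul_conj, Complex.normSq_eq_norm_sq]
      simp
  simp only [hww]
  simp
  ring

/-- for an entire function `φ`, the function
`w ↦ ∫_Δ conj(φ(ζ))/(ζ − w) dA(ζ)` is anti-holomorphic on the open disk. -/
theorem antiholomorphic_integral (z₀ : ℂ) (r : ℝ) (hr : 0 < r)
    (φ : ℂ → ℂ) (hφ : Differentiable ℂ φ) :
    DifferentiableOn ℂ
      (fun w => (starRingEnd ℂ)
        (∫ ζ in closedBall z₀ r, (starRingEnd ℂ) (φ ζ) / (ζ - w)))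
      (ball z₀ r) := by
  have hψ : Differentiable ℂ (fun z => φ (z + z₀)) := by fun_prop
  obtain ⟨Φ, hΦ⟩ := hψ.isExactOn_univ
  have hΦ' : ∀ z, HasDerivAt Φ (φ (z + z₀)) z := fun z => hΦ z trivial
  have hΦd : Differentiable ℂ Φ := fun z => (hΦ' z).differentiableAt
  have hD : DifferentiableOn ℂ (fun w => -Real.pi * (Φ (w - z₀) - Φ 0)) (ball z₀ r) := by
    apply Differentiable.differentiableOn
    fun_prop
  refine hD.congr ?_
  intro w hw
  rw [← aux_main _ Φ hψ hΦ' (w - z₀) r (by simpa [dist_eq_norm] using hw), ← integral_conj,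
    ← integral_indicator measurableSet_closedBall, ← integral_indicator measurableSet_closedBall,
    ← integral_add_right_eq_self _ z₀]
  congr 1
  ext ζ
  by_cases h : ‖ζ‖ ≤ r
  · rw [Set.indicator_of_mem (by simpa [dist_eq_norm] using h),
      Set.indicator_of_mem (by simpa using h)]
    simp
    ring
  · rw [Set.indicator_of_notMem (by simpa [dist_eq_norm] using h),
      Set.indicator_of_notMem (by simpa using h)]
end

section
/- Let z₀ ∈ ℂ, r > 0, and let l ≥ 0 be an integer. Then for every w with |w − z₀| < r, ∫_{|ζ−z₀|≤r} (conj(ζ) − conj(z₀))^l / (ζ − w) dA(ζ) = −(π/(l+1)) (conj(w) − conj(z₀))^{l+1}. -/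
open Complex MeasureTheory Metric

lemma aux_int (a : ℂ) (r : ℝ) (l : ℕ) :
    IntegrableOn (fun z : ℂ => z ^ l / ((starRingEnd ℂ) z - (starRingEnd ℂ) a)) (closedBall 0 r) := by
  have h1 : LocallyIntegrable (fun z : ℂ => z⁻¹) volume := by
    refine locallyIntegrable_of_norm_le_rpow (C := 1) (α := 1) (μ := (volume : Measure ℂ)) ?_ ?_ ?_ ?_
    · simp [Complex.finrank_real_complex]
    · simp [Complex.finrank_real_complex]
    · refine Filter.Eventually.of_forall fun x => ?_
      rw [norm_inv, one_mul, Real.rpow_neg_one]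
    · exact measurable_inv.aestronglyMeasurable
  have h2 : IntegrableOn (fun z : ℂ => (z - a)⁻¹) (closedBall 0 r) := by
    have h4 := ((h1.integrableOn_isCompact
      (isCompact_closedBall (0 : ℂ) (r + ‖a‖))).integrable_indicator
        isClosed_closedBall.measurableSet).comp_sub_right a
    refine (h4.integrableOn (s := closedBall 0 r)).congr_fun ?_ isClosed_closedBall.measurableSet
    intro z hz
    rw [mem_closedBall_zero_iff] at hz
    apply Set.indicator_of_mem
    rw [mem_closedBall_zero_iff]
    linarith [norm_sub_le z a]
  have h3 : IntegrableOn (fun z : ℂ => z ^ l * (starRingEnd ℂ) ((z - a)⁻¹)) (closedBall 0 r) := by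
    apply IntegrableOn.continuousOn_mul _ _ (isCompact_closedBall _ _)
    · fun_prop
    · have hm : Measurable (fun z : ℂ => (starRingEnd ℂ) ((z - a)⁻¹)) := by fun_prop
      refine (integrable_norm_iff hm.aestronglyMeasurable).1 ?_
      simp only [RCLike.norm_conj]
      exact h2.norm
  simpa [div_eq_mul_inv] using h3

lemma inner_eq (a : ℂ) (ρ : ℝ) (hρ : 0 < ρ) (l : ℕ) (hne : ρ ≠ ‖a‖) :
    ∫ θ in Set.Ioo (-Real.pi) Real.pi, (circleMap 0 ρ θ) ^ l /
      ((starRingEnd ℂ) (circleMap 0 ρ θ) - (starRingEnd ℂ) a) =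
    if ρ < ‖a‖ then -(2 * Real.pi : ℂ) * ρ ^ (2 * l) / ((starRingEnd ℂ) a) ^ (l + 1) else 0 := by
  have e1 : ∫ θ in Set.Ioo (-Real.pi) Real.pi, (circleMap 0 ρ θ) ^ l /
      ((starRingEnd ℂ) (circleMap 0 ρ θ) - (starRingEnd ℂ) a) =
      I⁻¹ * ∮ z in C(0, ρ), z ^ l / (ρ ^ 2 - (starRingEnd ℂ) a * z) := by
    rw [← integral_Ioc_eq_integral_Ioo, ← intervalIntegral.integral_of_le (by linarith [Real.pi_pos])]
    have hp : Function.Periodic (fun θ => (circleMap 0 ρ θ) ^ l /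
      ((starRingEnd ℂ) (circleMap 0 ρ θ) - (starRingEnd ℂ) a)) (2 * Real.pi) := by
      intro θ
      simp only [periodic_circleMap 0 ρ θ]
    have := hp.intervalIntegral_add_eq (-Real.pi) 0
    rw [show -Real.pi + 2 * Real.pi = Real.pi by ring, zero_add] at this
    rw [this, circleIntegral, ← intervalIntegral.integral_const_mul]
    congr 1
    ext θ
    set z := circleMap 0 ρ θ with hz
    have hzn : ‖z‖ = ρ := by simp [hz, abs_of_pos hρ]
    have hz0 : z ≠ 0 := by
      intro h; rw [h] at hzn; simp at hzn; linarith
    have hzz : (ρ : ℂ) ^ 2 = z * (starRingEnd ℂ) z := by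
      rw [Complex.mul_conj, Complex.normSq_eq_norm_sq, hzn]; push_cast; rfl
    rw [hzz, deriv_circleMap, ← hz, smul_eq_mul,
      show z * (starRingEnd ℂ) z - (starRingEnd ℂ) a * z = z * ((starRingEnd ℂ) z - (starRingEnd ℂ) a) by ring]
    rw [← mul_div_assoc, ← mul_div_assoc, show I⁻¹ * (z * I * z ^ l) = z * z ^ l by field_simp [I_ne_zero],
      mul_div_mul_left _ _ hz0]
  rw [e1]
  split_ifs with h
  · have ha : (starRingEnd ℂ) a ≠ 0 := by
      intro h0
      have : a = 0 := by simpa using h0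
      rw [this] at h; simp at h; linarith
    have hw : (ρ : ℂ) ^ 2 / (starRingEnd ℂ) a ∈ ball (0 : ℂ) ρ := by
      rw [mem_ball_zero_iff, norm_div, norm_pow, RCLike.norm_conj, Complex.norm_real,
        Real.norm_eq_abs, abs_of_pos hρ, div_lt_iff₀ (by linarith)]
      nlinarith
    have hd : DifferentiableOn ℂ (fun z : ℂ => -((starRingEnd ℂ) a)⁻¹ * z ^ l) (closedBall 0 ρ) := by
      fun_prop
    have := hd.circleIntegral_sub_inv_smul hw
    have e2 : (fun z : ℂ => z ^ l / (ρ ^ 2 - (starRingEnd ℂ) a * z)) =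
      fun z => (z - (ρ : ℂ) ^ 2 / (starRingEnd ℂ) a)⁻¹ • (-((starRingEnd ℂ) a)⁻¹ * z ^ l) := by
      ext z
      rw [show (ρ : ℂ) ^ 2 - (starRingEnd ℂ) a * z = -((starRingEnd ℂ) a) * (z - (ρ : ℂ) ^ 2 / (starRingEnd ℂ) a) by field_simp; ring]
      rw [div_eq_mul_inv, mul_inv, smul_eq_mul, inv_neg]; ring
    rw [e2, this, smul_eq_mul, div_pow, ← pow_mul]
    field_simp [I_ne_zero]
    ring
  · have h' : ‖a‖ < ρ := lt_of_le_of_ne (not_lt.1 h) (Ne.symm hne)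
    have : DifferentiableOn ℂ (fun z : ℂ => z ^ l / (ρ ^ 2 - (starRingEnd ℂ) a * z)) (closedBall 0 ρ) := by
      apply DifferentiableOn.div (by fun_prop) (by fun_prop)
      intro z hz h0
      rw [mem_closedBall_zero_iff] at hz
      have h1 : ‖(ρ : ℂ) ^ 2‖ = ‖(starRingEnd ℂ) a * z‖ := by rw [sub_eq_zero.1 h0]
      rw [norm_mul, norm_pow, RCLike.norm_conj, Complex.norm_real,
        Real.norm_eq_abs, abs_of_pos hρ] at h1
      nlinarith [norm_nonneg a, norm_nonneg z]
    rw [(this.mono closure_ball_subset_closedBall).diffContOnCl.circleIntegral_eq_zero hρ.le, mul_zero]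

lemma outer (a : ℂ) (r : ℝ) (ha : ‖a‖ < r) (l : ℕ) :
    ∫ z in closedBall 0 r, z ^ l / ((starRingEnd ℂ) z - (starRingEnd ℂ) a) =
      -((Real.pi : ℂ) / (l + 1)) * a ^ (l + 1) := by
  set h : ℂ → ℂ := fun z => z ^ l / ((starRingEnd ℂ) z - (starRingEnd ℂ) a) with hh
  have hint : Integrable ((closedBall (0:ℂ) r).indicator h) :=
    (aux_int a r l).integrable_indicator isClosed_closedBall.measurableSet
  have hm : Measurable ((closedBall (0:ℂ) r).indicator h) := by
    apply Measurable.indicator _ isClosed_closedBall.measurableSet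
    fun_prop
  have hcm : ∀ p : ℝ × ℝ, Complex.polarCoord.symm p = circleMap 0 p.1 p.2 := by
    intro p
    rw [Complex.polarCoord_symm_apply, circleMap, Complex.exp_mul_I]; simp
  have hI : IntegrableOn (fun p : ℝ × ℝ => p.1 • (closedBall (0:ℂ) r).indicator h (circleMap 0 p.1 p.2))
      (Set.Ioi (0 : ℝ) ×ˢ Set.Ioo (-Real.pi) Real.pi) := by
    have hc : Measurable (fun p : ℝ × ℝ => circleMap 0 p.1 p.2) := by
      unfold circleMap; fun_prop
    refine ⟨(measurable_fst.smul (hm.comp hc)).aestronglyMeasurable, ?_⟩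
    have h1 := hint.2
    rw [hasFiniteIntegral_iff_enorm, ← Complex.lintegral_comp_polarCoord_symm] at h1
    rw [hasFiniteIntegral_iff_enorm]
    refine lt_of_le_of_lt (le_of_eq ?_) h1
    refine setLIntegral_congr_fun (by measurability) ?_
    intro p hp
    have : 0 < p.1 := hp.1
    simp only [hcm, enorm_smul, smul_eq_mul, Real.enorm_eq_ofReal this.le]
  rw [← integral_indicator isClosed_closedBall.measurableSet, ← Complex.integral_comp_polarCoord_symm]
  simp only [hcm]
  rw [polarCoord_target, Measure.volume_eq_prod, setIntegral_prod _ hI]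
  have e : ∫ x in Set.Ioi (0:ℝ), ∫ y in Set.Ioo (-Real.pi) Real.pi,
      x • (closedBall (0:ℂ) r).indicator h (circleMap 0 x y) =
      ∫ x in Set.Ioi (0:ℝ), (Set.Iio ‖a‖).indicator (fun x : ℝ =>
        (-(2 * Real.pi : ℂ) / ((starRingEnd ℂ) a) ^ (l + 1)) * ((x ^ (2 * l + 1) : ℝ) : ℂ)) x := by
    apply integral_congr_ae
    have hae : ∀ᵐ x : ℝ ∂(volume.restrict (Set.Ioi 0)), x ≠ ‖a‖ :=
      ae_restrict_of_ae (by simp [ae_iff])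
    filter_upwards [hae, ae_restrict_mem measurableSet_Ioi] with x hx hx0
    have hx0 : 0 < x := hx0
    rw [integral_smul]
    by_cases hxr : x ≤ r
    · have : ∀ y, (closedBall (0:ℂ) r).indicator h (circleMap 0 x y) = h (circleMap 0 x y) := by
        intro y
        apply Set.indicator_of_mem
        simp [abs_of_pos hx0, hxr]
      simp only [this]
      simp only [hh]
      rw [inner_eq a x hx0 l hx]
      simp only [Set.indicator, Set.mem_Iio]
      split_ifs
      · rw [real_smul]; push_cast; ring
      · simp
    · have : ∀ y, (closedBall (0:ℂ) r).indicator h (circleMap 0 x y) = 0 := by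
        intro y
        apply Set.indicator_of_notMem
        simpa [abs_of_pos hx0] using hxr
      simp only [this]
      rw [Set.indicator_of_notMem (by simp; linarith)]
      simp
  rw [e, setIntegral_indicator measurableSet_Iio, Set.Ioi_inter_Iio, integral_const_mul,
    integral_complex_ofReal, ← integral_Ioc_eq_integral_Ioo,
    ← intervalIntegral.integral_of_le (norm_nonneg a), integral_pow]
  have hl : (l : ℂ) + 1 ≠ 0 := by exact_mod_cast Nat.succ_ne_zero l
  by_cases ha0 : a = 0
  · simp [ha0]
  · have hca : (starRingEnd ℂ) a ≠ 0 := by simpa using ha0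
    have : ((‖a‖ ^ (2 * l + 1 + 1) : ℝ) : ℂ) = a ^ (l + 1) * (starRingEnd ℂ) a ^ (l + 1) := by
      rw [← mul_pow, Complex.mul_conj, Complex.normSq_eq_norm_sq, ← Complex.ofReal_pow, ← pow_mul]
      congr 2
    rw [zero_pow (by omega), sub_zero, Complex.ofReal_div, this]
    push_cast
    rw [show (2 * (l:ℂ) + 1 + 1) = 2 * (l + 1) by ring]
    field_simp

/-- `∫_{|ζ−z₀|≤r} (conj ζ − conj z₀)^l/(ζ − w) dA(ζ)
  = −(π/(l+1)) (conj w − conj z₀)^{l+1}` for `|w − z₀| < r`. -/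
theorem integral_conj_power (z₀ : ℂ) (r : ℝ) (hr : 0 < r) (l : ℕ) :
    ∀ w ∈ ball z₀ r,
      (∫ ζ in closedBall z₀ r, ((starRingEnd ℂ) ζ - (starRingEnd ℂ) z₀) ^ l / (ζ - w))
        = -((Real.pi : ℂ) / (l + 1)) * ((starRingEnd ℂ) w - (starRingEnd ℂ) z₀) ^ (l + 1) := by
  intro w hw
  have h := congrArg (starRingEnd ℂ) (outer (w - z₀) r (by rwa [mem_ball_iff_norm] at hw) l)
  rw [← integral_conj] at h
  have e : ∫ ζ in closedBall z₀ r, ((starRingEnd ℂ) ζ - (starRingEnd ℂ) z₀) ^ l / (ζ - w) =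
      ∫ z in closedBall (0:ℂ) r, (starRingEnd ℂ) (z ^ l / ((starRingEnd ℂ) z - (starRingEnd ℂ) (w - z₀))) := by
    rw [← integral_indicator isClosed_closedBall.measurableSet,
      ← integral_indicator isClosed_closedBall.measurableSet,
      ← integral_add_right_eq_self _ z₀]
    congr 1
    ext z
    simp only [Set.indicator, mem_closedBall_iff_norm, add_sub_cancel_right, sub_zero]
    split_ifs
    · simp only [map_div₀, map_pow, map_sub, map_add, Complex.conj_conj]
      congr 1 <;> ring
    · rfl
  rw [e, h]
  simp
end
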